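/- There exist δ > 0, a constant c > 0, and a set S of positive integers of density one such that for every N ∈ S, ord(A,N) ≥ c·N^{1/2}·exp((log N)^δ). -/

import Mathlib

open Matrix

/-- `matOrd A N` is the order of `A` modulo `N`: the least `k ≥ 1`
with `A^k ≡ I (mod N)`. -/
noncomputable def matOrd (A : Matrix (Fin 2) (Fin 2) ℤ) (N : ℕ) : ℕ :=
  sInf {k | 0 < k ∧ ∀ i j, (N : ℤ) ∣ (A ^ k - 1) i j}

/-- A set of positive integers has density one. -/
def DensityOne (S : Set ℕ) : Prop :=
  Filter.Tendsto (fun x : ℕ => ((S ∩ Set.Icc 1 x).ncard : ℝ) / x)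
    Filter.atTop (nhds 1)

/-!
Since `A` has determinant one, `ord(A, p)` divides `p - 1` or `p + 1`, and since the powers of a
hyperbolic matrix grow, only `O(z²)` primes satisfy `ord(A, p) ≤ z`. So `ord(A, p)` is rarely much
smaller than `√p`. It is rarely close to `√p` either, as in Erdős's multiplication table problem:
if it were, then `p ± 1` would be a product of two integers of about equal size, one of which has
at most half of the prime factors of `p ± 1`, hence markedly fewer prime factors than an integer
of its size should have. A Brun–Titchmarsh inequality and a Rankin bound for the integers with few
prime factors show that few primes behave this way. Thus a positive proportion of the primes have
order exceeding `√p` by a factor `exp ((log p) ^ δ)`.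

For almost all `N`, some prime factor of `N` belongs to this set, none has order much smaller than
`√p`, the orders at distinct prime factors are nearly coprime (a common divisor of two orders
divides `p ± 1` and `q ± 1`), and `N` is nearly squarefree with few prime factors. The orders then
multiply up to `√N` times the gain of the one good prime, and `ord(A, N)` is at least their least
common multiple.
-/

namespace LargeOrder

open Finset

/-! ### Orders of matrices modulo `N` -/

section MatrixOrder

open Matrix

variable {A : Matrix (Fin 2) (Fin 2) ℤ}

/-- The reduction of an integer matrix modulo `N`. -/
def reduction (N : ℕ) : Matrix (Fin 2) (Fin 2) ℤ →+* Matrix (Fin 2) (Fin 2) (ZMod N) :=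
  (Int.castRingHom (ZMod N)).mapMatrix

theorem reduction_pow_eq_one_iff (A : Matrix (Fin 2) (Fin 2) ℤ) (N k : ℕ) :
    reduction N A ^ k = 1 ↔ ∀ i j, (N : ℤ) ∣ (A ^ k - 1) i j := by
  rw [← sub_eq_zero, ← map_pow, ← map_one (reduction N), ← map_sub, ← Matrix.ext_iff]
  simp only [reduction, RingHom.mapMatrix_apply, Matrix.map_apply, Matrix.zero_apply,
    eq_intCast, ZMod.intCast_zmod_eq_zero_iff_dvd]

theorem matOrd_eq_orderOf (A : Matrix (Fin 2) (Fin 2) ℤ) (N : ℕ) :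
    matOrd A N = orderOf (reduction N A) := by
  have hset : {k | 0 < k ∧ ∀ i j, (N : ℤ) ∣ (A ^ k - 1) i j} =
      {k | 0 < k ∧ reduction N A ^ k = 1} := by
    simp only [reduction_pow_eq_one_iff]
  rw [matOrd, hset]
  rcases (orderOf (reduction N A)).eq_zero_or_pos with h0 | hpos
  · have hempty : {k | 0 < k ∧ reduction N A ^ k = 1} = ∅ :=
      Set.eq_empty_of_forall_notMem fun k hk => orderOf_eq_zero_iff'.1 h0 k hk.1 hk.2
    rw [hempty, Nat.sInf_empty, h0]
  · have hmem : orderOf (reduction N A) ∈ {k | 0 < k ∧ reduction N A ^ k = 1} :=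
      ⟨hpos, pow_orderOf_eq_one _⟩
    refine le_antisymm (Nat.sInf_le hmem) ?_
    have hmin := Nat.sInf_mem ⟨_, hmem⟩
    exact orderOf_le_of_pow_eq_one hmin.1 hmin.2

theorem dvd_pow_matOrd_sub_one (A : Matrix (Fin 2) (Fin 2) ℤ) (N : ℕ) (i j : Fin 2) :
    (N : ℤ) ∣ (A ^ matOrd A N - 1) i j := by
  revert i j
  rw [← reduction_pow_eq_one_iff, matOrd_eq_orderOf, pow_orderOf_eq_one]

theorem matOrd_dvd_matOrd (A : Matrix (Fin 2) (Fin 2) ℤ) {M N : ℕ} (h : M ∣ N) :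
    matOrd A M ∣ matOrd A N := by
  rw [matOrd_eq_orderOf A M]
  refine orderOf_dvd_of_pow_eq_one ((reduction_pow_eq_one_iff A M _).2 fun i j => ?_)
  exact (Int.natCast_dvd_natCast.2 h).trans (dvd_pow_matOrd_sub_one A N i j)

theorem det_reduction (A : Matrix (Fin 2) (Fin 2) ℤ) (N : ℕ) :
    (reduction N A).det = (A.det : ZMod N) :=
  (RingHom.map_det (Int.castRingHom (ZMod N)) A).symm

theorem matOrd_pos (hA : IsUnit A.det) {N : ℕ} (hN : 0 < N) : 0 < matOrd A N := by
  have : NeZero N := ⟨hN.ne'⟩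
  have hunit : IsUnit (reduction N A) := by
    rw [Matrix.isUnit_iff_isUnit_det, det_reduction]
    exact hA.map (Int.castRingHom (ZMod N))
  rw [matOrd_eq_orderOf, ← hunit.unit_spec, orderOf_units]
  exact orderOf_pos _

theorem sq_eq_trace_smul_sub_one {R : Type*} [CommRing R] {B : Matrix (Fin 2) (Fin 2) R}
    (hB : B.det = 1) : B ^ 2 = B.trace • B - 1 := by
  nontriviality R
  have h := B.aeval_self_charpoly
  simp only [charpoly_fin_two, hB, map_add, map_sub, map_mul, map_pow, map_one,
    Polynomial.aeval_X, Polynomial.aeval_C, Algebra.algebraMap_eq_smul_one, smul_one_mul] at h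
  rw [eq_sub_iff_add_eq, ← sub_eq_zero, ← h]
  abel

theorem two_smul_sub_trace_sq {R : Type*} [CommRing R] {B : Matrix (Fin 2) (Fin 2) R}
    (hB : B.det = 1) :
    ((2 : R) • B - B.trace • 1) ^ 2 = (B.trace ^ 2 - 4) • (1 : Matrix (Fin 2) (Fin 2) R) := by
  have hsq := sq_eq_trace_smul_sub_one hB
  rw [sq] at hsq
  rw [sq, sub_mul, mul_sub, mul_sub, smul_mul_smul_comm, hsq]
  simp only [smul_mul_assoc, mul_smul_comm, one_mul, mul_one, smul_sub, smul_smul]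
  module

/-- With `E = 2B - tr B`, Frobenius sends `E` to `±E` according to the quadratic character of the
discriminant, hence `B` to itself or to its conjugate `tr B - B = B⁻¹`. -/
theorem pow_card_sub_one_eq_one_or_pow_card_add_one_eq_one {K : Type*} [Field K] [Fintype K]
    (hK : ringChar K ≠ 2) {B : Matrix (Fin 2) (Fin 2) K} (hB : B.det = 1)
    (hD : B.trace ^ 2 - 4 ≠ 0) :
    B ^ (Fintype.card K - 1) = 1 ∨ B ^ (Fintype.card K + 1) = 1 := by
  obtain ⟨p, hchar, n, hp, hcard⟩ := FiniteField.card' K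
  have : Fact p.Prime := ⟨hp⟩
  set q := Fintype.card K with hq
  set t := B.trace
  set E := (2 : K) • B - t • 1 with hE
  have h2 : (2 : K) ≠ 0 := Ring.two_ne_zero hK
  have hEq : E ^ q = (t ^ 2 - 4) ^ (q / 2) • E := by
    conv_lhs => rw [← Nat.div_add_mod q 2, FiniteField.odd_card_of_char_ne_two hK]
    rw [pow_succ, pow_mul, two_smul_sub_trace_sq hB, smul_pow, one_pow, smul_one_mul]
  have hcomm : Commute E (t • (1 : Matrix (Fin 2) (Fin 2) K)) :=
    (Commute.one_right E).smul_right t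
  have hBq : (2 : K) • B ^ q = (t ^ 2 - 4) ^ (q / 2) • E + t • 1 := by
    have hpow : ((2 : K) • B) ^ q = (E + t • 1) ^ q := by rw [hE, sub_add_cancel]
    rwa [hcard, add_pow_char_pow_of_commute _ _ hcomm, ← hcard, hEq, smul_pow, smul_pow,
      FiniteField.pow_card, FiniteField.pow_card, one_pow] at hpow
  have hq1 : 1 ≤ q := Fintype.card_pos
  rcases FiniteField.pow_dichotomy hK hD with hres | hres
  · left
    rw [hres, one_smul, hE, sub_add_cancel] at hBq
    have hunit : IsUnit B := by rw [Matrix.isUnit_iff_isUnit_det, hB]; exact isUnit_one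
    refine hunit.mul_right_cancel ?_
    rw [← pow_succ, Nat.sub_add_cancel hq1, one_mul]
    exact smul_right_injective _ h2 hBq
  · right
    have hconj : B ^ q = t • 1 - B := by
      refine smul_right_injective _ h2 ?_
      rw [← hq] at hres
      simp only [hBq, hres, hE]
      module
    rw [pow_succ, hconj, sub_mul, ← sq, sq_eq_trace_smul_sub_one hB, smul_one_mul,
      sub_sub_cancel]

theorem matOrd_dvd_pred_or_succ (hA : A.det = 1) {p : ℕ} (hp : p.Prime) (hp2 : p ≠ 2)
    (hdisc : ¬(p : ℤ) ∣ A.trace ^ 2 - 4) : matOrd A p ∣ p - 1 ∨ matOrd A p ∣ p + 1 := by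
  have : Fact p.Prime := ⟨hp⟩
  have htrace : (reduction p A).trace = (A.trace : ZMod p) := by
    simp [reduction, Matrix.trace_fin_two]
  have hD : (reduction p A).trace ^ 2 - 4 ≠ 0 := by
    rw [htrace]
    rw [← ZMod.intCast_zmod_eq_zero_iff_dvd] at hdisc
    exact_mod_cast hdisc
  have hdet : (reduction p A).det = 1 := by rw [det_reduction, hA, Int.cast_one]
  have hchar : ringChar (ZMod p) ≠ 2 := by rwa [ZMod.ringChar_zmod_n]
  rw [matOrd_eq_orderOf]
  simpa only [orderOf_dvd_iff_pow_eq_one, ZMod.card] using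
    pow_card_sub_one_eq_one_or_pow_card_add_one_eq_one hchar hdet hD

theorem trace_pow_add_two (hA : A.det = 1) (n : ℕ) :
    (A ^ (n + 2)).trace = A.trace * (A ^ (n + 1)).trace - (A ^ n).trace := by
  rw [pow_add, sq_eq_trace_smul_sub_one hA, mul_sub, mul_one, mul_smul_comm, ← pow_succ,
    Matrix.trace_sub, Matrix.trace_smul, smul_eq_mul]

theorem abs_trace_pow_lt_abs_trace_pow_succ (hA : A.det = 1) (htr : 2 < |A.trace|) (n : ℕ) :
    2 ≤ |(A ^ n).trace| ∧ |(A ^ n).trace| < |(A ^ (n + 1)).trace| := by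
  induction n with
  | zero => simpa [Matrix.trace_fin_two] using htr
  | succ n ih =>
    obtain ⟨htwo, hlt⟩ := ih
    have hrec : |A.trace| * |(A ^ (n + 1)).trace| ≤
        |(A ^ (n + 2)).trace| + |(A ^ n).trace| := by
      rw [← abs_mul, eq_add_of_sub_eq (trace_pow_add_two hA n).symm]
      exact abs_add_le _ _
    refine ⟨htwo.trans hlt.le, ?_⟩
    change _ < |(A ^ (n + 2)).trace|
    nlinarith

theorem abs_trace_pow_le (hA : A.det = 1) (n : ℕ) :
    |(A ^ n).trace| ≤ 2 * (|A.trace| + 1) ^ n := by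
  induction n using Nat.twoStepInduction with
  | zero => simp [Matrix.trace_fin_two]
  | one => rw [pow_one, pow_one]; linarith [abs_nonneg A.trace]
  | more n ih₀ ih₁ =>
    have hrec : |(A ^ (n + 2)).trace| ≤ |A.trace| * |(A ^ (n + 1)).trace| + |(A ^ n).trace| := by
      rw [trace_pow_add_two hA, ← abs_mul]
      exact abs_sub _ _
    have hpow : (0 : ℤ) < (|A.trace| + 1) ^ n := by positivity
    calc |(A ^ (n + 2)).trace|
        ≤ |A.trace| * (2 * (|A.trace| + 1) ^ (n + 1)) + 2 * (|A.trace| + 1) ^ n :=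
          hrec.trans (by gcongr)
      _ ≤ 2 * (|A.trace| + 1) ^ (n + 2) := by
          rw [pow_succ _ n, pow_add _ n 2]
          nlinarith [mul_nonneg hpow.le (abs_nonneg A.trace)]

theorem det_sub_one_eq_two_sub_trace {R : Type*} [CommRing R] {B : Matrix (Fin 2) (Fin 2) R}
    (hB : B.det = 1) : (B - 1).det = 2 - B.trace := by
  rw [Matrix.det_fin_two] at hB
  simp only [Matrix.det_fin_two, Matrix.trace_fin_two, Matrix.sub_apply, Matrix.one_apply_eq,
    Matrix.one_apply_ne zero_ne_one, Matrix.one_apply_ne one_ne_zero]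
  linear_combination hB

theorem det_pow_sub_one_ne_zero (hA : A.det = 1) (htr : 2 < |A.trace|) {n : ℕ} (hn : 1 ≤ n) :
    (A ^ n - 1).det ≠ 0 := by
  obtain ⟨m, rfl⟩ := Nat.exists_eq_add_of_le' hn
  obtain ⟨htwo, hlt⟩ := abs_trace_pow_lt_abs_trace_pow_succ hA htr m
  rw [det_sub_one_eq_two_sub_trace (by rw [Matrix.det_pow, hA, one_pow])]
  intro h
  rw [← sub_eq_zero.1 h] at hlt
  norm_num at hlt
  omega

theorem natAbs_det_pow_sub_one_le (hA : A.det = 1) {n : ℕ} (hn : 1 ≤ n) :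
    (A ^ n - 1).det.natAbs ≤ (4 * (A.trace.natAbs + 1)) ^ n := by
  zify
  rw [det_sub_one_eq_two_sub_trace (by rw [Matrix.det_pow, hA, one_pow])]
  have hpow : (1 : ℤ) ≤ (|A.trace| + 1) ^ n := one_le_pow₀ (by linarith [abs_nonneg A.trace])
  have hfour : (4 : ℤ) ≤ 4 ^ n := le_self_pow₀ (by norm_num) (by omega)
  calc |2 - (A ^ n).trace| ≤ |2| + |(A ^ n).trace| := abs_sub _ _
    _ ≤ 2 + 2 * (|A.trace| + 1) ^ n := by gcongr; exacts [le_rfl, abs_trace_pow_le hA n]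
    _ ≤ 4 * (|A.trace| + 1) ^ n := by linarith
    _ ≤ (4 * (|A.trace| + 1)) ^ n := by rw [mul_pow]; gcongr

end MatrixOrder

theorem two_pow_card_le_pow_sq {F : ℕ → ℕ} {b z : ℕ} (hne : ∀ n, 1 ≤ n → F n ≠ 0)
    (hle : ∀ n, 1 ≤ n → F n ≤ b ^ n) {P : Finset ℕ}
    (hP : ∀ p ∈ P, p.Prime ∧ ∃ n ∈ Icc 1 z, p ∣ F n) : 2 ^ #P ≤ b ^ z ^ 2 := by
  have hb : 0 < b := by
    simpa using (Nat.pos_of_ne_zero (hne 1 le_rfl)).trans_le (hle 1 le_rfl)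
  have hprod : ∏ n ∈ Icc 1 z, F n ≠ 0 := prod_ne_zero_iff.2 fun n hn => hne n (mem_Icc.1 hn).1
  have hdvd : ∏ p ∈ P, p ∣ ∏ n ∈ Icc 1 z, F n := by
    refine prod_primes_dvd _ (fun p hp => (hP p hp).1.prime) fun p hp => ?_
    obtain ⟨-, n, hn, hpn⟩ := hP p hp
    exact hpn.trans (dvd_prod_of_mem F hn)
  calc 2 ^ #P ≤ ∏ p ∈ P, p := pow_card_le_prod P _ 2 fun p hp => (hP p hp).1.two_le
    _ ≤ ∏ n ∈ Icc 1 z, F n := Nat.le_of_dvd (Nat.pos_of_ne_zero hprod) hdvd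
    _ ≤ ∏ _n ∈ Icc 1 z, b ^ z := prod_le_prod' fun n hn =>
        (hle n (mem_Icc.1 hn).1).trans (Nat.pow_le_pow_right hb (mem_Icc.1 hn).2)
    _ = b ^ z ^ 2 := by rw [prod_const, Nat.card_Icc, Nat.add_sub_cancel, ← pow_mul, sq]

/-- The arithmetic of `N ↦ ord(A, N)` on which the whole argument rests: monotonicity under
divisibility, the inclusion of `ord(A, p)` in the divisors of `p ± 1` for all primes `p > p₀`, and
the sparsity of primes of small order. -/
structure IsOrderLike (o : ℕ → ℕ) (p₀ C : ℕ) : Prop where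
  pos : ∀ {N}, 0 < N → 0 < o N
  dvd_of_dvd : ∀ {M N}, M ∣ N → o M ∣ o N
  dvd_pred_or_succ : ∀ {p}, p.Prime → p₀ < p → o p ∣ p - 1 ∨ o p ∣ p + 1
  card_le : ∀ {z : ℕ} {P : Finset ℕ}, (∀ p ∈ P, p.Prime ∧ o p ≤ z) → #P ≤ C * z ^ 2

theorem exists_isOrderLike_matOrd {A : Matrix (Fin 2) (Fin 2) ℤ} (hA : A.det = 1)
    (htr : 2 < |A.trace|) : ∃ p₀ C, IsOrderLike (matOrd A) p₀ C := by
  have hunit : IsUnit A.det := by rw [hA]; exact isUnit_one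
  have hdisc : 0 < A.trace ^ 2 - 4 := by
    have := pow_lt_pow_left₀ htr (by norm_num) two_ne_zero
    rw [sq_abs] at this
    omega
  obtain ⟨C, hC⟩ : ∃ C, 4 * (A.trace.natAbs + 1) ≤ 2 ^ C := ⟨_, Nat.lt_two_pow_self.le⟩
  refine ⟨max 2 (A.trace ^ 2 - 4).toNat, C, matOrd_pos hunit, matOrd_dvd_matOrd A,
    fun {p} hp hlt => ?_, fun {z P} hP => ?_⟩
  · refine matOrd_dvd_pred_or_succ hA hp (by omega) fun hdvd => ?_
    have := Int.le_of_dvd hdisc hdvd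
    omega
  · have hpow : 2 ^ #P ≤ (2 ^ C) ^ z ^ 2 := two_pow_card_le_pow_sq
      (fun n hn => Int.natAbs_ne_zero.2 (det_pow_sub_one_ne_zero hA htr hn))
      (fun n hn => (natAbs_det_pow_sub_one_le hA hn).trans (Nat.pow_le_pow_left hC n))
      fun p hp => by
        obtain ⟨hprime, hord⟩ := hP p hp
        refine ⟨hprime, _, mem_Icc.2 ⟨matOrd_pos hunit hprime.pos, hord⟩, ?_⟩
        rw [← Int.natCast_dvd, Matrix.det_fin_two]
        have hentry := dvd_pow_matOrd_sub_one A p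
        exact dvd_sub ((hentry 0 0).mul_right _) ((hentry 0 1).mul_right _)
    rw [← pow_mul] at hpow
    exact (Nat.pow_le_pow_iff_right one_lt_two).1 hpow

/-! ### Primes in geometric blocks -/

/-- The block `(4 ^ j, 4 ^ (j + 1)]`, on which primes are counted. -/
def block (j : ℕ) : Finset ℕ := Ioc (4 ^ j) (4 ^ (j + 1))

theorem mem_block {j n : ℕ} : n ∈ block j ↔ 4 ^ j < n ∧ n ≤ 4 ^ (j + 1) := mem_Ioc

theorem lt_of_prime_mem_block {j p : ℕ} (hp : p.Prime) (h : p ∈ block j) : p < 4 ^ (j + 1) := by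
  refine (mem_block.1 h).2.lt_of_ne ?_
  rintro rfl
  exact Nat.Prime.not_prime_pow (by lia) ((pow_mul 2 2 (j + 1)).symm ▸ hp)

theorem sum_filter_Ioc_add_sum_filter_block {R : Type*} [AddCommMonoid R] (G : ℕ → Prop)
    [DecidablePred G] (f : ℕ → R) {a j : ℕ} (ha : a ≤ 4 ^ j) :
    ∑ n ∈ Ioc a (4 ^ j) with G n, f n + ∑ n ∈ block j with G n, f n =
      ∑ n ∈ Ioc a (4 ^ (j + 1)) with G n, f n := by
  have hle : 4 ^ j ≤ 4 ^ (j + 1) := Nat.pow_le_pow_right (by norm_num) j.le_succ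
  rw [block, ← Ioc_union_Ioc_eq_Ioc ha hle, filter_union, sum_union]
  exact disjoint_filter_filter (Ioc_disjoint_Ioc_of_le le_rfl)

theorem log_le_log_four_mul_of_le_pow {n j : ℕ} (hn : 0 < n) (hle : n ≤ 4 ^ j) :
    Real.log n ≤ j * Real.log 4 := by
  rw [← Real.log_pow]
  exact Real.log_le_log (by exact_mod_cast hn) (by exact_mod_cast hle)

theorem two_pow_mul_le_four_pow {j : ℕ} (hj : 8 ≤ j) :
    4 * (j + 2) + 16 * (j + 1) * 2 ^ j ≤ 4 ^ j := by
  induction j, hj using Nat.le_induction with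
  | base => norm_num
  | succ n _ ih =>
    rw [pow_succ 2, pow_succ 4]
    have : 1 ≤ 2 ^ n := Nat.one_le_two_pow
    nlinarith

theorem sum_log_prime_block_ge {j : ℕ} (hj : 8 ≤ j) :
    3 / 4 * 4 ^ j * Real.log 4 ≤ ∑ p ∈ block j with p.Prime, Real.log p := by
  have hlog2 : Real.log 4 = 2 * Real.log 2 := by
    rw [show (4 : ℝ) = 2 ^ 2 by norm_num, Real.log_pow, Nat.cast_ofNat]
  have hsplit : Chebyshev.theta ((4 ^ (j + 1) : ℕ) : ℝ) =
      Chebyshev.theta ((4 ^ j : ℕ) : ℝ) + ∑ p ∈ block j with p.Prime, Real.log p := by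
    rw [Chebyshev.theta, Chebyshev.theta, Nat.floor_natCast, Nat.floor_natCast,
      sum_filter_Ioc_add_sum_filter_block _ _ (Nat.zero_le _)]
  have hge := Chebyshev.theta_ge (4 ^ (j + 1))
  have hle := Chebyshev.theta_le_log4_mul_x (x := ((4 ^ j : ℕ) : ℝ)) (by positivity)
  have hsqrt : √((4 ^ (j + 1) : ℕ) : ℝ) = 2 ^ (j + 1) := by
    rw [Real.sqrt_eq_iff_mul_self_eq (by positivity) (by positivity), ← mul_pow]
    norm_num
  have hlog : Real.log ((4 ^ (j + 1) : ℕ) : ℝ) = (j + 1) * Real.log 4 := by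
    rw [Nat.cast_pow, Real.log_pow, Nat.cast_ofNat, Nat.cast_succ]
  have hlog_succ : Real.log (((4 ^ (j + 1) : ℕ) : ℝ) + 1) ≤ (j + 2) * Real.log 4 := by
    have hpow : 4 ^ (j + 1) + 1 ≤ 4 ^ (j + 2) :=
      Nat.succ_le_of_lt (Nat.pow_lt_pow_right (by norm_num) (by omega))
    exact_mod_cast log_le_log_four_mul_of_le_pow (Nat.succ_pos _) hpow
  have hnum : (4 * (j + 2) + 16 * (j + 1) * 2 ^ j : ℝ) * Real.log 4 ≤ 4 ^ j * Real.log 4 :=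
    mul_le_mul_of_nonneg_right (by exact_mod_cast two_pow_mul_le_four_pow hj)
      (Real.log_nonneg (by norm_num))
  rw [hsplit, hsqrt, hlog] at hge
  push_cast at hge hle hlog_succ
  rw [pow_succ 4] at hge hlog_succ
  rw [pow_succ 2] at hge
  linear_combination hge + hle + hlog_succ + hnum / 4 + 2 * 4 ^ j * hlog2

theorem card_prime_block_ge {j : ℕ} (hj : 8 ≤ j) :
    (1 / 2 : ℝ) * 4 ^ j / j ≤ #{p ∈ block j | p.Prime} := by
  have hlog4 : (0 : ℝ) < Real.log 4 := Real.log_pos (by norm_num)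
  have hsum : ∑ p ∈ block j with p.Prime, Real.log p ≤
      #{p ∈ block j | p.Prime} * ((j + 1) * Real.log 4) := by
    rw [← nsmul_eq_mul]
    refine sum_le_card_nsmul _ _ _ fun p hp => ?_
    obtain ⟨hmem, hp⟩ := mem_filter.1 hp
    exact_mod_cast log_le_log_four_mul_of_le_pow hp.pos (mem_block.1 hmem).2
  have hcard : 3 / 4 * 4 ^ j ≤ (#{p ∈ block j | p.Prime} : ℝ) * (j + 1) := by
    refine le_of_mul_le_mul_right ?_ hlog4
    rw [mul_assoc (_ : ℝ) (j + 1 : ℝ)]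
    exact (sum_log_prime_block_ge hj).trans hsum
  have hj' : (8 : ℝ) ≤ j := by exact_mod_cast hj
  rw [div_le_iff₀ (by linarith)]
  nlinarith [(#{p ∈ block j | p.Prime}).cast_nonneg (α := ℝ)]

theorem log_div_le_sum_one_div {G : ℕ → Prop} [DecidablePred G] {c : ℝ} (hc : 0 ≤ c) {J₁ J₂ : ℕ}
    (hG : ∀ j ≥ J₁, c * 4 ^ j / j ≤ #{n ∈ block j | G n}) (h₁ : 1 ≤ J₁) (h₂ : J₁ ≤ J₂) :
    c / 4 * Real.log (J₂ / J₁) ≤ ∑ n ∈ Ioc (4 ^ J₁) (4 ^ J₂) with G n, (1 / n : ℝ) := by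
  have hJ₁ : (0 : ℝ) < J₁ := by exact_mod_cast h₁
  induction J₂, h₂ using Nat.le_induction with
  | base => rw [div_self hJ₁.ne']; simp
  | succ j hj ih =>
    have hj0 : (0 : ℝ) < j := hJ₁.trans_le (by exact_mod_cast hj)
    have hblock : c / 4 * (1 / j) ≤ ∑ n ∈ block j with G n, (1 / n : ℝ) := by
      calc c / 4 * (1 / j) = (c * 4 ^ j / j) * (1 / 4 ^ (j + 1)) := by rw [pow_succ]; field_simp
        _ ≤ #{n ∈ block j | G n} * (1 / 4 ^ (j + 1)) := by gcongr; exact hG j hj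
        _ ≤ ∑ n ∈ block j with G n, (1 / n : ℝ) := by
            rw [← nsmul_eq_mul]
            refine card_nsmul_le_sum _ _ _ fun n hn => ?_
            obtain ⟨hlt, hle⟩ := mem_block.1 (mem_filter.1 hn).1
            exact one_div_le_one_div_of_le (by exact_mod_cast hlt.pos) (by exact_mod_cast hle)
    have hlog : Real.log ((j + 1 : ℕ) / J₁) ≤ Real.log (j / J₁) + 1 / j := by
      have hfactor : ((j + 1 : ℕ) : ℝ) / J₁ = (j / J₁) * (1 + 1 / j) := by push_cast; field_simp
      rw [hfactor, Real.log_mul (by positivity) (by positivity)]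
      linarith [Real.log_le_sub_one_of_pos (x := 1 + 1 / (j : ℝ)) (by positivity)]
    rw [← sum_filter_Ioc_add_sum_filter_block _ _ (Nat.pow_le_pow_right (by norm_num) hj)]
    calc c / 4 * Real.log ((j + 1 : ℕ) / J₁)
        ≤ c / 4 * Real.log (j / J₁) + c / 4 * (1 / j) := by rw [← mul_add]; gcongr
      _ ≤ _ := add_le_add ih hblock

theorem log_mul_le_sum_one_div_sqrt {G : ℕ → Prop} [DecidablePred G] {c : ℝ} (hc : 0 ≤ c) {J : ℕ}
    (hG : ∀ j ≥ J.sqrt, c * 4 ^ j / j ≤ #{n ∈ block j | G n}) (hJ : 0 < J) :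
    c / 8 * Real.log J ≤ ∑ n ∈ Ioc (4 ^ J.sqrt) (4 ^ J) with G n, (1 / n : ℝ) := by
  have hs : 0 < J.sqrt := Nat.sqrt_pos.2 hJ
  refine le_trans ?_ (log_div_le_sum_one_div hc hG hs J.sqrt_le_self)
  have hlog : 2 * Real.log J.sqrt ≤ Real.log J := by
    rw [← Nat.cast_ofNat, ← Real.log_pow]
    exact Real.log_le_log (by positivity) (by exact_mod_cast J.sqrt_le')
  rw [Real.log_div (by positivity) (by positivity)]
  nlinarith

/-! ### A large sieve bound for residue classes -/

section Sieve

open scoped ArithmeticFunction.Moebius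

theorem abs_card_filter_modEq_and_dvd_sub_le {d l : ℕ} (hd : 0 < d) (hl : 0 < l)
    (hdl : d.Coprime l) (v x : ℕ) :
    |(#{n ∈ Ioc 0 x | n ≡ v [MOD d] ∧ l ∣ n} : ℝ) - x / (d * l)| ≤ 1 := by
  obtain ⟨u, huv, hu0⟩ := Nat.chineseRemainder hdl v 0
  have hfilter : {n ∈ Ioc 0 x | n ≡ v [MOD d] ∧ l ∣ n} = {n ∈ Ioc 0 x | n ≡ u [MOD d * l]} :=
    filter_congr fun n _ => by
      rw [← Nat.modEq_and_modEq_iff_modEq_mul hdl, ← Nat.modEq_zero_iff_dvd]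
      exact and_congr ⟨(·.trans huv.symm), (·.trans huv)⟩ ⟨(·.trans hu0.symm), (·.trans hu0)⟩
  have hcard := Nat.Ioc_filter_modEq_card 0 x (Nat.mul_pos hd hl) u
  set a : ℚ := ((x : ℚ) - u) / (d * l : ℕ)
  set b : ℚ := (((0 : ℕ) : ℚ) - u) / (d * l : ℕ)
  have hab : a - b = x / (d * l) := by
    simp only [a, b]
    rw [← sub_div]
    push_cast
    ring
  have hba : b ≤ a := sub_nonneg.1 (hab ▸ by positivity)
  rw [max_eq_left (sub_nonneg.2 (Int.floor_le_floor hba))] at hcard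
  have hcardQ : (#{n ∈ Ioc 0 x | n ≡ u [MOD d * l]} : ℚ) = ⌊a⌋ - ⌊b⌋ := by exact_mod_cast hcard
  have hbound : |(#{n ∈ Ioc 0 x | n ≡ u [MOD d * l]} : ℚ) - x / (d * l)| ≤ 1 := by
    rw [hcardQ, ← hab, abs_le]
    constructor <;>
      linarith [Int.floor_le a, Int.lt_floor_add_one a, Int.floor_le b, Int.lt_floor_add_one b]
  rw [hfilter, ← Rat.cast_natCast (α := ℝ), ← Rat.cast_natCast (α := ℝ) x,
    ← Rat.cast_natCast (α := ℝ) d, ← Rat.cast_natCast (α := ℝ) l]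
  exact_mod_cast hbound

theorem sum_moebius_div_of_dvd {r s : ℕ} (hr : 0 < r) (hs : 0 < s) :
    ∑ l ∈ r.divisors with s ∣ l, μ (r / l) = if r = s then 1 else 0 := by
  rw [sum_filter, ← Nat.sum_div_divisors r (fun l => if s ∣ l then μ (r / l) else 0)]
  have hterm : ∀ l ∈ r.divisors, (if s ∣ r / l then μ (r / (r / l)) else 0) =
      if s ∣ r ∧ l ∣ r / s then μ l else 0 := fun l hl => by
    have hlr := Nat.dvd_of_mem_divisors hl
    rw [Nat.div_div_self hlr hr.ne']
    refine if_congr ((Nat.dvd_div_iff_mul_dvd hlr).trans ?_) rfl rfl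
    rw [mul_comm]
    refine ⟨fun h => ?_, fun h => (Nat.dvd_div_iff_mul_dvd h.1).1 h.2⟩
    have hsr := dvd_of_mul_right_dvd h
    exact ⟨hsr, (Nat.dvd_div_iff_mul_dvd hsr).2 h⟩
  rw [sum_congr rfl hterm]
  by_cases hsr : s ∣ r
  · have hone : r / s = 1 ↔ r = s := by
      rw [Nat.div_eq_iff_eq_mul_left hs hsr, one_mul]
    have hsum := congrArg (· (r / s)) ArithmeticFunction.moebius_mul_coe_zeta
    simp only [ArithmeticFunction.coe_mul_zeta_apply, ArithmeticFunction.one_apply, hone] at hsum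
    simp only [hsr, true_and]
    rw [← sum_filter, Nat.divisors_filter_dvd_of_dvd hr.ne' (Nat.div_dvd_of_dvd hsr), hsum]
  · rw [if_neg (by rintro rfl; exact hsr dvd_rfl)]
    simp only [hsr, false_and, if_false, sum_const_zero]

theorem sum_moebius_mul_moebius_mul_gcd {r r' : ℕ} (hr : 0 < r) (hr' : 0 < r') :
    ∑ l ∈ r.divisors, ∑ l' ∈ r'.divisors, μ (r / l) * μ (r' / l') * (l.gcd l' : ℤ) =
      if r = r' then (r.totient : ℤ) else 0 := by
  have hgcd : ∀ l ∈ r.divisors, ∀ l', (l.gcd l' : ℤ) =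
      ∑ s ∈ r.divisors, if s ∣ l ∧ s ∣ l' then (s.totient : ℤ) else 0 := fun l hl l' => by
    simp only [← Nat.dvd_gcd_iff]
    rw [← sum_filter, Nat.divisors_filter_dvd_of_dvd hr.ne'
      ((l.gcd_dvd_left l').trans (Nat.dvd_of_mem_divisors hl))]
    exact_mod_cast (Nat.sum_totient _).symm
  calc ∑ l ∈ r.divisors, ∑ l' ∈ r'.divisors, μ (r / l) * μ (r' / l') * (l.gcd l' : ℤ)
      = ∑ l ∈ r.divisors, ∑ l' ∈ r'.divisors, ∑ s ∈ r.divisors, (s.totient : ℤ) *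
          ((if s ∣ l then μ (r / l) else 0) * if s ∣ l' then μ (r' / l') else 0) :=
        sum_congr rfl fun l hl => sum_congr rfl fun l' _ => by
          rw [hgcd l hl, mul_sum]
          refine sum_congr rfl fun s _ => ?_
          by_cases h : s ∣ l <;> by_cases h' : s ∣ l' <;> simp [h, h', mul_comm]
    _ = ∑ s ∈ r.divisors, (s.totient : ℤ) * ((∑ l ∈ r.divisors with s ∣ l, μ (r / l)) *
          ∑ l' ∈ r'.divisors with s ∣ l', μ (r' / l')) := by
        simp only [sum_filter, sum_mul_sum]
        rw [sum_congr rfl fun l _ => sum_comm, sum_comm]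
        simp only [mul_sum]
    _ = ∑ s ∈ r.divisors, if r = s then (if r = r' then (r.totient : ℤ) else 0) else 0 :=
        sum_congr rfl fun s hs => by
          have hs0 := Nat.pos_of_mem_divisors hs
          rw [sum_moebius_div_of_dvd hr hs0, sum_moebius_div_of_dvd hr' hs0]
          by_cases h : r = s
          · subst h
            by_cases h' : r = r' <;> simp [h', eq_comm]
          · simp [h]
    _ = if r = r' then (r.totient : ℤ) else 0 := by
        rw [sum_ite_eq, if_pos (Nat.mem_divisors_self r hr.ne')]

/-- The Ramanujan sum `c_r(n)`, given by its divisor-sum formula. For varying `r` these functions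
are nearly orthogonal on long intervals, and they serve as a basis for the sieve weights. -/
def ramanujanSum (r n : ℕ) : ℤ := ∑ l ∈ r.divisors with l ∣ n, l * μ (r / l)

theorem ramanujanSum_of_coprime {r n : ℕ} (hr : 0 < r) (h : r.Coprime n) :
    ramanujanSum r n = μ r := by
  have hfilter : {l ∈ r.divisors | l ∣ n} = {1} := by
    ext l
    rw [mem_filter, Nat.mem_divisors, mem_singleton]
    exact ⟨fun hl => Nat.eq_one_of_dvd_coprimes h hl.1.1 hl.2,
      by rintro rfl; exact ⟨⟨one_dvd r, hr.ne'⟩, one_dvd n⟩⟩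
  rw [ramanujanSum, hfilter, sum_singleton, Nat.cast_one, one_mul, Nat.div_one]

theorem sum_ramanujanSum_mul_ramanujanSum (s : Finset ℕ) (r r' : ℕ) :
    ∑ n ∈ s, ramanujanSum r n * ramanujanSum r' n = ∑ l ∈ r.divisors, ∑ l' ∈ r'.divisors,
      (l * μ (r / l)) * (l' * μ (r' / l')) * (#{n ∈ s | l.lcm l' ∣ n} : ℤ) := by
  simp only [ramanujanSum, sum_filter, sum_mul_sum]
  rw [sum_comm]
  refine sum_congr rfl fun l _ => ?_
  rw [sum_comm]
  refine sum_congr rfl fun l' _ => ?_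
  rw [card_filter, Nat.cast_sum, mul_sum]
  refine sum_congr rfl fun n _ => ?_
  by_cases h : l ∣ n <;> by_cases h' : l' ∣ n <;> simp [h, h', Nat.lcm_dvd_iff]

theorem sum_divisors_cast_le_sq (r : ℕ) : ∑ l ∈ r.divisors, (l : ℝ) ≤ r ^ 2 := by
  calc ∑ l ∈ r.divisors, (l : ℝ) ≤ #r.divisors * r := by
        rw [← nsmul_eq_mul]
        exact sum_le_card_nsmul _ _ _ fun l hl => by exact_mod_cast Nat.divisor_le hl
    _ ≤ r ^ 2 := by
        rw [sq]
        gcongr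
        exact Nat.card_divisors_le_self r

theorem abs_moebius_cast_le_one (n : ℕ) : |(μ n : ℝ)| ≤ 1 := by
  exact_mod_cast ArithmeticFunction.abs_moebius_le_one (n := n)

theorem totient_ite_mul_eq_sum {r r' : ℕ} (hr : 0 < r) (hr' : 0 < r') (d x : ℕ) :
    (if r = r' then (r.totient : ℝ) else 0) * (x / d) = ∑ l ∈ r.divisors, ∑ l' ∈ r'.divisors,
      (l * (μ (r / l) : ℝ)) * (l' * μ (r' / l')) * (x / (d * (l.lcm l' : ℕ))) := by
  have hgcd := congrArg (Int.cast : ℤ → ℝ) (sum_moebius_mul_moebius_mul_gcd hr hr')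
  push_cast at hgcd
  rw [← hgcd, sum_mul]
  refine sum_congr rfl fun l hl => ?_
  rw [sum_mul]
  refine sum_congr rfl fun l' hl' => ?_
  have hlcm : ((l.lcm l' : ℕ) : ℝ) ≠ 0 := by
    exact_mod_cast (Nat.lcm_pos (Nat.pos_of_mem_divisors hl) (Nat.pos_of_mem_divisors hl')).ne'
  have hmul : ((l.gcd l' : ℕ) : ℝ) * (l.lcm l' : ℕ) = l * l' := by
    exact_mod_cast l.gcd_mul_lcm l'
  field_simp
  linear_combination (μ (r / l) : ℝ) * μ (r' / l') * x / d * hmul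

theorem abs_sum_ramanujanSum_mul_sub_le {d r r' : ℕ} (hd : 0 < d) (hr : 0 < r) (hr' : 0 < r')
    (hrd : d.Coprime r) (hrd' : d.Coprime r') (v x : ℕ) :
    |∑ n ∈ Ioc 0 x with n ≡ v [MOD d], (ramanujanSum r n : ℝ) * ramanujanSum r' n -
      (if r = r' then (r.totient : ℝ) else 0) * (x / d)| ≤ r ^ 2 * r' ^ 2 := by
  have hcount := congrArg (Int.cast : ℤ → ℝ)
    (sum_ramanujanSum_mul_ramanujanSum {n ∈ Ioc 0 x | n ≡ v [MOD d]} r r')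
  push_cast [filter_filter] at hcount
  rw [hcount, totient_ite_mul_eq_sum hr hr']
  simp only [← sum_sub_distrib, ← mul_sub]
  calc _ ≤ ∑ l ∈ r.divisors, ∑ l' ∈ r'.divisors, (l : ℝ) * l' :=
        (abs_sum_le_sum_abs _ _).trans <| sum_le_sum fun l hl =>
          (abs_sum_le_sum_abs _ _).trans <| sum_le_sum fun l' hl' => by
            have hlcm : d.Coprime (l.lcm l') :=
              ((hrd.coprime_dvd_right (Nat.dvd_of_mem_divisors hl)).mul_right
                (hrd'.coprime_dvd_right (Nat.dvd_of_mem_divisors hl'))).coprime_dvd_right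
                  (Nat.lcm_dvd_mul l l')
            have hdiff := abs_card_filter_modEq_and_dvd_sub_le hd (Nat.lcm_pos
              (Nat.pos_of_mem_divisors hl) (Nat.pos_of_mem_divisors hl')) hlcm v x
            rw [abs_mul, abs_mul, abs_mul, abs_mul, Nat.abs_cast, Nat.abs_cast]
            calc _ ≤ (l : ℝ) * 1 * (l' * 1) * 1 := by gcongr <;> apply abs_moebius_cast_le_one
              _ = l * l' := by ring
    _ ≤ r ^ 2 * r' ^ 2 := by
        rw [← sum_mul_sum]
        gcongr <;> exact sum_divisors_cast_le_sq _

/-- The squarefree `r ≤ z` coprime to `d`: the moduli used in the sieve. -/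
def sieveModuli (d z : ℕ) : Finset ℕ := {r ∈ Icc 1 z | d.Coprime r ∧ Squarefree r}

/-- The sum of `1 / r` over the sieve moduli, by which sifted sets shrink. -/
noncomputable def sieveSum (d z : ℕ) : ℝ := ∑ r ∈ sieveModuli d z, (1 / r : ℝ)

/-- The sieve weight `∑ r, μ(r) c_r(n) / r`. -/
noncomputable def sieveWeight (d z n : ℕ) : ℝ :=
  ∑ r ∈ sieveModuli d z, (μ r / r : ℝ) * ramanujanSum r n

theorem mem_sieveModuli {d z r : ℕ} :
    r ∈ sieveModuli d z ↔ (0 < r ∧ r ≤ z) ∧ d.Coprime r ∧ Squarefree r := by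
  rw [sieveModuli, mem_filter, mem_Icc, Nat.succ_le_iff]

theorem moebius_mul_self_of_squarefree {r : ℕ} (hr : Squarefree r) : (μ r : ℝ) * μ r = 1 := by
  have := ArithmeticFunction.moebius_sq_eq_one_of_squarefree hr
  rw [sq] at this
  exact_mod_cast this

theorem sieveWeight_eq_sieveSum {d z n : ℕ} (h : ∀ r ∈ sieveModuli d z, r.Coprime n) :
    sieveWeight d z n = sieveSum d z := by
  refine sum_congr rfl fun r hr => ?_
  obtain ⟨⟨hr0, -⟩, -, hsq⟩ := mem_sieveModuli.1 hr
  rw [ramanujanSum_of_coprime hr0 (h r hr), div_mul_eq_mul_div, moebius_mul_self_of_squarefree hsq]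

theorem moebius_div_mul_sum_ramanujanSum_le {d r r' z : ℕ} (hd : 0 < d)
    (hr : r ∈ sieveModuli d z) (hr' : r' ∈ sieveModuli d z) (v x : ℕ) :
    (μ r / r : ℝ) * (μ r' / r') *
      ∑ n ∈ Ioc 0 x with n ≡ v [MOD d], (ramanujanSum r n : ℝ) * ramanujanSum r' n ≤
        (if r = r' then x / d * (1 / r : ℝ) else 0) + r * r' := by
  obtain ⟨⟨hr0, -⟩, hrd, hsq⟩ := mem_sieveModuli.1 hr
  obtain ⟨⟨hr0', -⟩, hrd', -⟩ := mem_sieveModuli.1 hr'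
  have hrR' : (0 : ℝ) < r' := by exact_mod_cast hr0'
  have hdiff := abs_sum_ramanujanSum_mul_sub_le hd hr0 hr0' hrd hrd' v x
  set s := ∑ n ∈ Ioc 0 x with n ≡ v [MOD d], (ramanujanSum r n : ℝ) * ramanujanSum r' n
  set t := (if r = r' then (r.totient : ℝ) else 0) * (x / d) with ht
  have herror : (μ r / r : ℝ) * (μ r' / r') * (s - t) ≤ r * r' := by
    refine (le_abs_self _).trans ?_
    rw [abs_mul, abs_mul, abs_div, abs_div, Nat.abs_cast, Nat.abs_cast]
    calc _ ≤ (1 / r : ℝ) * (1 / r') * (r ^ 2 * r' ^ 2) := by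
          gcongr <;> apply abs_moebius_cast_le_one
      _ = r * r' := by field_simp
  have hdiag : (μ r / r : ℝ) * (μ r' / r') * t ≤ if r = r' then x / d * (1 / r : ℝ) else 0 := by
    rw [ht]
    split_ifs with h
    · subst h
      have htot : (r.totient : ℝ) ≤ r := by exact_mod_cast r.totient_le
      calc _ = ((μ r : ℝ) * μ r) * (x / d * (r.totient / (r * r))) := by ring
        _ ≤ 1 * (x / d * (r / (r * r))) := by
            rw [moebius_mul_self_of_squarefree hsq]
            gcongr
        _ = x / d * (1 / r) := by field_simp
    · rw [zero_mul, mul_zero]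
  linarith

theorem sum_sieveWeight_sq_le {d : ℕ} (hd : 0 < d) (v x z : ℕ) :
    ∑ n ∈ Ioc 0 x with n ≡ v [MOD d], sieveWeight d z n ^ 2 ≤ x / d * sieveSum d z + z ^ 4 := by
  set R := sieveModuli d z with hR
  have hsum : ∑ r ∈ R, (r : ℝ) ≤ z ^ 2 := by
    calc ∑ r ∈ R, (r : ℝ) ≤ ∑ _r ∈ Icc 1 z, (z : ℝ) :=
          (sum_le_sum_of_subset_of_nonneg (filter_subset _ _) fun _ _ _ => by positivity).trans
            (sum_le_sum fun r hr => by exact_mod_cast (mem_Icc.1 hr).2)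
      _ = z ^ 2 := by rw [sum_const, Nat.card_Icc, nsmul_eq_mul, Nat.add_sub_cancel, sq]
  calc ∑ n ∈ Ioc 0 x with n ≡ v [MOD d], sieveWeight d z n ^ 2
      = ∑ r ∈ R, ∑ r' ∈ R, (μ r / r : ℝ) * (μ r' / r') *
          ∑ n ∈ Ioc 0 x with n ≡ v [MOD d], (ramanujanSum r n : ℝ) * ramanujanSum r' n := by
        simp only [sieveWeight, sq, sum_mul_sum]
        rw [sum_comm]
        refine sum_congr rfl fun r _ => ?_
        rw [sum_comm]
        refine sum_congr rfl fun r' _ => ?_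
        rw [mul_sum]
        exact sum_congr rfl fun n _ => by ring
    _ ≤ ∑ r ∈ R, ∑ r' ∈ R, ((if r = r' then x / d * (1 / r : ℝ) else 0) + r * r') :=
        sum_le_sum fun r hr => sum_le_sum fun r' hr' =>
          moebius_div_mul_sum_ramanujanSum_le hd hr hr' v x
    _ = x / d * sieveSum d z + (∑ r ∈ R, (r : ℝ)) * ∑ r ∈ R, (r : ℝ) := by
        rw [sum_mul_sum, sieveSum, mul_sum, ← hR, ← sum_add_distrib]
        refine sum_congr rfl fun r hr => ?_
        rw [sum_add_distrib, sum_ite_eq, if_pos hr]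
    _ ≤ x / d * sieveSum d z + z ^ 2 * z ^ 2 := by gcongr
    _ = x / d * sieveSum d z + z ^ 4 := by ring

theorem card_mul_sieveSum_sq_le {d : ℕ} (hd : 0 < d) {v x z : ℕ} {F : Finset ℕ}
    (hF : ∀ n ∈ F, n ∈ Ioc 0 x ∧ n ≡ v [MOD d] ∧ ∀ r ∈ sieveModuli d z, r.Coprime n) :
    #F * sieveSum d z ^ 2 ≤ x / d * sieveSum d z + z ^ 4 := by
  calc #F * sieveSum d z ^ 2 = ∑ n ∈ F, sieveWeight d z n ^ 2 := by
        rw [← nsmul_eq_mul, ← sum_const]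
        exact sum_congr rfl fun n hn => by rw [sieveWeight_eq_sieveSum (hF n hn).2.2]
    _ ≤ ∑ n ∈ Ioc 0 x with n ≡ v [MOD d], sieveWeight d z n ^ 2 :=
        sum_le_sum_of_subset_of_nonneg
          (fun n hn => mem_filter.2 ⟨(hF n hn).1, (hF n hn).2.1⟩) fun _ _ _ => sq_nonneg _
    _ ≤ x / d * sieveSum d z + z ^ 4 := sum_sieveWeight_sq_le hd v x z

end Sieve

/-! ### The Brun–Titchmarsh inequality -/

section BrunTitchmarsh

theorem sum_mul_le_sum_mul_sum_of_injOn {ι α β : Type*} {X : Finset ι} {A : Finset α}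
    {B : Finset β} {φ : ι → α × β} (hinj : Set.InjOn φ X) (hmem : Set.MapsTo φ X (A ×ˢ B))
    {f : α → ℝ} {g : β → ℝ} (hf : 0 ≤ f) (hg : 0 ≤ g) :
    ∑ n ∈ X, f (φ n).1 * g (φ n).2 ≤ (∑ a ∈ A, f a) * ∑ b ∈ B, g b := by
  classical
  rw [sum_mul_sum, ← sum_product', ← sum_image (f := fun y => f y.1 * g y.2) hinj]
  refine sum_le_sum_of_subset_of_nonneg (fun y hy => ?_) fun y _ _ => mul_nonneg (hf _) (hg _)
  obtain ⟨n, hn, rfl⟩ := mem_image.1 hy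
  exact_mod_cast hmem hn

theorem abundancyIndex_eq_sum_one_div (d : ℕ) :
    (d.abundancyIndex : ℝ) = ∑ e ∈ d.divisors, (1 / e : ℝ) := by
  rcases d.eq_zero_or_pos with rfl | _
  · simp [Nat.abundancyIndex]
  rw [Nat.abundancyIndex, ← Nat.sum_div_divisors d fun e => (1 / e : ℝ)]
  push_cast
  rw [sum_div]
  refine sum_congr rfl fun e he => ?_
  rw [Nat.cast_div_charZero (Nat.dvd_of_mem_divisors he), one_div_div]

theorem one_le_abundancyIndex {d : ℕ} (hd : 0 < d) : 1 ≤ (d.abundancyIndex : ℝ) := by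
  rw [abundancyIndex_eq_sum_one_div]
  simpa using single_le_sum (f := fun e : ℕ => (1 / e : ℝ)) (fun _ _ => by positivity)
    (Nat.one_mem_divisors.2 hd.ne')

theorem sum_squarefree_one_div_le {d : ℕ} (hd : 0 < d) (z : ℕ) :
    ∑ r ∈ Icc 1 z with Squarefree r, (1 / r : ℝ) ≤ d.abundancyIndex * sieveSum d z := by
  have hfactor (r : ℕ) : r.gcd d * (r / r.gcd d) = r := Nat.mul_div_cancel' (r.gcd_dvd_left d)
  calc ∑ r ∈ Icc 1 z with Squarefree r, (1 / r : ℝ)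
      = ∑ r ∈ Icc 1 z with Squarefree r, 1 / (Nat.gcd r d : ℝ) * (1 / (r / Nat.gcd r d : ℕ)) := by
        refine sum_congr rfl fun r _ => ?_
        rw [one_div_mul_one_div, ← Nat.cast_mul, hfactor]
    _ ≤ (∑ e ∈ d.divisors, (1 / e : ℝ)) * ∑ r ∈ sieveModuli d z, (1 / r : ℝ) := by
        refine sum_mul_le_sum_mul_sum_of_injOn (φ := fun r : ℕ => (r.gcd d, r / r.gcd d))
          (f := fun e : ℕ => (1 / e : ℝ)) (g := fun r : ℕ => (1 / r : ℝ)) (fun r _ s _ h => ?_)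
          (fun r hr => ?_) (fun _ => by positivity) (fun _ => by positivity)
        · rw [← hfactor r, ← hfactor s, (Prod.mk.inj h).2, (Prod.mk.inj h).1]
        · obtain ⟨hr, hsq⟩ := mem_filter.1 hr
          obtain ⟨hr1, hrz⟩ := mem_Icc.1 hr
          rw [← hfactor r, Nat.squarefree_mul_iff] at hsq
          obtain ⟨hcop, -, hsq⟩ := hsq
          have hcop_d : d.Coprime (r / r.gcd d) :=
            Nat.eq_one_of_dvd_coprimes hcop (Nat.dvd_gcd
              ((Nat.gcd_dvd_right _ _).trans (Nat.div_dvd_of_dvd (r.gcd_dvd_left d)))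
              (Nat.gcd_dvd_left _ _)) (Nat.gcd_dvd_right _ _)
          exact ⟨Nat.mem_divisors.2 ⟨r.gcd_dvd_right d, hd.ne'⟩, mem_sieveModuli.2
            ⟨⟨Nat.div_gcd_pos_of_pos_left d hr1, (Nat.div_le_self _ _).trans hrz⟩, hcop_d, hsq⟩⟩
    _ = d.abundancyIndex * sieveSum d z := by rw [abundancyIndex_eq_sum_one_div, sieveSum]

theorem sum_one_div_sq_le_two (z : ℕ) : ∑ b ∈ Icc 1 z, (1 / (b : ℝ) ^ 2) ≤ 2 := by
  have hIoo : Icc 1 z = Ioo 0 (z + 1) := by ext; simp only [mem_Icc, mem_Ioo]; omega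
  simpa [hIoo] using sum_Ioo_inv_sq_le (α := ℝ) 0 (z + 1)

theorem sum_one_div_le_two_mul_sum_squarefree (z : ℕ) :
    ∑ n ∈ Icc 1 z, (1 / n : ℝ) ≤ 2 * ∑ r ∈ Icc 1 z with Squarefree r, (1 / r : ℝ) := by
  choose a b hab hsq using Nat.sq_mul_squarefree
  calc ∑ n ∈ Icc 1 z, (1 / n : ℝ)
      = ∑ n ∈ Icc 1 z, 1 / (b n : ℝ) ^ 2 * (1 / (a n : ℝ)) := by
        refine sum_congr rfl fun n _ => ?_
        rw [one_div_mul_one_div]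
        exact_mod_cast congrArg (fun m : ℕ => (1 / m : ℝ)) (hab n).symm
    _ ≤ (∑ b ∈ Icc 1 z, 1 / (b : ℝ) ^ 2) * ∑ r ∈ Icc 1 z with Squarefree r, (1 / r : ℝ) := by
        refine sum_mul_le_sum_mul_sum_of_injOn (φ := fun n => (b n, a n))
          (f := fun b => 1 / (b : ℝ) ^ 2) (g := fun r : ℕ => (1 / r : ℝ)) (fun n _ m _ h => ?_)
          (fun n hn => ?_) (fun _ => by positivity) (fun _ => by positivity)
        · rw [← hab n, ← hab m, (Prod.mk.inj h).1, (Prod.mk.inj h).2]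
        · obtain ⟨hn1, hnz⟩ := mem_Icc.1 hn
          have ha : a n ∣ n := Dvd.intro_left _ (hab n)
          have hb : b n ∣ n := (dvd_pow_self _ two_ne_zero).trans (Dvd.intro _ (hab n))
          exact ⟨mem_Icc.2 ⟨Nat.pos_of_dvd_of_pos hb hn1, (Nat.le_of_dvd hn1 hb).trans hnz⟩,
            mem_filter.2 ⟨mem_Icc.2 ⟨Nat.pos_of_dvd_of_pos ha hn1,
              (Nat.le_of_dvd hn1 ha).trans hnz⟩, hsq n⟩⟩
    _ ≤ 2 * ∑ r ∈ Icc 1 z with Squarefree r, (1 / r : ℝ) := by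
        gcongr
        exact sum_one_div_sq_le_two z

theorem log_le_two_mul_abundancyIndex_mul_sieveSum {d z : ℕ} (hd : 0 < d) (hz : 0 < z) :
    Real.log z ≤ 2 * d.abundancyIndex * sieveSum d z := by
  calc Real.log z ≤ Real.log (z + 1 : ℕ) :=
        Real.log_le_log (by exact_mod_cast hz) (by exact_mod_cast z.le_succ)
    _ ≤ ∑ n ∈ Icc 1 z, (1 / n : ℝ) := by
        have := log_add_one_le_harmonic z
        rw [harmonic_eq_sum_Icc] at this
        simpa using this
    _ ≤ 2 * (d.abundancyIndex * sieveSum d z) :=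
        (sum_one_div_le_two_mul_sum_squarefree z).trans
          (by gcongr; exact sum_squarefree_one_div_le hd z)
    _ = 2 * d.abundancyIndex * sieveSum d z := by ring

theorem one_le_sieveSum (d : ℕ) {z : ℕ} (hz : 0 < z) : 1 ≤ sieveSum d z := by
  have hmem : 1 ∈ sieveModuli d z :=
    mem_sieveModuli.2 ⟨⟨one_pos, hz⟩, Nat.coprime_one_right d, squarefree_one⟩
  simpa [sieveSum] using
    single_le_sum (f := fun r : ℕ => (1 / r : ℝ)) (fun _ _ => by positivity) hmem

theorem card_prime_modEq_le {d : ℕ} (hd : 0 < d) (v x : ℕ) {z : ℕ} (hz : 1 < z) :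
    (#{p ∈ Ioc 0 x | p.Prime ∧ p ≡ v [MOD d]} : ℝ) ≤
      2 * d.abundancyIndex / Real.log z * (x / d) + 2 * z ^ 4 := by
  set F : Finset ℕ := {p ∈ Ioc 0 x | p.Prime ∧ p ≡ v [MOD d]} with hF
  set S := sieveSum d z
  have hS : 1 ≤ S := one_le_sieveSum d hz.pos
  have hz1 : (1 : ℝ) ≤ z := by exact_mod_cast hz.le
  have hlog : 0 < Real.log z := Real.log_pos (by exact_mod_cast hz)
  have hsmall : (#{p ∈ F | ¬z < p} : ℝ) ≤ z ^ 4 := by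
    have hsub : {p ∈ F | ¬z < p} ⊆ Icc 1 z := fun p hp => by
      simp only [hF, mem_filter, mem_Ioc] at hp
      exact mem_Icc.2 (by omega)
    have hcard := card_le_card hsub
    rw [Nat.card_Icc, Nat.add_sub_cancel] at hcard
    exact (by exact_mod_cast hcard : (_ : ℝ) ≤ z).trans (le_self_pow₀ hz1 (by norm_num))
  have hlarge : (#{p ∈ F | z < p} : ℝ) ≤ 2 * d.abundancyIndex / Real.log z * (x / d) + z ^ 4 := by
    have hsieve : #{p ∈ F | z < p} * S ^ 2 ≤ x / d * S + z ^ 4 := by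
      refine card_mul_sieveSum_sq_le (v := v) hd fun p hp => ?_
      obtain ⟨hp, hzp⟩ := mem_filter.1 hp
      obtain ⟨hp, hprime, hmod⟩ := mem_filter.1 hp
      refine ⟨hp, hmod, fun r hr => ?_⟩
      obtain ⟨⟨hr0, hrz⟩, -⟩ := mem_sieveModuli.1 hr
      exact (Nat.coprime_of_lt_prime hr0.ne' (hrz.trans_lt hzp) hprime).symm
    have hinv : 1 / S ≤ 2 * d.abundancyIndex / Real.log z := by
      rw [div_le_div_iff₀ (by linarith) hlog, one_mul]
      exact log_le_two_mul_abundancyIndex_mul_sieveSum hd hz.pos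
    calc (#{p ∈ F | z < p} : ℝ) ≤ (x / d * S + z ^ 4) / S ^ 2 :=
          (le_div_iff₀ (by positivity)).2 hsieve
      _ = 1 / S * (x / d) + z ^ 4 / S ^ 2 := by field_simp
      _ ≤ 2 * d.abundancyIndex / Real.log z * (x / d) + z ^ 4 := by
          gcongr
          exact div_le_self (by positivity) (one_le_pow₀ hS)
  have hsplit : (#F : ℝ) = #{p ∈ F | z < p} + #{p ∈ F | ¬z < p} := by
    exact_mod_cast (card_filter_add_card_filter_not (s := F) (z < ·)).symm
  linarith

theorem pow_five_le_eight_pow (j : ℕ) : j ^ 5 ≤ 8 ^ j := by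
  rcases lt_or_ge j 2 with h | h
  · interval_cases j <;> norm_num
  induction j, h using Nat.le_induction with
  | base => norm_num
  | succ n hn ih =>
    have hstep := Nat.pow_le_pow_left (show 2 * (n + 1) ≤ 3 * n by omega) 5
    rw [mul_pow, mul_pow] at hstep
    rw [pow_succ 8]
    omega

theorem two_pow_div_twenty_pow_four_mul_le {d j : ℕ} (hd : d ^ 5 ≤ 4 ^ (3 * j)) :
    (2 ^ (j / 20)) ^ 4 * (j * d) ≤ 4 ^ j := by
  refine le_of_pow_le_pow_left₀ (n := 5) (by norm_num) (Nat.zero_le _) ?_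
  have hroot : ((2 ^ (j / 20)) ^ 4) ^ 5 ≤ 2 ^ j := by
    rw [← pow_mul, ← pow_mul]
    exact Nat.pow_le_pow_right (by norm_num) (by omega)
  calc ((2 ^ (j / 20)) ^ 4 * (j * d)) ^ 5 = ((2 ^ (j / 20)) ^ 4) ^ 5 * (j ^ 5 * d ^ 5) := by ring
    _ ≤ 2 ^ j * (8 ^ j * 4 ^ (3 * j)) := by gcongr ?_ * (?_ * ?_); exact pow_five_le_eight_pow j
    _ = (4 ^ j) ^ 5 := by
        rw [show (4 : ℕ) = 2 ^ 2 by norm_num, show (8 : ℕ) = 2 ^ 3 by norm_num]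
        simp only [← pow_mul, ← pow_add]
        congr 1
        ring

theorem card_prime_modEq_le_four_pow_div {d j : ℕ} (hj : 20 ≤ j) (hd : 0 < d)
    (hdj : d ^ 5 ≤ 4 ^ (3 * j)) (v : ℕ) :
    (#{p ∈ Ioc 0 (4 ^ (j + 1)) | p.Prime ∧ p ≡ v [MOD d]} : ℝ) ≤
      500 * (4 ^ j / j) * (d.abundancyIndex / d) := by
  have hjR : (20 : ℝ) ≤ j := by exact_mod_cast hj
  have hone := one_le_abundancyIndex hd
  have hz : 1 < 2 ^ (j / 20) := Nat.one_lt_two_pow (by omega)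
  have hlog : (j : ℝ) / 60 ≤ Real.log (2 ^ (j / 20) : ℕ) := by
    have hdiv : (j : ℝ) ≤ 40 * (j / 20 : ℕ) := by exact_mod_cast (by omega)
    rw [Nat.cast_pow, Real.log_pow, Nat.cast_ofNat]
    nlinarith [Real.log_two_gt_d9]
  have hmain : 2 * d.abundancyIndex / Real.log (2 ^ (j / 20) : ℕ) * ((4 ^ (j + 1) : ℕ) / d : ℝ) ≤
      480 * (4 ^ j / j) * (d.abundancyIndex / d) := by
    calc _ ≤ 2 * d.abundancyIndex / (j / 60) * ((4 ^ (j + 1) : ℕ) / d : ℝ) := by gcongr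
      _ = _ := by push_cast; rw [pow_succ]; field_simp; norm_num
  have herror : (((2 ^ (j / 20) : ℕ) : ℝ)) ^ 4 ≤ 4 ^ j / j * (d.abundancyIndex / d) := by
    have hpow : (((2 ^ (j / 20) : ℕ) : ℝ)) ^ 4 * (j * d) ≤ 4 ^ j := by
      exact_mod_cast two_pow_div_twenty_pow_four_mul_le hdj
    calc _ ≤ (4 : ℝ) ^ j / (j * d) := (le_div_iff₀ (by positivity)).2 hpow
      _ = 4 ^ j / j * (1 / d) := by field_simp
      _ ≤ 4 ^ j / j * (d.abundancyIndex / d) := by gcongr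
  have hpos : (0 : ℝ) ≤ 4 ^ j / j * (d.abundancyIndex / d) := by positivity
  linarith [card_prime_modEq_le hd v (4 ^ (j + 1)) hz]

end BrunTitchmarsh

/-! ### Moments of the number of prime factors of shifted primes -/

section Moments

theorem abundancyIndex_mul_le (a b : ℕ) :
    ((a * b).abundancyIndex : ℝ) ≤ a.abundancyIndex * b.abundancyIndex := by
  have himage : (a * b).divisors = (a.divisors ×ˢ b.divisors).image fun x => x.1 * x.2 := by
    rw [Nat.divisors_mul]
    rfl
  simp only [abundancyIndex_eq_sum_one_div]
  rw [sum_mul_sum, ← sum_product', himage]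
  refine (sum_image_le_of_nonneg fun _ _ => by positivity).trans_eq (sum_congr rfl fun x _ => ?_)
  rw [Nat.cast_mul, one_div_mul_one_div]

theorem abundancyIndex_prime {q : ℕ} (hq : q.Prime) : (q.abundancyIndex : ℝ) = 1 + 1 / q := by
  rw [abundancyIndex_eq_sum_one_div, hq.divisors, sum_pair hq.one_lt.ne, Nat.cast_one, div_one]

theorem abundancyIndex_prod_le {K : Finset ℕ} (hK : ∀ q ∈ K, q.Prime) :
    ((∏ q ∈ K, q).abundancyIndex : ℝ) ≤ ∏ q ∈ K, (1 + 1 / q : ℝ) := by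
  induction K using Finset.induction_on with
  | empty => simp [Nat.abundancyIndex]
  | insert q s hq ih =>
    rw [prod_insert hq, prod_insert hq, ← abundancyIndex_prime (hK q (mem_insert_self q s))]
    have hpos : (0 : ℝ) ≤ q.abundancyIndex := by
      rw [abundancyIndex_eq_sum_one_div]
      positivity
    exact (abundancyIndex_mul_le _ _).trans
      (mul_le_mul_of_nonneg_left (ih fun p hp => hK p (mem_insert_of_mem hp)) hpos)

theorem sum_powersetCard_prod_le {ι : Type*} {w : ι → ℝ} (hw : 0 ≤ w) (Q : Finset ι) (k : ℕ) :
    ∑ K ∈ powersetCard k Q, ∏ q ∈ K, w q ≤ (∑ q ∈ Q, w q) ^ k / k.factorial := by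
  classical
  induction Q using Finset.induction_on generalizing k with
  | empty =>
    cases k with
    | zero => simp
    | succ k => rw [powersetCard_eq_empty.2 (by simp), sum_empty, sum_empty]; positivity
  | insert a s ha ih =>
    cases k with
    | zero => simp
    | succ k =>
      have hnot {K : Finset ι} (hK : K ∈ powersetCard k s) : a ∉ K :=
        fun h => ha ((mem_powersetCard.1 hK).1 h)
      have hdisj : Disjoint (powersetCard (k + 1) s) ((powersetCard k s).image (insert a)) := by
        refine disjoint_left.2 fun K hK hK' => ?_
        obtain ⟨L, -, rfl⟩ := mem_image.1 hK'
        exact ha ((mem_powersetCard.1 hK).1 (mem_insert_self a L))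
      have hinj : Set.InjOn (insert a) (powersetCard k s : Set (Finset ι)) := fun K hK L hL h => by
        rw [← erase_insert (hnot hK), h, erase_insert (hnot hL)]
      have hS : 0 ≤ ∑ q ∈ s, w q := sum_nonneg fun q _ => hw q
      have hbernoulli := pow_add_mul_le_add_pow hS
        (add_nonneg (mul_nonneg zero_le_two hS) (hw a)) (k + 1)
      rw [Nat.add_sub_cancel, Nat.cast_succ] at hbernoulli
      rw [powersetCard_succ_insert ha, sum_union hdisj, sum_image hinj, sum_insert ha]
      calc _ = ∑ K ∈ powersetCard (k + 1) s, ∏ q ∈ K, w q +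
            w a * ∑ K ∈ powersetCard k s, ∏ q ∈ K, w q := by
            rw [mul_sum]
            exact congrArg _ (sum_congr rfl fun K hK => prod_insert (hnot hK))
        _ ≤ (∑ q ∈ s, w q) ^ (k + 1) / (k + 1).factorial +
            w a * ((∑ q ∈ s, w q) ^ k / k.factorial) :=
            add_le_add (ih (k + 1)) (mul_le_mul_of_nonneg_left (ih k) (hw a))
        _ = ((∑ q ∈ s, w q) ^ (k + 1) + (k + 1) * (∑ q ∈ s, w q) ^ k * w a) /
            (k + 1).factorial := by
            rw [Nat.factorial_succ]
            push_cast
            field_simp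
        _ ≤ (w a + ∑ q ∈ s, w q) ^ (k + 1) / (k + 1).factorial := by
            rw [add_comm (w a)]
            gcongr

/-- The shifts `p ↦ p - 1` and `p ↦ p + 1`. -/
def IsShift (f : ℕ → ℕ) : Prop := f = (fun p => p - 1) ∨ f = fun p => p + 1

theorem IsShift.exists_modEq {f : ℕ → ℕ} (hf : IsShift f) {d : ℕ} (hd : 0 < d) :
    ∃ v, ∀ p, 0 < p → d ∣ f p → p ≡ v [MOD d] := by
  rcases hf with rfl | rfl
  · exact ⟨1, fun p hp h => ((Nat.modEq_iff_dvd' hp).2 h).symm⟩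
  · refine ⟨d - 1, fun p _ h => Nat.ModEq.add_right_cancel' 1 ?_⟩
    rw [Nat.sub_add_cancel hd]
    exact (Nat.modEq_zero_iff_dvd.2 h).trans (Nat.modEq_zero_iff_dvd.2 dvd_rfl).symm

theorem IsShift.card_prime_dvd_le {f : ℕ → ℕ} (hf : IsShift f) {d j : ℕ} (hj : 20 ≤ j)
    (hd : 0 < d) (hdj : d ^ 5 ≤ 4 ^ (3 * j)) :
    (#{p ∈ Ioc 0 (4 ^ (j + 1)) | p.Prime ∧ d ∣ f p} : ℝ) ≤
      500 * (4 ^ j / j) * (d.abundancyIndex / d) := by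
  obtain ⟨v, hv⟩ := hf.exists_modEq hd
  refine le_trans ?_ (card_prime_modEq_le_four_pow_div hj hd hdj v)
  have hsub := monotone_filter_right (Ioc 0 (4 ^ (j + 1)))
    (p := fun p => p.Prime ∧ d ∣ f p) (q := fun p => p.Prime ∧ p ≡ v [MOD d])
    fun p _ hp => ⟨hp.1, hv p hp.1.pos hp.2⟩
  exact_mod_cast card_le_card hsub

/-- The number of elements of `Q` dividing `m`; for a set `Q` of primes, a truncation of
`ω(m)`. -/
def omegaOn (Q : Finset ℕ) (m : ℕ) : ℕ := #{q ∈ Q | q ∣ m}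

theorem choose_omegaOn_eq_sum {Q : Finset ℕ} (hQ : ∀ q ∈ Q, q.Prime) (m k : ℕ) :
    ((omegaOn Q m).choose k : ℝ) =
      ∑ K ∈ powersetCard k Q, if ∏ q ∈ K, q ∣ m then (1 : ℝ) else 0 := by
  rw [omegaOn, ← card_powersetCard, sum_boole]
  congr 2
  ext K
  simp only [mem_powersetCard, mem_filter, subset_iff]
  refine ⟨fun ⟨hK, hcard⟩ => ⟨⟨fun q hq => (hK hq).1, hcard⟩, ?_⟩, fun ⟨⟨hK, hcard⟩, hdvd⟩ =>
    ⟨fun q hq => ⟨hK hq, (dvd_prod_of_mem _ hq).trans hdvd⟩, hcard⟩⟩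
  exact prod_primes_dvd m (fun q hq => (hQ q (hK hq).1).prime) fun q hq => (hK hq).2

theorem IsShift.sum_choose_omegaOn_le {f : ℕ → ℕ} (hf : IsShift f) {j k J : ℕ} (hj : 20 ≤ j)
    {Q : Finset ℕ} (hQ : ∀ q ∈ Q, q.Prime ∧ q ≤ 4 ^ J) (hk : 20 * k * J ≤ j) :
    ∑ p ∈ Ioc 0 (4 ^ (j + 1)) with p.Prime, ((omegaOn Q (f p)).choose k : ℝ) ≤
      500 * (4 ^ j / j) * ((∑ q ∈ Q, (1 + 1 / q : ℝ) / q) ^ k / k.factorial) := by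
  simp only [choose_omegaOn_eq_sum fun q hq => (hQ q hq).1]
  rw [sum_comm]
  calc _ ≤ ∑ K ∈ powersetCard k Q, 500 * (4 ^ j / j : ℝ) * ∏ q ∈ K, ((1 + 1 / q : ℝ) / q) := by
        refine sum_le_sum fun K hK => ?_
        obtain ⟨hKQ, rfl⟩ := mem_powersetCard.1 hK
        have hprime : ∀ q ∈ K, q.Prime := fun q hq => (hQ q (hKQ hq)).1
        have hprod : (∏ q ∈ K, q) ^ 5 ≤ 4 ^ (3 * j) := by
          calc (∏ q ∈ K, q) ^ 5 ≤ ((4 ^ J) ^ #K) ^ 5 := by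
                gcongr
                exact prod_le_pow_card _ _ _ fun q hq => (hQ q (hKQ hq)).2
            _ = 4 ^ (J * (#K * 5)) := by rw [← pow_mul, ← pow_mul]
            _ ≤ 4 ^ (3 * j) := Nat.pow_le_pow_right (by norm_num) (by nlinarith)
        rw [sum_boole, filter_filter, prod_div_distrib]
        refine (hf.card_prime_dvd_le hj (prod_pos fun q hq => (hprime q hq).pos) hprod).trans ?_
        push_cast
        gcongr
        exact abundancyIndex_prod_le hprime
    _ ≤ _ := by
        rw [← mul_sum]
        gcongr
        exact sum_powersetCard_prod_le (fun q => by positivity) Q k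

theorem IsShift.card_le_omegaOn_mul_pow_le {f : ℕ → ℕ} (hf : IsShift f) {j k J W : ℕ}
    (hj : 20 ≤ j) {Q : Finset ℕ} (hQ : ∀ q ∈ Q, q.Prime ∧ q ≤ 4 ^ J) (hk : 20 * k * J ≤ j) :
    #{p ∈ Ioc 0 (4 ^ (j + 1)) | p.Prime ∧ W ≤ omegaOn Q (f p)} * ((W + 1 - k : ℕ) : ℝ) ^ k ≤
      500 * (4 ^ j / j) * (∑ q ∈ Q, (1 + 1 / q : ℝ) / q) ^ k := by
  set F : Finset ℕ := {p ∈ Ioc 0 (4 ^ (j + 1)) | p.Prime ∧ W ≤ omegaOn Q (f p)} with hF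
  have hfact : (0 : ℝ) < k.factorial := by exact_mod_cast k.factorial_pos
  have hdesc : ((W + 1 - k : ℕ) : ℝ) ^ k ≤ k.factorial * W.choose k := by
    have := Nat.pow_sub_le_descFactorial W k
    rw [Nat.descFactorial_eq_factorial_mul_choose] at this
    exact_mod_cast this
  have hmarkov : (#F : ℝ) * W.choose k ≤
      ∑ p ∈ Ioc 0 (4 ^ (j + 1)) with p.Prime, ((omegaOn Q (f p)).choose k : ℝ) := by
    rw [← nsmul_eq_mul]
    refine (card_nsmul_le_sum F _ _ fun p hp => ?_).trans (sum_le_sum_of_subset_of_nonneg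
      (monotone_filter_right _ fun p _ hp => hp.1) fun _ _ _ => by positivity)
    exact_mod_cast Nat.choose_le_choose k (mem_filter.1 hp).2.2
  calc _ ≤ (#F : ℝ) * (k.factorial * W.choose k) := by gcongr
    _ = k.factorial * (#F * W.choose k) := by ring
    _ ≤ k.factorial *
        (500 * (4 ^ j / j) * ((∑ q ∈ Q, (1 + 1 / q : ℝ) / q) ^ k / k.factorial)) := by
        gcongr ?_ * ?_
        exact hmarkov.trans (hf.sum_choose_omegaOn_le hj hQ hk)
    _ = _ := by field_simp

end Moments

/-! ### Integers with few prime factors in a given set -/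

section Thin

/-- The weight `2 ^ (-ω_Q(m))`, which favours the integers with few prime factors in `Q`. -/
noncomputable def omegaWeight (Q : Finset ℕ) (m : ℕ) : ℝ := (1 / 2) ^ omegaOn Q m

/-- The partial sum `∑_{n ≤ N} 2 ^ (-ω_Q(n)) n ^ (-s)` of a Dirichlet series. -/
noncomputable def weightedDirichlet (Q : Finset ℕ) (s : ℝ) (N : ℕ) : ℝ :=
  ∑ n ∈ Icc 1 N, omegaWeight Q n * (n : ℝ) ^ (-s)

/-- The weighted harmonic sum `∑_{m ≤ x} 2 ^ (-ω_Q(m)) / m`. -/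
noncomputable def weightedHarmonic (Q : Finset ℕ) (x : ℕ) : ℝ :=
  ∑ m ∈ Icc 1 x, omegaWeight Q m / m

theorem omegaWeight_pos (Q : Finset ℕ) (m : ℕ) : 0 < omegaWeight Q m := by
  unfold omegaWeight
  positivity

theorem omegaWeight_div_nonneg (Q : Finset ℕ) (m : ℕ) : 0 ≤ omegaWeight Q m / m :=
  div_nonneg (omegaWeight_pos Q m).le m.cast_nonneg

theorem omegaWeight_le_of_dvd (Q : Finset ℕ) {m n : ℕ} (h : m ∣ n) :
    omegaWeight Q n ≤ omegaWeight Q m :=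
  pow_le_pow_of_le_one (by norm_num) (by norm_num)
    (card_le_card (monotone_filter_right _ fun _ _ hq => hq.trans h))

theorem omegaWeight_insert {Q : Finset ℕ} {q : ℕ} (hq : q ∉ Q) (n : ℕ) :
    omegaWeight (insert q Q) n = omegaWeight Q n * if q ∣ n then 1 / 2 else 1 := by
  unfold omegaWeight omegaOn
  rw [filter_insert]
  split_ifs
  · rw [card_insert_of_notMem fun h => hq (mem_filter.1 h).1, pow_succ]
  · rw [mul_one]

theorem omegaWeight_prime_mul {Q : Finset ℕ} (hQ : ∀ r ∈ Q, r.Prime) {q : ℕ} (hqp : q.Prime)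
    (hq : q ∉ Q) (n : ℕ) : omegaWeight Q (q * n) = omegaWeight Q n := by
  unfold omegaWeight omegaOn
  congr 2
  refine filter_congr fun r hr => ⟨fun h => ?_, fun h => h.mul_left q⟩
  refine ((hQ r hr).dvd_mul.1 h).resolve_left fun hrq => hq ?_
  rwa [← (Nat.prime_dvd_prime_iff_eq (hQ r hr) hqp).1 hrq]

theorem weightedDirichlet_nonneg (Q : Finset ℕ) (s : ℝ) (N : ℕ) : 0 ≤ weightedDirichlet Q s N :=
  sum_nonneg fun n _ => mul_nonneg (omegaWeight_pos Q n).le (by positivity)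

theorem rpow_mul_weightedDirichlet_insert_le {Q : Finset ℕ} (hQ : ∀ r ∈ Q, r.Prime) {q : ℕ}
    (hqp : q.Prime) (hq : q ∉ Q) (s : ℝ) (N : ℕ) :
    (q : ℝ) ^ (-s) * weightedDirichlet (insert q Q) s N ≤
      ∑ n ∈ Icc 1 (q * N) with q ∣ n, omegaWeight Q n * (n : ℝ) ^ (-s) := by
  calc (q : ℝ) ^ (-s) * weightedDirichlet (insert q Q) s N
      ≤ ∑ n ∈ Icc 1 N, omegaWeight Q (q * n) * ((q * n : ℕ) : ℝ) ^ (-s) := by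
        rw [weightedDirichlet, mul_sum]
        refine sum_le_sum fun n _ => ?_
        have hle : omegaWeight (insert q Q) n ≤ omegaWeight Q n := by
          rw [omegaWeight_insert hq]
          exact mul_le_of_le_one_right (omegaWeight_pos Q n).le (by split_ifs <;> norm_num)
        rw [omegaWeight_prime_mul hQ hqp hq, Nat.cast_mul, Real.mul_rpow (by positivity)
          (by positivity), mul_left_comm]
        gcongr
    _ = ∑ n ∈ (Icc 1 N).image (q * ·), omegaWeight Q n * (n : ℝ) ^ (-s) := by
        rw [sum_image fun a _ b _ h => Nat.eq_of_mul_eq_mul_left hqp.pos h]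
    _ ≤ _ := by
        refine sum_le_sum_of_subset_of_nonneg (fun n hn => ?_) fun n _ _ =>
          mul_nonneg (omegaWeight_pos Q n).le (by positivity)
        obtain ⟨m, hm, rfl⟩ := mem_image.1 hn
        rw [mem_Icc] at hm
        exact mem_filter.2 ⟨mem_Icc.2 ⟨Nat.mul_pos hqp.pos hm.1, Nat.mul_le_mul_left _ hm.2⟩,
          dvd_mul_right _ _⟩

theorem one_add_mul_weightedDirichlet_insert_le {Q : Finset ℕ} (hQ : ∀ r ∈ Q, r.Prime) {q : ℕ}
    (hqp : q.Prime) (hq : q ∉ Q) (s : ℝ) (N : ℕ) :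
    (1 + (q : ℝ) ^ (-s) / 2) * weightedDirichlet (insert q Q) s N ≤
      weightedDirichlet Q s (q * N) := by
  have hmono : weightedDirichlet (insert q Q) s N ≤ weightedDirichlet (insert q Q) s (q * N) :=
    sum_le_sum_of_subset_of_nonneg (Icc_subset_Icc_right (Nat.le_mul_of_pos_left _ hqp.pos))
      fun n _ _ => mul_nonneg (omegaWeight_pos _ n).le (by positivity)
  have hsplit : weightedDirichlet (insert q Q) s (q * N) = weightedDirichlet Q s (q * N) -
      1 / 2 * ∑ n ∈ Icc 1 (q * N) with q ∣ n, omegaWeight Q n * (n : ℝ) ^ (-s) := by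
    simp only [weightedDirichlet]
    rw [sum_filter, mul_sum, ← sum_sub_distrib]
    refine sum_congr rfl fun n _ => ?_
    rw [omegaWeight_insert hq]
    split_ifs <;> ring
  linarith [rpow_mul_weightedDirichlet_insert_le hQ hqp hq s N]

theorem prod_one_add_mul_weightedDirichlet_le {s Z : ℝ}
    (hZ : ∀ N, weightedDirichlet ∅ s N ≤ Z) {Q : Finset ℕ} (hQ : ∀ r ∈ Q, r.Prime) (N : ℕ) :
    (∏ q ∈ Q, (1 + (q : ℝ) ^ (-s) / 2)) * weightedDirichlet Q s N ≤ Z := by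
  induction Q using Finset.induction_on generalizing N with
  | empty => simpa using hZ N
  | insert q Q hq ih =>
    have hQ' : ∀ r ∈ Q, r.Prime := fun r hr => hQ r (mem_insert_of_mem hr)
    rw [prod_insert hq, mul_comm (1 + _), mul_assoc]
    have hprod : 0 ≤ ∏ q ∈ Q, (1 + (q : ℝ) ^ (-s) / 2) := prod_nonneg fun _ _ => by positivity
    exact (mul_le_mul_of_nonneg_left (one_add_mul_weightedDirichlet_insert_le hQ'
      (hQ q (mem_insert_self q Q)) hq s N) hprod).trans (ih hQ' (q * N))

theorem rpow_neg_add_one_mul_le {x t : ℝ} (hx : 0 < x) (ht : 0 ≤ t) :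
    (x + 1) ^ (-t) * (1 + t / (x + 1)) ≤ x ^ (-t) := by
  have hx' : 0 < x + 1 := by positivity
  have hratio : x ^ (-t) = (x + 1) ^ (-t) * Real.exp (t * Real.log ((x + 1) / x)) := by
    rw [Real.rpow_def_of_pos hx, Real.rpow_def_of_pos hx', ← Real.exp_add,
      Real.log_div hx'.ne' hx.ne']
    ring_nf
  have hlog : 1 / (x + 1) ≤ Real.log ((x + 1) / x) := by
    refine le_of_eq_of_le ?_ (Real.one_sub_inv_le_log_of_pos (div_pos hx' hx))
    field_simp
    ring
  rw [hratio]
  gcongr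
  calc 1 + t / (x + 1) = t * (1 / (x + 1)) + 1 := by ring
    _ ≤ t * Real.log ((x + 1) / x) + 1 := by gcongr
    _ ≤ _ := Real.add_one_le_exp _

theorem sum_rpow_neg_one_add_le {t : ℝ} (ht : 0 < t) (N : ℕ) :
    ∑ n ∈ Icc 1 N, (n : ℝ) ^ (-(1 + t)) ≤ 1 + 1 / t := by
  rcases N.eq_zero_or_pos with rfl | hN
  · rw [Icc_eq_empty (by norm_num), sum_empty]
    positivity
  suffices h : ∑ n ∈ Icc 1 N, (n : ℝ) ^ (-(1 + t)) ≤ 1 + 1 / t - (N : ℝ) ^ (-t) / t from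
    h.trans (sub_le_self _ (by positivity))
  induction N, hN using Nat.le_induction with
  | base => simp
  | succ n hn ih =>
    rw [sum_Icc_succ_top (by lia), Nat.cast_succ]
    have hstep := rpow_neg_add_one_mul_le (x := n) (by positivity) ht.le
    have hterm : ((n : ℝ) + 1) ^ (-(1 + t)) ≤ (n : ℝ) ^ (-t) / t - ((n : ℝ) + 1) ^ (-t) / t := by
      rw [← sub_div, le_div_iff₀ ht, show -(1 + t) = -t - 1 by ring,
        Real.rpow_sub_one (by positivity)]
      linear_combination hstep
    linarith

theorem weightedHarmonic_le_exp_one_mul {x : ℕ} {L : ℝ} (hL : 0 < L) (hx : Real.log x ≤ L)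
    (Q : Finset ℕ) :
    weightedHarmonic Q x ≤ Real.exp 1 * weightedDirichlet Q (1 + 1 / L) x := by
  rw [weightedHarmonic, weightedDirichlet, mul_sum]
  refine sum_le_sum fun m hm => ?_
  obtain ⟨hm, hmx⟩ := mem_Icc.1 hm
  have hlog : Real.log m ≤ L := (Real.log_le_log (by positivity) (by gcongr)).trans hx
  have hterm : (m : ℝ)⁻¹ ≤ Real.exp 1 * (m : ℝ) ^ (-(1 + 1 / L)) := by
    rw [Real.rpow_def_of_pos (by positivity), ← Real.exp_add, ← Real.exp_log (x := (m : ℝ)⁻¹)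
      (by positivity), Real.log_inv, Real.exp_le_exp]
    have : Real.log m * (1 / L) ≤ 1 := by rwa [mul_one_div, div_le_one hL]
    linarith
  calc omegaWeight Q m / m ≤ omegaWeight Q m * (Real.exp 1 * (m : ℝ) ^ (-(1 + 1 / L))) :=
        mul_le_mul_of_nonneg_left hterm (omegaWeight_pos Q m).le
    _ = _ := mul_left_comm _ _ _

theorem exp_div_le_one_add_rpow {q L : ℝ} (hL : 0 < L) (hq : 100 ≤ q)
    (hlog : Real.log q ≤ L / 100) :
    Real.exp (0.49 * (1 / q)) ≤ 1 + q ^ (-(1 + 1 / L)) / 2 := by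
  have hq0 : 0 < q := by linarith
  have hrpow : 0.99 * (1 / q) ≤ q ^ (-(1 + 1 / L)) := by
    have hexp : q ^ (-(1 + 1 / L)) = Real.exp (-(Real.log q / L)) * (1 / q) := by
      rw [neg_add', Real.rpow_sub hq0, Real.rpow_neg_one, Real.rpow_def_of_pos hq0, Real.exp_neg,
        mul_one_div]
      ring
    rw [hexp]
    gcongr
    have : Real.log q / L ≤ 1 / 100 := by
      rw [div_le_iff₀ hL]
      linarith
    linarith [Real.add_one_le_exp (-(Real.log q / L))]
  set u := 1 / q
  have hu0 : 0 < u := by positivity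
  have hu1 : u ≤ 1 / 100 := one_div_le_one_div_of_le (by norm_num) hq
  calc Real.exp (0.49 * u) ≤ 1 / (1 - 0.49 * u) :=
        Real.exp_bound_div_one_sub_of_interval (by positivity) (by linarith)
    _ ≤ 1 + 0.495 * u := by
        rw [div_le_iff₀ (by linarith)]
        nlinarith
    _ ≤ _ := by linarith

theorem weightedHarmonic_le {Q : Finset ℕ} {x : ℕ} {L : ℝ} (hL : 0 < L) (hx : Real.log x ≤ L)
    (hQ : ∀ q ∈ Q, q.Prime ∧ 100 ≤ q ∧ Real.log q ≤ L / 100) :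
    weightedHarmonic Q x ≤
      Real.exp 1 * (1 + L) * Real.exp (-(0.49 * ∑ q ∈ Q, (1 / q : ℝ))) := by
  have hzeta (N : ℕ) : weightedDirichlet ∅ (1 + 1 / L) N ≤ 1 + L := by
    simpa [weightedDirichlet, omegaWeight, omegaOn] using
      sum_rpow_neg_one_add_le (one_div_pos.2 hL) N
  have heuler := prod_one_add_mul_weightedDirichlet_le hzeta (fun q hq => (hQ q hq).1) x
  have hexp : Real.exp (0.49 * ∑ q ∈ Q, (1 / q : ℝ)) ≤
      ∏ q ∈ Q, (1 + (q : ℝ) ^ (-(1 + 1 / L)) / 2) := by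
    rw [mul_sum, Real.exp_sum]
    exact prod_le_prod (fun _ _ => by positivity) fun q hq =>
      exp_div_le_one_add_rpow hL (by exact_mod_cast (hQ q hq).2.1) (hQ q hq).2.2
  have hD := (mul_le_mul_of_nonneg_right hexp (weightedDirichlet_nonneg Q _ x)).trans heuler
  refine (weightedHarmonic_le_exp_one_mul hL hx Q).trans ?_
  rw [mul_assoc, Real.exp_neg, ← div_eq_mul_inv]
  gcongr
  rwa [le_div_iff₀ (Real.exp_pos _), mul_comm]

theorem weightedHarmonic_mono (Q : Finset ℕ) : Monotone (weightedHarmonic Q) := fun _ _ h =>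
  sum_le_sum_of_subset_of_nonneg (Icc_subset_Icc_right h) fun m _ _ => omegaWeight_div_nonneg Q m

theorem weightedHarmonic_nonneg (Q : Finset ℕ) (x : ℕ) : 0 ≤ weightedHarmonic Q x :=
  sum_nonneg fun m _ => omegaWeight_div_nonneg Q m

theorem sum_Ioc_sum_divisorsAntidiagonal {M : Type*} [AddCommMonoid M] (U V : ℕ)
    (F : ℕ → ℕ → M) :
    ∑ f ∈ Ioc U V, ∑ p ∈ f.divisorsAntidiagonal, F p.1 p.2 =
      ∑ e ∈ Icc 1 V, ∑ m ∈ Ioc (U / e) (V / e), F e m := by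
  rw [sum_sigma', sum_sigma']
  refine sum_bij' (fun x _ => (⟨x.2.1, x.2.2⟩ : (_ : ℕ) × ℕ))
    (fun y _ => (⟨y.1 * y.2, (y.1, y.2)⟩ : (_ : ℕ) × (ℕ × ℕ))) ?_ ?_ ?_ (fun _ _ => rfl)
    fun _ _ => rfl
  · rintro ⟨f, e, m⟩ h
    simp only [mem_sigma, mem_Ioc, mem_Icc, Nat.mem_divisorsAntidiagonal] at h ⊢
    obtain ⟨⟨hU, hV⟩, rfl, hne⟩ := h
    have he := Nat.pos_of_ne_zero (left_ne_zero_of_mul hne)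
    have hm := Nat.pos_of_ne_zero (right_ne_zero_of_mul hne)
    rw [Nat.div_lt_iff_lt_mul he, Nat.le_div_iff_mul_le he, mul_comm m]
    exact ⟨⟨he, (Nat.le_mul_of_pos_right e hm).trans hV⟩, hU, hV⟩
  · rintro ⟨e, m⟩ h
    simp only [mem_sigma, mem_Ioc, mem_Icc, Nat.mem_divisorsAntidiagonal] at h ⊢
    obtain ⟨⟨he, -⟩, hU, hV⟩ := h
    rw [Nat.div_lt_iff_lt_mul he, mul_comm] at hU
    rw [Nat.le_div_iff_mul_le he, mul_comm] at hV
    exact ⟨⟨hU, hV⟩, trivial, (Nat.zero_le U).trans_lt hU |>.ne'⟩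
  · rintro ⟨f, e, m⟩ h
    obtain ⟨-, rfl, -⟩ := by simpa only [mem_sigma, Nat.mem_divisorsAntidiagonal] using h
    rfl

theorem sum_omegaWeight_mul_log_le (Q : Finset ℕ) (t : ℕ) :
    ∑ n ∈ Icc 1 t, omegaWeight Q n * Real.log n ≤ 6 * t * weightedHarmonic Q t := by
  have hpsi (m : ℕ) :
      ∑ d ∈ Ioc 0 (t / m), ArithmeticFunction.vonMangoldt d ≤ 6 * ((t : ℝ) / m) := by
    have hcheb := Chebyshev.psi_le_const_mul_self (x := ((t / m : ℕ) : ℝ)) (by positivity)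
    rw [Chebyshev.psi, Nat.floor_natCast] at hcheb
    have hlog : Real.log 4 + 4 ≤ 6 := by
      rw [show (4 : ℝ) = 2 ^ 2 by norm_num, Real.log_pow, Nat.cast_ofNat]
      linarith [Real.log_two_lt_d9]
    exact hcheb.trans (mul_le_mul hlog Nat.cast_div_le (by positivity) (by norm_num))
  calc ∑ n ∈ Icc 1 t, omegaWeight Q n * Real.log n
      ≤ ∑ n ∈ Ioc 0 t, ∑ p ∈ n.divisorsAntidiagonal,
          omegaWeight Q p.1 * ArithmeticFunction.vonMangoldt p.2 := by
        refine sum_le_sum fun n _ => ?_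
        rw [← ArithmeticFunction.vonMangoldt_sum, mul_sum, ← Nat.sum_divisorsAntidiagonal'
          (f := fun _ d => omegaWeight Q n * ArithmeticFunction.vonMangoldt d)]
        refine sum_le_sum fun p hp => ?_
        have hdvd : p.1 ∣ n := ⟨p.2, (Nat.mem_divisorsAntidiagonal.1 hp).1.symm⟩
        exact mul_le_mul_of_nonneg_right (omegaWeight_le_of_dvd Q hdvd)
          ArithmeticFunction.vonMangoldt_nonneg
    _ = ∑ m ∈ Icc 1 t,
          omegaWeight Q m * ∑ d ∈ Ioc 0 (t / m), ArithmeticFunction.vonMangoldt d := by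
        rw [sum_Ioc_sum_divisorsAntidiagonal 0 t
          fun a b => omegaWeight Q a * ArithmeticFunction.vonMangoldt b]
        simp only [Nat.zero_div, mul_sum]
    _ ≤ ∑ m ∈ Icc 1 t, omegaWeight Q m * (6 * ((t : ℝ) / m)) := by
        gcongr with m
        · exact (omegaWeight_pos Q m).le
        · exact hpsi m
    _ = _ := by
        rw [weightedHarmonic, mul_sum]
        exact sum_congr rfl fun m _ => by ring

theorem sum_omegaWeight_div_dyadic_le (Q : Finset ℕ) {u : ℕ} (hu : 2 ≤ u) :
    ∑ n ∈ Ioc u (2 * u), omegaWeight Q n / n ≤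
      12 * weightedHarmonic Q (2 * u) / Real.log u := by
  have hu0 : (0 : ℝ) < u := by positivity
  have hlog : 0 < Real.log u := Real.log_pos (by exact_mod_cast hu)
  have hle : u * Real.log u * ∑ n ∈ Ioc u (2 * u), omegaWeight Q n / n ≤
      ∑ n ∈ Icc 1 (2 * u), omegaWeight Q n * Real.log n := by
    rw [mul_sum]
    calc _ ≤ ∑ n ∈ Ioc u (2 * u), omegaWeight Q n * Real.log n := by
          refine sum_le_sum fun n hn => ?_
          have hun : (u : ℝ) ≤ n := by exact_mod_cast (mem_Ioc.1 hn).1.le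
          have hn0 : (0 : ℝ) < n := hu0.trans_le hun
          have := (omegaWeight_pos Q n).le
          calc _ = omegaWeight Q n * (Real.log u * (u / n)) := by ring
            _ ≤ omegaWeight Q n * (Real.log n * 1) := by
                gcongr
                exact (div_le_one hn0).2 hun
            _ = _ := by rw [mul_one]
      _ ≤ _ := sum_le_sum_of_subset_of_nonneg
          (fun n hn => mem_Icc.2 ⟨by have := mem_Ioc.1 hn; lia, (mem_Ioc.1 hn).2⟩)
          fun n _ _ => mul_nonneg (omegaWeight_pos Q n).le (Real.log_natCast_nonneg n)
  have hbound := hle.trans (sum_omegaWeight_mul_log_le Q (2 * u))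
  rw [le_div_iff₀ hlog]
  refine le_of_mul_le_mul_left ?_ hu0
  push_cast at hbound
  linarith

theorem sum_omegaWeight_div_le (Q : Finset ℕ) {X B u : ℕ} (hu : 2 ≤ u) (hX : 2 ^ B * u ≤ X) :
    ∑ n ∈ Ioc u (2 ^ B * u), omegaWeight Q n / n ≤
      B * (12 * weightedHarmonic Q X / Real.log u) := by
  have hlog : 0 < Real.log u := Real.log_pos (by exact_mod_cast hu)
  induction B with
  | zero => simp
  | succ B ih =>
    set v := 2 ^ B * u
    have hv : 2 ^ (B + 1) * u = 2 * v := by rw [pow_succ']; exact mul_assoc _ _ _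
    rw [hv] at hX ⊢
    have huv : u ≤ v := Nat.le_mul_of_pos_left _ (by positivity)
    rw [← sum_Ioc_consecutive _ huv (by lia), Nat.cast_succ, add_one_mul]
    refine add_le_add (ih (by lia)) ((sum_omegaWeight_div_dyadic_le Q (hu.trans huv)).trans ?_)
    have := weightedHarmonic_nonneg Q X
    have := weightedHarmonic_mono Q hX
    gcongr

theorem sum_inv_sq_Ioc_le {r : ℕ} (hr : 0 < r) (V : ℕ) :
    ∑ e ∈ Ioc r V, (1 / (e : ℝ) ^ 2) ≤ 1 / (r : ℝ) := by
  simp only [one_div]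
  rcases le_total r V with h | h
  · exact (sum_Ioc_inv_sq_le_sub hr.ne' h).trans (sub_le_self _ (by positivity))
  · rw [Ioc_eq_empty (by lia), sum_empty]
    positivity

theorem abundancyIndex_nonneg (n : ℕ) : (0 : ℝ) ≤ n.abundancyIndex := by
  rw [abundancyIndex_eq_sum_one_div]
  positivity

theorem sum_abundancyIndex_div_filter_le (Q : Finset ℕ) (U V w : ℕ) :
    ∑ f ∈ Ioc U V with omegaOn Q f ≤ w, (f.abundancyIndex / f : ℝ) ≤
      2 ^ w * ∑ f ∈ Ioc U V, omegaWeight Q f * (f.abundancyIndex / f) := by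
  have hnonneg (f : ℕ) : (0 : ℝ) ≤ f.abundancyIndex / f :=
    div_nonneg (abundancyIndex_nonneg f) f.cast_nonneg
  rw [mul_sum, sum_filter]
  refine sum_le_sum fun f _ => ?_
  rw [← mul_assoc]
  split_ifs with hw
  · refine le_mul_of_one_le_left (hnonneg f) ?_
    calc (1 : ℝ) = 2 ^ w * (1 / 2) ^ w := by rw [← mul_pow]; norm_num
      _ ≤ 2 ^ w * omegaWeight Q f := by
          gcongr 2 ^ w * ?_
          exact pow_le_pow_of_le_one (by norm_num) (by norm_num) hw
  · exact mul_nonneg (mul_nonneg (by positivity) (omegaWeight_pos Q f).le) (hnonneg f)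

theorem sum_omegaWeight_mul_abundancyIndex_div_le (Q : Finset ℕ) (U V : ℕ) :
    ∑ f ∈ Ioc U V, omegaWeight Q f * (f.abundancyIndex / f : ℝ) ≤
      ∑ e ∈ Icc 1 V, 1 / (e : ℝ) ^ 2 * ∑ m ∈ Ioc (U / e) (V / e), omegaWeight Q m / m := by
  simp only [mul_sum]
  rw [← sum_Ioc_sum_divisorsAntidiagonal U V
    fun e m => 1 / (e : ℝ) ^ 2 * (omegaWeight Q m / m)]
  refine sum_le_sum fun f _ => ?_
  rw [abundancyIndex_eq_sum_one_div, sum_div, mul_sum, ← Nat.sum_divisorsAntidiagonal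
    (f := fun e _ => omegaWeight Q f * (1 / (e : ℝ) / f))]
  refine sum_le_sum fun ⟨e, m⟩ hp => ?_
  obtain ⟨rfl, -⟩ := Nat.mem_divisorsAntidiagonal.1 hp
  calc omegaWeight Q (e * m) * (1 / (e : ℝ) / (e * m : ℕ))
      ≤ omegaWeight Q m * (1 / (e : ℝ) / (e * m : ℕ)) := by
        gcongr
        exact omegaWeight_le_of_dvd Q (dvd_mul_left m e)
    _ = _ := by
        push_cast
        ring

theorem sum_omegaWeight_div_Ioc_div_le (Q : Finset ℕ) {U B X e : ℕ} (hU : 4 ≤ U) (he : 0 < e)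
    (heU : e ≤ U.sqrt) (hX : 2 ^ (B + 1) * U ≤ X) :
    ∑ m ∈ Ioc (U / e) (2 ^ B * U / e), omegaWeight Q m / m ≤
      12 * (B + 1) * weightedHarmonic Q X / Real.log U.sqrt := by
  have hr : 2 ≤ U.sqrt := Nat.le_sqrt.2 hU
  have hlog : 0 < Real.log U.sqrt := Real.log_pos (by exact_mod_cast hr)
  have hru : U.sqrt ≤ U / e := (Nat.le_div_iff_mul_le he).2
    ((Nat.mul_le_mul_left _ heU).trans (Nat.sqrt_le U))
  have hV : 2 ^ B * U / e ≤ 2 ^ (B + 1) * (U / e) := by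
    have hlt : U < (U / e + 1) * e := (Nat.div_lt_iff_lt_mul he).1 (Nat.lt_succ_self _)
    refine Nat.div_le_of_le_mul ?_
    calc 2 ^ B * U ≤ 2 ^ B * ((2 * (U / e)) * e) := by
          gcongr
          exact hlt.le.trans (Nat.mul_le_mul_right e (by lia))
      _ = e * (2 ^ (B + 1) * (U / e)) := by ring
  have hnonneg := weightedHarmonic_nonneg Q X
  calc ∑ m ∈ Ioc (U / e) (2 ^ B * U / e), omegaWeight Q m / m
      ≤ ∑ m ∈ Ioc (U / e) (2 ^ (B + 1) * (U / e)), omegaWeight Q m / m :=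
        sum_le_sum_of_subset_of_nonneg (Ioc_subset_Ioc_right hV)
          fun m _ _ => omegaWeight_div_nonneg Q m
    _ ≤ (B + 1 : ℕ) * (12 * weightedHarmonic Q X / Real.log (U / e : ℕ)) :=
        sum_omegaWeight_div_le Q (hr.trans hru)
          ((Nat.mul_le_mul_left _ (Nat.div_le_self U e)).trans hX)
    _ ≤ (B + 1 : ℕ) * (12 * weightedHarmonic Q X / Real.log U.sqrt) := by gcongr
    _ = _ := by
        push_cast
        ring

theorem sum_omegaWeight_div_Ioc_div_le_add (Q : Finset ℕ) {U B X e : ℕ} (hU : 4 ≤ U) (he : 0 < e)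
    (hX : 2 ^ (B + 1) * U ≤ X) :
    ∑ m ∈ Ioc (U / e) (2 ^ B * U / e), omegaWeight Q m / m ≤
      12 * (B + 1) * weightedHarmonic Q X / Real.log U.sqrt +
        if U.sqrt < e then weightedHarmonic Q X else 0 := by
  split_ifs with heU
  · have hnonneg := weightedHarmonic_nonneg Q X
    have hVX : 2 ^ B * U / e ≤ X := (Nat.div_le_self _ e).trans
      ((Nat.mul_le_mul_right U (Nat.pow_le_pow_right two_pos B.le_succ)).trans hX)
    refine le_add_of_nonneg_of_le (by positivity) (le_trans ?_ (weightedHarmonic_mono Q hVX))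
    exact sum_le_sum_of_subset_of_nonneg (Ioc_subset_Ioc_left (Nat.zero_le _))
      fun m _ _ => omegaWeight_div_nonneg Q m
  · rw [add_zero]
    exact sum_omegaWeight_div_Ioc_div_le Q hU he (not_lt.1 heU) hX

theorem sum_one_div_sq_filter_lt_le {r : ℕ} (hr : 2 ≤ r) (V : ℕ) :
    ∑ e ∈ Icc 1 V with r < e, 1 / (e : ℝ) ^ 2 ≤ 1 / Real.log r := by
  have hsub : {e ∈ Icc 1 V | r < e} ⊆ Ioc r V := fun e he => by
    rw [mem_filter, mem_Icc] at he
    exact mem_Ioc.2 ⟨he.2, he.1.2⟩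
  calc _ ≤ _ := sum_le_sum_of_subset_of_nonneg hsub fun _ _ _ => by positivity
    _ ≤ _ := sum_inv_sq_Ioc_le (by lia) V
    _ ≤ _ := one_div_le_one_div_of_le (Real.log_pos (by exact_mod_cast hr))
      (Real.log_le_self (Nat.cast_nonneg r))

theorem sum_abundancyIndex_div_le_of_omegaOn_le (Q : Finset ℕ) {U B w X : ℕ} (hU : 4 ≤ U)
    (hX : 2 ^ (B + 1) * U ≤ X) :
    ∑ f ∈ Ioc U (2 ^ B * U) with omegaOn Q f ≤ w, (f.abundancyIndex / f : ℝ) ≤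
      2 ^ w * (25 * (B + 1) * weightedHarmonic Q X / Real.log U.sqrt) := by
  refine (sum_abundancyIndex_div_filter_le Q U (2 ^ B * U) w).trans ?_
  gcongr 2 ^ w * ?_
  set V := 2 ^ B * U
  set r := U.sqrt
  set G := weightedHarmonic Q X
  set K := 12 * (B + 1) * G / Real.log r
  have hr : 2 ≤ r := Nat.le_sqrt.2 hU
  have hG : 0 ≤ G := weightedHarmonic_nonneg Q X
  have hK : 0 ≤ K := by positivity
  calc _ ≤ ∑ e ∈ Icc 1 V, 1 / (e : ℝ) ^ 2 * ∑ m ∈ Ioc (U / e) (V / e), omegaWeight Q m / m :=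
        sum_omegaWeight_mul_abundancyIndex_div_le Q U V
    _ ≤ ∑ e ∈ Icc 1 V, 1 / (e : ℝ) ^ 2 * (K + if r < e then G else 0) := by
        gcongr with e he
        exact sum_omegaWeight_div_Ioc_div_le_add Q hU (mem_Icc.1 he).1 hX
    _ = (∑ e ∈ Icc 1 V, 1 / (e : ℝ) ^ 2) * K +
          (∑ e ∈ Icc 1 V with r < e, 1 / (e : ℝ) ^ 2) * G := by
        simp_rw [mul_add, mul_ite, mul_zero]
        rw [sum_add_distrib, ← sum_mul, ← sum_filter, ← sum_mul]
    _ ≤ 2 * K + 1 / Real.log r * G :=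
        add_le_add (mul_le_mul_of_nonneg_right (sum_one_div_sq_le_two V) hK)
          (mul_le_mul_of_nonneg_right (sum_one_div_sq_filter_lt_le hr V) hG)
    _ ≤ 2 * K + (B + 1) * (1 / Real.log r * G) := by
        gcongr 2 * K + ?_
        exact le_mul_of_one_le_left (by positivity) (le_add_of_nonneg_left B.cast_nonneg)
    _ = _ := by ring

end Thin

/-! ### Primes of large order -/

section LargeOrderPrimes

/-- Conditions on a set `Q` of sifting primes and a width `B` under which almost no prime
`p ≈ 4 ^ j` has a shift `p ± 1` with a divisor in `[2 ^ (j - B), 2 ^ (j + B)]`. -/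
structure IsAdmissible (Q : Finset ℕ) (j B : ℕ) : Prop where
  hundred_le : 100 ≤ j
  width_le : 5 * B + 20 ≤ j
  prime : ∀ {q}, q ∈ Q → q.Prime
  lt_of_mem : ∀ {q}, q ∈ Q → 4 ^ 9 < q
  le_of_mem : ∀ {q}, q ∈ Q → q ≤ 4 ^ (j / 2000)
  le_sum : 2000 ≤ ∑ q ∈ Q, (1 / q : ℝ)
  mul_exp_le : (2 * B + 4) * Real.exp (-(0.05 * ∑ q ∈ Q, (1 / q : ℝ))) ≤ 1 / 10 ^ 8

variable {f : ℕ → ℕ} {Q : Finset ℕ} {j B : ℕ}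

theorem IsAdmissible.hundred_le_of_mem (hQ : IsAdmissible Q j B) {q : ℕ} (hq : q ∈ Q) :
    100 ≤ q := by
  have := hQ.lt_of_mem hq
  lia

theorem IsShift.mem_Icc_of_prime_mem_block (hf : IsShift f) {p : ℕ} (hp : p.Prime)
    (hpj : p ∈ block j) : 4 ^ j ≤ f p ∧ f p ≤ 4 ^ (j + 1) := by
  have hlt := (mem_block.1 hpj).1
  have hle := lt_of_prime_mem_block hp hpj
  rcases hf with rfl | rfl <;> constructor <;> lia

theorem IsShift.card_exists_dvd_le (hf : IsShift f) (hj : 20 ≤ j) {D : Finset ℕ}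
    (hD : ∀ d ∈ D, 0 < d ∧ d ^ 5 ≤ 4 ^ (3 * j)) :
    (#{p ∈ Ioc 0 (4 ^ (j + 1)) | p.Prime ∧ ∃ d ∈ D, d ∣ f p} : ℝ) ≤
      500 * (4 ^ j / j) * ∑ d ∈ D, (d.abundancyIndex / d : ℝ) := by
  have hsub : {p ∈ Ioc 0 (4 ^ (j + 1)) | p.Prime ∧ ∃ d ∈ D, d ∣ f p} ⊆
      D.biUnion fun d => {p ∈ Ioc 0 (4 ^ (j + 1)) | p.Prime ∧ d ∣ f p} := by
    intro p hp
    obtain ⟨hmem, hprime, d, hd, hdvd⟩ := mem_filter.1 hp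
    exact mem_biUnion.2 ⟨d, hd, mem_filter.2 ⟨hmem, hprime, hdvd⟩⟩
  calc (#{p ∈ Ioc 0 (4 ^ (j + 1)) | p.Prime ∧ ∃ d ∈ D, d ∣ f p} : ℝ)
      ≤ ∑ d ∈ D, (#{p ∈ Ioc 0 (4 ^ (j + 1)) | p.Prime ∧ d ∣ f p} : ℝ) := by
        exact_mod_cast (card_le_card hsub).trans card_biUnion_le
    _ ≤ ∑ d ∈ D, 500 * (4 ^ j / j) * (d.abundancyIndex / d : ℝ) :=
        sum_le_sum fun d hd => hf.card_prime_dvd_le hj (hD d hd).1 (hD d hd).2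
    _ = _ := (mul_sum _ _ _).symm

theorem abundancyIndex_prime_sq_le {q : ℕ} (hq : q.Prime) : ((q ^ 2).abundancyIndex : ℝ) ≤ 4 := by
  have hle : 1 + 1 / (q : ℝ) ≤ 2 := by
    have := one_div_le_one_div_of_le one_pos (Nat.one_le_cast (α := ℝ).2 hq.one_le)
    linarith
  calc ((q ^ 2).abundancyIndex : ℝ) ≤ q.abundancyIndex * q.abundancyIndex := by
        rw [sq]
        exact abundancyIndex_mul_le q q
    _ = (1 + 1 / (q : ℝ)) * (1 + 1 / q) := by rw [abundancyIndex_prime hq]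
    _ ≤ 2 * 2 := by gcongr
    _ = 4 := by norm_num

theorem IsShift.card_sq_dvd_le (hf : IsShift f) (hQ : IsAdmissible Q j B) :
    (#{p ∈ Ioc 0 (4 ^ (j + 1)) | p.Prime ∧ ∃ q ∈ Q, q ^ 2 ∣ f p} : ℝ) ≤
      1 / 100 * (4 ^ j / j) := by
  have hsmall : ∀ d ∈ Q.image (· ^ 2), 0 < d ∧ d ^ 5 ≤ 4 ^ (3 * j) := by
    simp only [forall_mem_image]
    refine fun q hq => ⟨pow_pos (hQ.prime hq).pos 2, ?_⟩
    calc (q ^ 2) ^ 5 ≤ ((4 ^ (j / 2000)) ^ 2) ^ 5 := by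
          gcongr
          exact hQ.le_of_mem hq
      _ = 4 ^ (j / 2000 * (2 * 5)) := by rw [← pow_mul, ← pow_mul]
      _ ≤ 4 ^ (3 * j) := Nat.pow_le_pow_right (by norm_num) (by lia)
  have hcount := hf.card_exists_dvd_le (by linarith [hQ.hundred_le]) hsmall
  simp only [exists_mem_image] at hcount
  refine hcount.trans ?_
  have hsum : ∑ q ∈ Q, (1 / (q : ℝ) ^ 2) ≤ 1 / ((4 ^ 9 : ℕ) : ℝ) :=
    (sum_le_sum_of_subset_of_nonneg
      (fun q hq => mem_Ioc.2 ⟨hQ.lt_of_mem hq, hQ.le_of_mem hq⟩)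
      fun _ _ _ => by positivity).trans (sum_inv_sq_Ioc_le (by norm_num) (4 ^ (j / 2000)))
  calc _ = 500 * (4 ^ j / j : ℝ) *
        ∑ q ∈ Q, ((q ^ 2).abundancyIndex / ((q ^ 2 : ℕ) : ℝ) : ℝ) := by
        rw [sum_image fun a _ b _ => Nat.pow_left_injective two_ne_zero |>.eq_iff.1]
    _ ≤ 500 * (4 ^ j / j : ℝ) * ∑ q ∈ Q, 4 * (1 / (q : ℝ) ^ 2) := by
        gcongr with q hq
        rw [mul_one_div, Nat.cast_pow]
        gcongr
        exact abundancyIndex_prime_sq_le (hQ.prime hq)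
    _ ≤ 500 * (4 ^ j / j : ℝ) * (4 * (1 / ((4 ^ 9 : ℕ) : ℝ))) := by
        rw [← mul_sum]
        gcongr
    _ = 2000 / 4 ^ 9 * (4 ^ j / j : ℝ) := by
        push_cast
        ring
    _ ≤ _ := mul_le_mul_of_nonneg_right (by norm_num) (by positivity)

theorem IsShift.card_le_omegaOn_le (hf : IsShift f) (hQ : IsAdmissible Q j B) {W : ℕ}
    (hW : 1.25 * ∑ q ∈ Q, (1 / q : ℝ) ≤ W) :
    (#{p ∈ Ioc 0 (4 ^ (j + 1)) | p.Prime ∧ W ≤ omegaOn Q (f p)} : ℝ) ≤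
      1 / 100 * (4 ^ j / j) := by
  have hE := hQ.le_sum
  have hmoment := hf.card_le_omegaOn_mul_pow_le (k := 100) (W := W)
    (by linarith [hQ.hundred_le]) (fun q hq => ⟨hQ.prime hq, hQ.le_of_mem hq⟩) (by lia)
  set E := ∑ q ∈ Q, (1 / q : ℝ)
  set F := #{p ∈ Ioc 0 (4 ^ (j + 1)) | p.Prime ∧ W ≤ omegaOn Q (f p)}
  have hsum : ∑ q ∈ Q, (1 + 1 / (q : ℝ)) / q ≤ 1.01 * E := by
    rw [mul_sum]
    refine sum_le_sum fun q hq => ?_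
    rw [div_eq_mul_one_div]
    have : 1 / (q : ℝ) ≤ 1 / 100 :=
      one_div_le_one_div_of_le (by norm_num) (by exact_mod_cast hQ.hundred_le_of_mem hq)
    gcongr
    linarith
  have hW' : 1.2 * E ≤ ((W + 1 - 100 : ℕ) : ℝ) := by
    have : 100 ≤ W := by exact_mod_cast (by linarith : (100 : ℝ) ≤ W)
    rw [Nat.cast_sub (by lia), Nat.cast_succ]
    push_cast
    linarith
  have hE0 : 0 < E ^ 100 := pow_pos (by linarith) 100
  refine le_of_mul_le_mul_right ?_ (mul_pos (by positivity : (0 : ℝ) < 1.2 ^ 100) hE0)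
  calc (F : ℝ) * (1.2 ^ 100 * E ^ 100) ≤ F * ((W + 1 - 100 : ℕ) : ℝ) ^ 100 := by
        rw [← mul_pow]
        gcongr
    _ ≤ _ := hmoment
    _ ≤ 500 * (4 ^ j / j) * (1.01 * E) ^ 100 := by gcongr
    _ = 500 * 1.01 ^ 100 * (4 ^ j / j * E ^ 100) := by ring
    _ ≤ 1 / 100 * 1.2 ^ 100 * (4 ^ j / j * E ^ 100) :=
        mul_le_mul_of_nonneg_right (by norm_num) (by positivity)
    _ = _ := by ring

theorem div_five_le_log_sqrt_two_pow {m : ℕ} (hm : 3 ≤ m) :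
    (m / 5 : ℝ) ≤ Real.log (Nat.sqrt (2 ^ m)) := by
  have hle : 2 ^ (m / 2) ≤ Nat.sqrt (2 ^ m) := by
    rw [Nat.le_sqrt, ← pow_add]
    exact Nat.pow_le_pow_right two_pos (by lia)
  have hlog : Real.log ((2 : ℝ) ^ (m / 2)) ≤ Real.log (Nat.sqrt (2 ^ m)) :=
    Real.log_le_log (by positivity) (by exact_mod_cast hle)
  rw [Real.log_pow] at hlog
  have hhalf : (m : ℝ) ≤ 2 * (m / 2 : ℕ) + 1 := by exact_mod_cast (by lia : m ≤ 2 * (m / 2) + 1)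
  have hm' : (3 : ℝ) ≤ m := by exact_mod_cast hm
  nlinarith [Real.log_two_gt_d9]

theorem IsAdmissible.weightedHarmonic_le (hQ : IsAdmissible Q j B) :
    weightedHarmonic Q (2 ^ (j + B + 3)) ≤
      6 * j * Real.exp (-(0.49 * ∑ q ∈ Q, (1 / q : ℝ))) := by
  have hj : (100 : ℝ) ≤ j := by exact_mod_cast hQ.hundred_le
  have hB : (5 : ℝ) * B + 20 ≤ j := by exact_mod_cast hQ.width_le
  have hx : Real.log ((2 ^ (j + B + 3) : ℕ) : ℝ) ≤ j := by
    rw [Nat.cast_pow, Real.log_pow]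
    push_cast
    nlinarith [Real.log_two_lt_d9]
  have hlog {q : ℕ} (hq : q ∈ Q) : Real.log q ≤ j / 100 := by
    have h4 := log_le_log_four_mul_of_le_pow (hQ.prime hq).pos (hQ.le_of_mem hq)
    rw [show (4 : ℝ) = 2 ^ 2 by norm_num, Real.log_pow] at h4
    have hJ : ((j / 2000 : ℕ) : ℝ) ≤ j / 2000 := Nat.cast_div_le
    push_cast at h4
    nlinarith [Real.log_two_lt_d9, Real.log_two_gt_d9]
  refine (LargeOrder.weightedHarmonic_le (by linarith) hx fun q hq =>
    ⟨hQ.prime hq, hQ.hundred_le_of_mem hq, hlog hq⟩).trans ?_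
  exact mul_le_mul_of_nonneg_right (by nlinarith [Real.exp_one_lt_d9]) (Real.exp_pos _).le

theorem IsAdmissible.sum_abundancyIndex_div_le (hQ : IsAdmissible Q j B) {w : ℕ}
    (hw : (w : ℝ) ≤ 0.625 * ∑ q ∈ Q, (1 / q : ℝ)) :
    ∑ g ∈ Ioc (2 ^ (j - B - 1)) (2 ^ (j + B + 2)) with omegaOn Q g ≤ w,
      (g.abundancyIndex / g : ℝ) ≤ 1 / 50000 := by
  have hj := hQ.hundred_le
  have hB := hQ.width_le
  have hthin := sum_abundancyIndex_div_le_of_omegaOn_le Q (U := 2 ^ (j - B - 1))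
    (B := 2 * B + 3) (w := w) (X := 2 ^ (j + B + 3))
    (show 2 ^ 2 ≤ 2 ^ (j - B - 1) from Nat.pow_le_pow_right two_pos (by lia))
    (by rw [← pow_add]; exact Nat.pow_le_pow_right two_pos (by lia))
  rw [← pow_add, show 2 * B + 3 + (j - B - 1) = j + B + 2 by lia] at hthin
  have hG := hQ.weightedHarmonic_le
  have hexp := hQ.mul_exp_le
  set E := ∑ q ∈ Q, (1 / q : ℝ)
  have hlog : (j : ℝ) / 8 ≤ Real.log (Nat.sqrt (2 ^ (j - B - 1))) := by
    refine le_trans ?_ (div_five_le_log_sqrt_two_pow (by lia))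
    have : (5 * j : ℝ) ≤ 8 * (j - B - 1 : ℕ) := by
      exact_mod_cast (by lia : 5 * j ≤ 8 * (j - B - 1))
    linarith
  have hpow : (2 : ℝ) ^ w ≤ Real.exp (0.44 * E) := by
    rw [← Real.exp_log (show (0 : ℝ) < 2 ^ w by positivity), Real.log_pow, Real.exp_le_exp]
    nlinarith [Real.log_two_lt_d9, Real.log_two_gt_d9, w.cast_nonneg (α := ℝ)]
  calc _ ≤ _ := hthin
    _ ≤ Real.exp (0.44 * E) *
          (25 * ((2 * B + 3 : ℕ) + 1) * (6 * j * Real.exp (-(0.49 * E))) / (j / 8)) := by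
        have := weightedHarmonic_nonneg Q (2 ^ (j + B + 3))
        gcongr
    _ = 1200 * ((2 * B + 4) * (Real.exp (0.44 * E) * Real.exp (-(0.49 * E)))) := by
        push_cast
        field_simp
        ring
    _ = 1200 * ((2 * B + 4) * Real.exp (-(0.05 * E))) := by
        rw [← Real.exp_add]
        ring_nf
    _ ≤ 1200 * (1 / 10 ^ 8) := by gcongr
    _ ≤ _ := by norm_num

theorem IsShift.card_exists_dvd_omegaOn_le (hf : IsShift f) (hQ : IsAdmissible Q j B) {w : ℕ}
    (hw : (w : ℝ) ≤ 0.625 * ∑ q ∈ Q, (1 / q : ℝ)) :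
    (#{p ∈ Ioc 0 (4 ^ (j + 1)) | p.Prime ∧
      ∃ g ∈ {g ∈ Ioc (2 ^ (j - B - 1)) (2 ^ (j + B + 2)) | omegaOn Q g ≤ w}, g ∣ f p} : ℝ) ≤
      1 / 100 * (4 ^ j / j) := by
  have hB := hQ.width_le
  refine (hf.card_exists_dvd_le (by lia) fun g hg => ?_).trans ?_
  · obtain ⟨hlt, hle⟩ := mem_Ioc.1 (mem_filter.1 hg).1
    refine ⟨(Nat.zero_le _).trans_lt hlt, ?_⟩
    calc g ^ 5 ≤ (2 ^ (j + B + 2)) ^ 5 := Nat.pow_le_pow_left hle 5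
      _ = 2 ^ ((j + B + 2) * 5) := (pow_mul _ _ _).symm
      _ ≤ 2 ^ (2 * (3 * j)) := Nat.pow_le_pow_right two_pos (by lia)
      _ = 4 ^ (3 * j) := pow_mul 2 2 _
  · calc _ ≤ 500 * (4 ^ j / j : ℝ) * (1 / 50000) := by
          gcongr
          exact hQ.sum_abundancyIndex_div_le hw
      _ = _ := by ring

theorem omegaOn_add_le {d e : ℕ} (h : ∀ q ∈ Q, ¬ q ^ 2 ∣ d * e) :
    omegaOn Q d + omegaOn Q e ≤ omegaOn Q (d * e) := by
  unfold omegaOn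
  have hdisj : Disjoint {q ∈ Q | q ∣ d} {q ∈ Q | q ∣ e} :=
    disjoint_filter.2 fun q hq hd he => h q hq (sq q ▸ mul_dvd_mul hd he)
  rw [← card_union_of_disjoint hdisj, ← filter_or]
  exact card_le_card (monotone_filter_right _ fun q _ hq =>
    hq.elim (Dvd.dvd.mul_right · e) (Dvd.dvd.mul_left · d))

theorem exists_dvd_omegaOn_le {n d W : ℕ} (hBj : B < j) (hn : 4 ^ j ≤ n ∧ n ≤ 4 ^ (j + 1))
    (hdn : d ∣ n) (hd : 2 ^ (j - B) < d ∧ d ≤ 2 ^ (j + B)) (hsq : ∀ q ∈ Q, ¬ q ^ 2 ∣ n)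
    (hW : omegaOn Q n < W) :
    ∃ g ∈ {g ∈ Ioc (2 ^ (j - B - 1)) (2 ^ (j + B + 2)) | omegaOn Q g ≤ (W - 1) / 2}, g ∣ n := by
  simp only [mem_filter, mem_Ioc]
  by_cases hwd : omegaOn Q d ≤ (W - 1) / 2
  · exact ⟨d, ⟨⟨(Nat.pow_le_pow_right two_pos (by lia)).trans_lt hd.1,
      hd.2.trans (Nat.pow_le_pow_right two_pos (by lia))⟩, hwd⟩, hdn⟩
  obtain ⟨e, rfl⟩ := hdn
  refine ⟨e, ⟨⟨?_, ?_⟩, ?_⟩, dvd_mul_left e d⟩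
  · by_contra! he
    refine (hn.1.trans (Nat.mul_le_mul hd.2 he)).not_gt ?_
    calc 2 ^ (j + B) * 2 ^ (j - B - 1) = 2 ^ (j + B + (j - B - 1)) := (pow_add _ _ _).symm
      _ < 2 ^ (2 * j) := Nat.pow_lt_pow_right one_lt_two (by lia)
      _ = 4 ^ j := pow_mul 2 2 j
  · by_contra! he
    refine hn.2.not_gt ?_
    calc 4 ^ (j + 1) = 2 ^ (2 * (j + 1)) := (pow_mul 2 2 _).symm
      _ = 2 ^ (j - B) * 2 ^ (j + B + 2) := by rw [← pow_add]; congr 1; lia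
      _ < d * e := Nat.mul_lt_mul_of_lt_of_lt hd.1 he
  · have := omegaOn_add_le hsq
    lia

theorem IsShift.card_medium_order_le (hf : IsShift f) (hQ : IsAdmissible Q j B) (o : ℕ → ℕ) :
    (#{p ∈ block j | p.Prime ∧ o p ∣ f p ∧ 2 ^ (j - B) < o p ∧ o p ≤ 2 ^ (j + B)} : ℝ) ≤
      3 / 100 * (4 ^ j / j) := by
  have hE := hQ.le_sum
  have hB := hQ.width_le
  set W := ⌈1.25 * ∑ q ∈ Q, (1 / q : ℝ)⌉₊
  have hW : 1.25 * ∑ q ∈ Q, (1 / q : ℝ) ≤ W := Nat.le_ceil _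
  have hw : (((W - 1) / 2 : ℕ) : ℝ) ≤ 0.625 * ∑ q ∈ Q, (1 / q : ℝ) := by
    have hceil : (W : ℝ) < 1.25 * ∑ q ∈ Q, (1 / q : ℝ) + 1 := Nat.ceil_lt_add_one (by linarith)
    have hW1 : 1 ≤ W := by exact_mod_cast (by linarith : (1 : ℝ) ≤ W)
    refine Nat.cast_div_le.trans ?_
    rw [Nat.cast_sub hW1]
    push_cast
    linarith
  have hsq := hf.card_sq_dvd_le hQ
  have hmany := hf.card_le_omegaOn_le hQ hW
  have hthin := hf.card_exists_dvd_omegaOn_le hQ hw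
  set I := Ioc 0 (4 ^ (j + 1))
  set D : Finset ℕ := {g ∈ Ioc (2 ^ (j - B - 1)) (2 ^ (j + B + 2)) | omegaOn Q g ≤ (W - 1) / 2}
  have hsub : {p ∈ block j | p.Prime ∧ o p ∣ f p ∧ 2 ^ (j - B) < o p ∧ o p ≤ 2 ^ (j + B)} ⊆
      {p ∈ I | p.Prime ∧ ∃ q ∈ Q, q ^ 2 ∣ f p} ∪ {p ∈ I | p.Prime ∧ W ≤ omegaOn Q (f p)} ∪
        {p ∈ I | p.Prime ∧ ∃ g ∈ D, g ∣ f p} := by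
    intro p hp
    obtain ⟨hmem, hprime, hdvd, ho⟩ := mem_filter.1 hp
    have hpI : p ∈ I := mem_Ioc.2 ⟨hprime.pos, (mem_block.1 hmem).2⟩
    simp only [mem_union, mem_filter, hpI, hprime, true_and, or_assoc]
    by_contra! h
    obtain ⟨g, hg, hgdvd⟩ := exists_dvd_omegaOn_le (by lia)
      (hf.mem_Icc_of_prime_mem_block hprime hmem) hdvd ho h.1 h.2.1
    exact h.2.2 g hg hgdvd
  have hcard := (card_le_card hsub).trans ((card_union_le _ _).trans
    (Nat.add_le_add_right (card_union_le _ _) _))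
  calc _ ≤ (_ : ℝ) := Nat.cast_le.2 hcard
    _ ≤ 1 / 100 * (4 ^ j / j) + 1 / 100 * (4 ^ j / j) + 1 / 100 * (4 ^ j / j) := by
        push_cast
        gcongr
    _ = _ := by ring

variable {o : ℕ → ℕ} {p₀ C : ℕ}

theorem IsOrderLike.card_small_order_le (ho : IsOrderLike o p₀ C) (hj : 0 < j) (hBj : B ≤ j)
    (hC : 40 * C * j ≤ 4 ^ B) :
    (#{p ∈ block j | p.Prime ∧ o p ≤ 2 ^ (j - B)} : ℝ) ≤ 1 / 40 * (4 ^ j / j) := by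
  set T : Finset ℕ := {p ∈ block j | p.Prime ∧ o p ≤ 2 ^ (j - B)}
  have hcard : 40 * #T * j ≤ 4 ^ j := by
    calc 40 * #T * j ≤ 40 * (C * (2 ^ (j - B)) ^ 2) * j := by
          gcongr
          exact ho.card_le fun p hp => (mem_filter.1 hp).2
      _ = 40 * C * j * 4 ^ (j - B) := by
          rw [← pow_mul, mul_comm (j - B) 2, pow_mul]
          ring
      _ ≤ 4 ^ B * 4 ^ (j - B) := by gcongr
      _ = 4 ^ j := by rw [← pow_add, Nat.add_sub_cancel' hBj]
  rw [← mul_div_assoc, le_div_iff₀ (by exact_mod_cast hj)]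
  have : (40 * #T * j : ℝ) ≤ 4 ^ j := by exact_mod_cast hcard
  linarith

theorem IsOrderLike.card_large_order_ge (ho : IsOrderLike o p₀ C) (hQ : IsAdmissible Q j B)
    (hp₀ : p₀ ≤ 4 ^ j) (hC : 40 * C * j ≤ 4 ^ B) :
    (1 / 4 : ℝ) * 4 ^ j / j ≤ #{p ∈ block j | p.Prime ∧ 2 ^ (j + B) < o p} := by
  have hB := hQ.width_le
  have hall := card_prime_block_ge (j := j) (by lia)
  have hsmall := ho.card_small_order_le (by lia) (by lia) hC
  have hpred := IsShift.card_medium_order_le (Or.inl rfl) hQ o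
  have hsucc := IsShift.card_medium_order_le (Or.inr rfl) hQ o
  set S : Finset ℕ := {p ∈ block j | p.Prime ∧ o p ≤ 2 ^ (j - B)}
  set M₁ : Finset ℕ :=
    {p ∈ block j | p.Prime ∧ o p ∣ p - 1 ∧ 2 ^ (j - B) < o p ∧ o p ≤ 2 ^ (j + B)}
  set M₂ : Finset ℕ :=
    {p ∈ block j | p.Prime ∧ o p ∣ p + 1 ∧ 2 ^ (j - B) < o p ∧ o p ≤ 2 ^ (j + B)}
  set L : Finset ℕ := {p ∈ block j | p.Prime ∧ 2 ^ (j + B) < o p}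
  have hsub : {p ∈ block j | p.Prime} ⊆ S ∪ M₁ ∪ M₂ ∪ L := by
    intro p hp
    obtain ⟨hmem, hprime⟩ := mem_filter.1 hp
    have hdvd := ho.dvd_pred_or_succ hprime (hp₀.trans_lt (mem_block.1 hmem).1)
    simp only [S, M₁, M₂, L, mem_union, mem_filter, hmem, hprime, true_and]
    have := le_or_gt (o p) (2 ^ (j - B))
    have := le_or_gt (o p) (2 ^ (j + B))
    tauto
  have hcard : (#{p ∈ block j | p.Prime} : ℝ) ≤ #S + #M₁ + #M₂ + #L := by
    exact_mod_cast (card_le_card hsub).trans <| (card_union_le _ _).trans <|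
      Nat.add_le_add_right ((card_union_le _ _).trans <|
        Nat.add_le_add_right (card_union_le _ _) _) _
  rw [mul_div_assoc] at hall ⊢
  have : (0 : ℝ) ≤ 4 ^ j / j := by positivity
  linarith

end LargeOrderPrimes

section ExistenceOfLargeOrders

open Filter

/-- The sifting primes applied to the primes of `block j`. -/
def siftingPrimes (j : ℕ) : Finset ℕ :=
  {q ∈ Ioc (4 ^ (j / 2000).sqrt) (4 ^ (j / 2000)) | q.Prime}

/-- The width of the window around `2 ^ j` that the orders of most primes in `block j` avoid; it is
chosen so that `2 ^ width j` exceeds `exp (j ^ (1 / 1000))`. -/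
noncomputable def width (j : ℕ) : ℕ := ⌈2 * (j : ℝ) ^ (1 / 1000 : ℝ)⌉₊ + 1

/-- Primes `p` for which `(o p) ^ 2` exceeds `p` by the factor `exp (2 * j ^ (1 / 1000))`,
where `4 ^ j ≤ p < 4 ^ (j + 1)`. -/
def HasLargeOrder (o : ℕ → ℕ) (p : ℕ) : Prop :=
  p.Prime ∧ Real.exp (2 * (Nat.log 4 p : ℝ) ^ (1 / 1000 : ℝ)) * p ≤ (o p : ℝ) ^ 2

variable {o : ℕ → ℕ} {p₀ C j : ℕ}

theorem width_le (j : ℕ) : (width j : ℝ) ≤ 2 * (j : ℝ) ^ (1 / 1000 : ℝ) + 2 := by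
  have := Nat.ceil_lt_add_one (show 0 ≤ 2 * (j : ℝ) ^ (1 / 1000 : ℝ) by positivity)
  rw [width]
  push_cast
  linarith

theorem two_mul_exp_le_two_pow_width (j : ℕ) :
    2 * Real.exp ((j : ℝ) ^ (1 / 1000 : ℝ)) ≤ 2 ^ width j := by
  have hceil := Nat.le_ceil (2 * (j : ℝ) ^ (1 / 1000 : ℝ))
  rw [width, pow_succ', ← Real.exp_log (show (0 : ℝ) < 2 ^ ⌈2 * (j : ℝ) ^ (1 / 1000 : ℝ)⌉₊ by
    positivity), Real.log_pow]
  gcongr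
  nlinarith [Real.log_two_gt_d9]

theorem tendsto_natCast_rpow_atTop {a : ℝ} (ha : 0 < a) :
    Tendsto (fun j : ℕ => (j : ℝ) ^ a) atTop atTop :=
  (tendsto_rpow_atTop ha).comp tendsto_natCast_atTop_atTop

theorem rpow_one_div_thousand_pow (j : ℕ) : ((j : ℝ) ^ (1 / 1000 : ℝ)) ^ 1000 = j := by
  rw [← Real.rpow_mul_natCast j.cast_nonneg]
  norm_num

theorem eventually_mul_le_four_pow_width (C : ℕ) : ∀ᶠ j in atTop, 40 * C * j ≤ 4 ^ width j := by
  have hpow := ((Real.isLittleO_pow_exp_atTop (n := 1000)).bound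
    (show (0 : ℝ) < 1 / (40 * C + 1) by positivity))
  filter_upwards [(tendsto_natCast_rpow_atTop (a := 1 / 1000) (by norm_num)).eventually hpow]
    with j hj
  rw [rpow_one_div_thousand_pow, Real.norm_natCast, Real.norm_of_nonneg (Real.exp_pos _).le,
    one_div_mul_eq_div, le_div_iff₀ (by positivity)] at hj
  have hexp := two_mul_exp_le_two_pow_width j
  have : (40 * C * j : ℝ) ≤ 4 ^ width j := by
    calc (40 * C * j : ℝ) ≤ j * (40 * C + 1) := by nlinarith [j.cast_nonneg (α := ℝ)]
      _ ≤ 2 ^ width j := by linarith [Real.exp_pos ((j : ℝ) ^ (1 / 1000 : ℝ))]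
      _ ≤ 4 ^ width j := by gcongr; norm_num
  exact_mod_cast this

theorem log_le_sum_siftingPrimes (hj : 162000 ≤ j) :
    1 / 16 * Real.log (j / 2000 : ℕ) ≤ ∑ q ∈ siftingPrimes j, (1 / q : ℝ) := by
  have hsqrt : 8 ≤ (j / 2000).sqrt := Nat.le_sqrt.2 (by lia)
  refine le_trans (le_of_eq ?_) (log_mul_le_sum_one_div_sqrt (c := 1 / 2) (by norm_num)
    (fun i hi => card_prime_block_ge (hsqrt.trans hi)) (by lia))
  norm_num

theorem width_mul_exp_le (hj : 162000 ≤ j) :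
    (2 * width j + 4) * Real.exp (-(0.05 * ∑ q ∈ siftingPrimes j, (1 / q : ℝ))) ≤
      12 * 4000 ^ (1 / 320 : ℝ) * (j : ℝ) ^ (-(17 / 8000) : ℝ) := by
  have hsum := log_le_sum_siftingPrimes hj
  have hj0 : (0 : ℝ) < j := by positivity
  have hfloor : (j : ℝ) / 4000 ≤ (j / 2000 : ℕ) := by
    rw [div_le_iff₀ (by norm_num)]
    exact_mod_cast (by lia : j ≤ j / 2000 * 4000)
  have hlog := Real.log_le_log (by positivity) hfloor
  have hone : 1 ≤ (j : ℝ) ^ (1 / 1000 : ℝ) :=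
    Real.one_le_rpow (by exact_mod_cast (by lia : 1 ≤ j)) (by norm_num)
  calc (2 * width j + 4) * Real.exp (-(0.05 * ∑ q ∈ siftingPrimes j, (1 / q : ℝ)))
      ≤ 12 * (j : ℝ) ^ (1 / 1000 : ℝ) * Real.exp (Real.log (j / 4000) * (-(1 / 320))) := by
        gcongr
        · linarith [width_le j]
        · linarith
    _ = 12 * (j : ℝ) ^ (1 / 1000 : ℝ) * (4000 ^ (1 / 320 : ℝ) * (j : ℝ) ^ (-(1 / 320) : ℝ)) := by
        rw [← Real.rpow_def_of_pos (by positivity), Real.div_rpow hj0.le (by norm_num),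
          Real.rpow_neg (by norm_num : (0 : ℝ) ≤ 4000), div_inv_eq_mul]
        ring
    _ = 12 * 4000 ^ (1 / 320 : ℝ) * ((j : ℝ) ^ (1 / 1000 : ℝ) * (j : ℝ) ^ (-(1 / 320) : ℝ)) := by
        ring
    _ = _ := by
        rw [← Real.rpow_add hj0]
        norm_num

theorem five_mul_width_add_le (hj : 40 ≤ (j : ℝ) ^ (1 / 1000 : ℝ)) : 5 * width j + 20 ≤ j := by
  have hsq : (j : ℝ) ^ (1 / 1000 : ℝ) * (j : ℝ) ^ (1 / 1000 : ℝ) ≤ j := by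
    rw [← sq]
    exact (pow_le_pow_right₀ (by linarith) (by norm_num)).trans_eq (rpow_one_div_thousand_pow j)
  have hwidth := width_le j
  have : (5 * width j + 20 : ℝ) ≤ j := by nlinarith
  exact_mod_cast this

theorem eventually_isAdmissible : ∀ᶠ j in atTop, IsAdmissible (siftingPrimes j) j (width j) := by
  have hlog : Tendsto (fun j : ℕ => Real.log (j / 2000 : ℕ)) atTop atTop :=
    Real.tendsto_log_atTop.comp (tendsto_natCast_atTop_atTop.comp
      (Nat.tendsto_div_const_atTop (by norm_num)))
  have hdecay : Tendsto (fun j : ℕ => 12 * 4000 ^ (1 / 320 : ℝ) * (j : ℝ) ^ (-(17 / 8000) : ℝ))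
      atTop (nhds 0) := by
    simpa using ((tendsto_rpow_neg_atTop (by norm_num)).comp
      tendsto_natCast_atTop_atTop).const_mul (12 * 4000 ^ (1 / 320 : ℝ) : ℝ)
  filter_upwards [eventually_ge_atTop 162000, hlog.eventually_ge_atTop 32000,
    hdecay.eventually_le_const (show (0 : ℝ) < 1 / 10 ^ 8 by norm_num),
    (tendsto_natCast_rpow_atTop (a := 1 / 1000) (by norm_num)).eventually_ge_atTop 40]
    with j hj hlogj hdecayj hpow
  have hsqrt : 9 ≤ (j / 2000).sqrt := Nat.le_sqrt.2 (by lia)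
  have hmem {q : ℕ} (hq : q ∈ siftingPrimes j) := mem_filter.1 hq
  exact {
    hundred_le := by lia
    width_le := five_mul_width_add_le hpow
    prime := fun hq => (hmem hq).2
    lt_of_mem := fun hq =>
      (Nat.pow_le_pow_right (by norm_num) hsqrt).trans_lt (mem_Ioc.1 (hmem hq).1).1
    le_of_mem := fun hq => (mem_Ioc.1 (hmem hq).1).2
    le_sum := by linarith [log_le_sum_siftingPrimes hj]
    mul_exp_le := (width_mul_exp_le hj).trans hdecayj }

theorem hasLargeOrder_of_lt {p : ℕ} (hp : p.Prime) (hpj : p ∈ block j)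
    (ho : 2 ^ (j + width j) < o p) : HasLargeOrder o p := by
  refine ⟨hp, ?_⟩
  have hlog : Nat.log 4 p = j :=
    Nat.log_eq_of_pow_le_of_lt_pow (mem_block.1 hpj).1.le (lt_of_prime_mem_block hp hpj)
  have hpR : (p : ℝ) ≤ 4 ^ (j + 1) := by exact_mod_cast (mem_block.1 hpj).2
  have hoR : (2 : ℝ) ^ (j + width j) ≤ o p := by exact_mod_cast ho.le
  rw [hlog]
  calc Real.exp (2 * (j : ℝ) ^ (1 / 1000 : ℝ)) * p
      ≤ Real.exp (2 * (j : ℝ) ^ (1 / 1000 : ℝ)) * 4 ^ (j + 1) := by gcongr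
    _ = (2 ^ j * (2 * Real.exp ((j : ℝ) ^ (1 / 1000 : ℝ)))) ^ 2 := by
        rw [← mul_assoc, ← pow_succ, mul_pow, ← Real.exp_nat_mul, ← pow_mul, mul_comm (j + 1),
          pow_mul]
        norm_num [mul_comm]
    _ ≤ (2 ^ j * 2 ^ width j) ^ 2 := by
        gcongr
        exact two_mul_exp_le_two_pow_width j
    _ ≤ (o p : ℝ) ^ 2 := by
        rw [← pow_add]
        gcongr

open scoped Classical in
theorem IsOrderLike.eventually_card_hasLargeOrder_ge (ho : IsOrderLike o p₀ C) :
    ∀ᶠ j in atTop, (1 / 4 : ℝ) * 4 ^ j / j ≤ #{p ∈ block j | HasLargeOrder o p} := by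
  filter_upwards [eventually_isAdmissible, eventually_mul_le_four_pow_width C,
    eventually_ge_atTop p₀] with j hQ hC hp₀
  refine (ho.card_large_order_ge hQ (hp₀.trans (Nat.lt_pow_self (by norm_num)).le) hC).trans ?_
  refine Nat.cast_le.2 (card_le_card fun p hp => ?_)
  obtain ⟨hmem, hprime, hlt⟩ := mem_filter.1 hp
  exact mem_filter.2 ⟨hmem, hasLargeOrder_of_lt hprime hmem hlt⟩

end ExistenceOfLargeOrders

/-! ### Exceptional integers -/

section ExceptionalIntegers

variable {o : ℕ → ℕ} {p₀ C x : ℕ}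

theorem card_filter_le_mul_sum_one_div {ι : Type*} {P : ℕ → Prop} [DecidablePred P]
    {I : Finset ι} {d : ι → ℕ} (h : ∀ N ∈ Ioc 0 x, P N → ∃ i ∈ I, d i ∣ N) :
    (#{N ∈ Ioc 0 x | P N} : ℝ) ≤ x * ∑ i ∈ I, (1 / d i : ℝ) := by
  have hsub : {N ∈ Ioc 0 x | P N} ⊆ I.biUnion fun i => {N ∈ Ioc 0 x | d i ∣ N} := fun N hN => by
    obtain ⟨hmem, hP⟩ := mem_filter.1 hN
    obtain ⟨i, hi, hdvd⟩ := h N hmem hP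
    exact mem_biUnion.2 ⟨i, hi, mem_filter.2 ⟨hmem, hdvd⟩⟩
  calc (#{N ∈ Ioc 0 x | P N} : ℝ) ≤ ∑ i ∈ I, (#{N ∈ Ioc 0 x | d i ∣ N} : ℝ) := by
        exact_mod_cast (card_le_card hsub).trans card_biUnion_le
    _ ≤ ∑ i ∈ I, (x * (1 / d i) : ℝ) := by
        refine sum_le_sum fun i _ => ?_
        rw [Nat.Ioc_filter_dvd_card_eq_div, mul_one_div]
        exact Nat.cast_div_le
    _ = x * ∑ i ∈ I, (1 / d i : ℝ) := by rw [mul_sum]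

theorem le_of_dvd_of_mem_Ioc {d N : ℕ} (hN : N ∈ Ioc 0 x) (h : d ∣ N) : d ≤ x :=
  (Nat.le_of_dvd (mem_Ioc.1 hN).1 h).trans (mem_Ioc.1 hN).2

open scoped Classical in
theorem card_exists_sq_dvd_le (x : ℕ) {M : ℕ} (hM : 0 < M) :
    (#{N ∈ Ioc 0 x | ∃ b, M < b ∧ b ^ 2 ∣ N} : ℝ) ≤ x / M := by
  calc (#{N ∈ Ioc 0 x | ∃ b, M < b ∧ b ^ 2 ∣ N} : ℝ)
      ≤ x * ∑ b ∈ Ioc M x, (1 / (b ^ 2 : ℕ) : ℝ) := by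
        refine card_filter_le_mul_sum_one_div fun N hN ⟨b, hb, hdvd⟩ => ⟨b, ?_, hdvd⟩
        exact mem_Ioc.2 ⟨hb, (Nat.le_self_pow two_ne_zero b).trans (le_of_dvd_of_mem_Ioc hN hdvd)⟩
    _ ≤ x * (1 / M : ℝ) := by
        push_cast
        exact mul_le_mul_of_nonneg_left (sum_inv_sq_Ioc_le hM x) x.cast_nonneg
    _ = x / M := mul_one_div _ _

theorem sum_one_div_le_one_add_log (x : ℕ) : ∑ n ∈ Ioc 0 x, (1 / n : ℝ) ≤ 1 + Real.log x := by
  have h := harmonic_le_one_add_log x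
  rw [harmonic_eq_sum_Icc, show Icc 1 x = Ioc 0 x from Icc_add_one_left_eq_Ioc 0 x] at h
  push_cast at h
  simpa only [one_div] using h

theorem card_le_card_divisors_le (x : ℕ) {T : ℕ} (hT : 0 < T) :
    (#{N ∈ Ioc 0 x | T ≤ #N.divisors} : ℝ) ≤ x * ((1 + Real.log x) / T) := by
  rw [← mul_div_assoc, le_div_iff₀ (by positivity)]
  have hmarkov : #{N ∈ Ioc 0 x | T ≤ #N.divisors} * T ≤ ∑ n ∈ Ioc 0 x, x / n := by
    rw [← ArithmeticFunction.sum_Ioc_sigma0_eq_sum_div, ← smul_eq_mul]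
    refine (card_nsmul_le_sum _ _ T fun N hN => (mem_filter.1 hN).2).trans ?_
    simp only [ArithmeticFunction.sigma_zero_apply]
    exact sum_le_sum_of_subset (filter_subset _ _)
  calc (#{N ∈ Ioc 0 x | T ≤ #N.divisors} : ℝ) * T
      ≤ ∑ n ∈ Ioc 0 x, ((x / n : ℕ) : ℝ) := by exact_mod_cast hmarkov
    _ ≤ ∑ n ∈ Ioc 0 x, (x * (1 / n) : ℝ) := by
        refine sum_le_sum fun n _ => ?_
        rw [mul_one_div]
        exact Nat.cast_div_le
    _ ≤ x * (1 + Real.log x) := by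
        rw [← mul_sum]
        exact mul_le_mul_of_nonneg_left (sum_one_div_le_one_add_log x) x.cast_nonneg

theorem IsOrderLike.sum_one_div_small_order_le (ho : IsOrderLike o p₀ C) {K : ℕ} (hK : 0 < K)
    (j : ℕ) : ∑ p ∈ Ico (4 ^ j) (4 ^ (j + 1)) with p.Prime ∧ K * o p ^ 2 ≤ p, (1 / p : ℝ) ≤
      4 * C / K := by
  set P : Finset ℕ := {p ∈ Ico (4 ^ j) (4 ^ (j + 1)) | p.Prime ∧ K * o p ^ 2 ≤ p}
  have hcard : (#P : ℝ) ≤ C * (4 ^ (j + 1) / K) := by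
    have h : #P ≤ C * (4 ^ (j + 1) / K).sqrt ^ 2 := by
      refine ho.card_le fun p hp => ?_
      obtain ⟨hmem, hprime, hle⟩ := mem_filter.1 hp
      refine ⟨hprime, Nat.le_sqrt'.2 ((Nat.le_div_iff_mul_le hK).2 ?_)⟩
      rw [mul_comm]
      exact hle.trans (mem_Ico.1 hmem).2.le
    calc (#P : ℝ) ≤ C * (4 ^ (j + 1) / K : ℕ) := by
          exact_mod_cast h.trans (Nat.mul_le_mul_left _ (Nat.sqrt_le' _))
      _ ≤ C * (4 ^ (j + 1) / K) := by
          refine mul_le_mul_of_nonneg_left ?_ C.cast_nonneg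
          exact_mod_cast Nat.cast_div_le (α := ℝ) (m := 4 ^ (j + 1)) (n := K)
  have hterm : ∀ p ∈ P, (1 / p : ℝ) ≤ 1 / 4 ^ j := fun p hp => by
    have : (4 : ℝ) ^ j ≤ p := by exact_mod_cast (mem_Ico.1 (mem_filter.1 hp).1).1
    gcongr
  calc ∑ p ∈ P, (1 / p : ℝ) ≤ #P * (1 / 4 ^ j) := by
        simpa only [nsmul_eq_mul] using sum_le_card_nsmul P _ _ hterm
    _ ≤ C * (4 ^ (j + 1) / K) * (1 / 4 ^ j) := by gcongr
    _ = 4 * C / K := by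
        field_simp
        ring

open scoped Classical in
theorem IsOrderLike.card_exists_small_order_le (ho : IsOrderLike o p₀ C) {K l : ℕ} (hK : 0 < K)
    (hx : x < 4 ^ (l + 1)) :
    (#{N ∈ Ioc 0 x | ∃ p, p.Prime ∧ p ∣ N ∧ K * o p ^ 2 ≤ p} : ℝ) ≤
      x * ((l + 1) * (4 * C / K)) := by
  set P : ℕ → Finset ℕ := fun j => {p ∈ Ico (4 ^ j) (4 ^ (j + 1)) | p.Prime ∧ K * o p ^ 2 ≤ p}
  calc (#{N ∈ Ioc 0 x | ∃ p, p.Prime ∧ p ∣ N ∧ K * o p ^ 2 ≤ p} : ℝ)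
      ≤ x * ∑ i ∈ (range (l + 1)).sigma P, (1 / i.2 : ℝ) := by
        refine card_filter_le_mul_sum_one_div fun N hN ⟨p, hp, hdvd, hle⟩ => ⟨⟨Nat.log 4 p, p⟩,
          mem_sigma.2 ⟨mem_range.2 ?_, mem_filter.2 ⟨mem_Ico.2 ⟨?_, ?_⟩, hp, hle⟩⟩, hdvd⟩
        · exact Nat.log_lt_of_lt_pow hp.ne_zero ((le_of_dvd_of_mem_Ioc hN hdvd).trans_lt hx)
        · exact Nat.pow_log_le_self 4 hp.ne_zero
        · exact Nat.lt_pow_succ_log_self (by norm_num) p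
    _ ≤ x * ∑ j ∈ range (l + 1), (4 * C / K : ℝ) := by
        rw [sum_sigma]
        gcongr with j
        exact ho.sum_one_div_small_order_le hK j
    _ = x * ((l + 1) * (4 * C / K)) := by
        rw [sum_const, nsmul_eq_mul, card_range]
        push_cast
        rfl

theorem sum_one_div_dvd_pred_le (x : ℕ) {m : ℕ} (hm : 0 < m) :
    ∑ p ∈ Icc 2 x with m ∣ p - 1, (1 / p : ℝ) ≤ 1 / m * (1 + Real.log x) := by
  have hsub : {p ∈ Icc 2 x | m ∣ p - 1} ⊆ (Ioc 0 x).image (fun k => k * m + 1) := by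
    intro p hp
    obtain ⟨hmem, k, hk⟩ := mem_filter.1 hp
    obtain ⟨hp2, hpx⟩ := mem_Icc.1 hmem
    have hk0 : 0 < k := Nat.pos_of_ne_zero fun h => by simp [h] at hk; lia
    exact mem_image.2 ⟨k, mem_Ioc.2 ⟨hk0, by nlinarith [Nat.sub_le p 1]⟩, by
      rw [mul_comm, ← hk]; lia⟩
  calc ∑ p ∈ Icc 2 x with m ∣ p - 1, (1 / p : ℝ)
      ≤ ∑ p ∈ (Ioc 0 x).image (fun k => k * m + 1), (1 / p : ℝ) :=
        sum_le_sum_of_subset_of_nonneg hsub fun _ _ _ => by positivity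
    _ = ∑ k ∈ Ioc 0 x, (1 / (k * m + 1 : ℕ) : ℝ) := by
        refine sum_image fun a _ b _ hab => Nat.eq_of_mul_eq_mul_right hm ?_
        simpa using hab
    _ ≤ ∑ k ∈ Ioc 0 x, (1 / m * (1 / k) : ℝ) := by
        refine sum_le_sum fun k hk => ?_
        have hk0 : (0 : ℝ) < k := by exact_mod_cast (mem_Ioc.1 hk).1
        rw [one_div_mul_one_div]
        push_cast
        exact one_div_le_one_div_of_le (by positivity) (by linarith)
    _ ≤ 1 / m * (1 + Real.log x) := by
        rw [← mul_sum]
        gcongr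
        exact sum_one_div_le_one_add_log x

theorem sum_one_div_dvd_succ_le (x : ℕ) {m : ℕ} (hm : 2 ≤ m) :
    ∑ p ∈ Icc 2 x with m ∣ p + 1, (1 / p : ℝ) ≤ 2 / m * (1 + Real.log x) := by
  have hsub : {p ∈ Icc 2 x | m ∣ p + 1} ⊆ (Ioc 0 x).image (fun k => k * m - 1) := by
    intro p hp
    obtain ⟨hmem, k, hk⟩ := mem_filter.1 hp
    obtain ⟨hp2, hpx⟩ := mem_Icc.1 hmem
    have hk0 : 0 < k := Nat.pos_of_ne_zero fun h => by simp [h] at hk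
    exact mem_image.2 ⟨k, mem_Ioc.2 ⟨hk0, by nlinarith⟩, by rw [mul_comm, ← hk]; lia⟩
  have hpos {k : ℕ} (hk : k ∈ Ioc 0 x) : 2 ≤ k * m :=
    hm.trans (Nat.le_mul_of_pos_left m (mem_Ioc.1 hk).1)
  calc ∑ p ∈ Icc 2 x with m ∣ p + 1, (1 / p : ℝ)
      ≤ ∑ p ∈ (Ioc 0 x).image (fun k => k * m - 1), (1 / p : ℝ) :=
        sum_le_sum_of_subset_of_nonneg hsub fun _ _ _ => by positivity
    _ = ∑ k ∈ Ioc 0 x, (1 / (k * m - 1 : ℕ) : ℝ) := by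
        refine sum_image fun a ha b hb hab => Nat.eq_of_mul_eq_mul_right (by lia : 0 < m) ?_
        have := hpos ha
        have := hpos hb
        have : a * m - 1 = b * m - 1 := hab
        lia
    _ ≤ ∑ k ∈ Ioc 0 x, (2 / m * (1 / k) : ℝ) := by
        refine sum_le_sum fun k hk => ?_
        have hkm : (2 : ℝ) ≤ k * m := by exact_mod_cast hpos hk
        rw [Nat.cast_sub (one_le_two.trans (hpos hk)), div_mul_div_comm, mul_one,
          div_le_div_iff₀ (by push_cast; linarith) (by linarith)]
        push_cast
        linarith
    _ ≤ 2 / m * (1 + Real.log x) := by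
        rw [← mul_sum]
        gcongr
        exact sum_one_div_le_one_add_log x

theorem sum_one_div_dvd_pred_or_succ_le (x : ℕ) {m : ℕ} (hm : 2 ≤ m) :
    ∑ p ∈ Icc 2 x with m ∣ p - 1 ∨ m ∣ p + 1, (1 / p : ℝ) ≤ 3 * (1 + Real.log x) / m := by
  calc ∑ p ∈ Icc 2 x with m ∣ p - 1 ∨ m ∣ p + 1, (1 / p : ℝ)
      ≤ ∑ p ∈ Icc 2 x with m ∣ p - 1, (1 / p : ℝ) + ∑ p ∈ Icc 2 x with m ∣ p + 1, (1 / p : ℝ) := by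
        rw [filter_or, ← sum_union_inter]
        exact le_add_of_nonneg_right (sum_nonneg fun _ _ => by positivity)
    _ ≤ 1 / m * (1 + Real.log x) + 2 / m * (1 + Real.log x) :=
        add_le_add (sum_one_div_dvd_pred_le x (by lia)) (sum_one_div_dvd_succ_le x hm)
    _ = 3 * (1 + Real.log x) / m := by ring

theorem IsOrderLike.le_succ_of_prime (ho : IsOrderLike o p₀ C) {p : ℕ} (hp : p.Prime)
    (hp₀ : p₀ < p) : o p ≤ p + 1 := by
  have := hp.two_le
  rcases ho.dvd_pred_or_succ hp hp₀ with h | h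
  · exact (Nat.le_of_dvd (by lia) h).trans (by lia)
  · exact Nat.le_of_dvd (by lia) h

open scoped Classical in
theorem IsOrderLike.card_exists_gcd_lt_le (ho : IsOrderLike o p₀ C) (x : ℕ) {M : ℕ} (hM : 0 < M) :
    (#{N ∈ Ioc 0 x | ∃ p q, p.Prime ∧ q.Prime ∧ p ≠ q ∧ p₀ < p ∧ p₀ < q ∧ p ∣ N ∧ q ∣ N ∧
      M < (o p).gcd (o q)} : ℝ) ≤ x * (9 * (1 + Real.log x) ^ 2 / M) := by
  set P : ℕ → Finset ℕ := fun m => {p ∈ Icc 2 x | m ∣ p - 1 ∨ m ∣ p + 1}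
  set I := (Ioc M (x + 1)).sigma fun m => P m ×ˢ P m with hI
  have hcover : ∀ N ∈ Ioc 0 x, (∃ p q, p.Prime ∧ q.Prime ∧ p ≠ q ∧ p₀ < p ∧ p₀ < q ∧ p ∣ N ∧
      q ∣ N ∧ M < (o p).gcd (o q)) → ∃ i ∈ I, i.2.1 * i.2.2 ∣ N := by
    rintro N hN ⟨p, q, hp, hq, hne, hp₀, hq₀, hpN, hqN, hgcd⟩
    have hpx := le_of_dvd_of_mem_Ioc hN hpN
    have hop := ho.dvd_pred_or_succ hp hp₀
    have hoq := ho.dvd_pred_or_succ hq hq₀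
    refine ⟨⟨(o p).gcd (o q), p, q⟩, mem_sigma.2 ⟨mem_Ioc.2 ⟨hgcd, ?_⟩,
      mem_product.2 ⟨mem_filter.2 ⟨mem_Icc.2 ⟨hp.two_le, hpx⟩, ?_⟩,
        mem_filter.2 ⟨mem_Icc.2 ⟨hq.two_le, le_of_dvd_of_mem_Ioc hN hqN⟩, ?_⟩⟩⟩, ?_⟩
    · exact (Nat.gcd_le_left _ (ho.pos hp.pos)).trans ((ho.le_succ_of_prime hp hp₀).trans (by lia))
    · exact hop.imp (Nat.gcd_dvd_left _ _).trans (Nat.gcd_dvd_left _ _).trans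
    · exact hoq.imp (Nat.gcd_dvd_right _ _).trans (Nat.gcd_dvd_right _ _).trans
    · exact ((Nat.coprime_primes hp hq).2 hne).mul_dvd_of_dvd_of_dvd hpN hqN
  have hpair : ∀ m ∈ Ioc M (x + 1), ∑ i ∈ P m ×ˢ P m, (1 / (i.1 * i.2 : ℕ) : ℝ) ≤
      9 * (1 + Real.log x) ^ 2 * (1 / (m : ℝ) ^ 2) := fun m hm => by
    have hm2 : 2 ≤ m := by have := (mem_Ioc.1 hm).1; lia
    calc ∑ i ∈ P m ×ˢ P m, (1 / (i.1 * i.2 : ℕ) : ℝ) = (∑ p ∈ P m, (1 / p : ℝ)) ^ 2 := by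
          rw [sq, sum_mul_sum, sum_product]
          simp only [Nat.cast_mul, one_div_mul_one_div]
      _ ≤ (3 * (1 + Real.log x) / m) ^ 2 :=
          pow_le_pow_left₀ (sum_nonneg fun _ _ => by positivity)
            (sum_one_div_dvd_pred_or_succ_le x hm2) 2
      _ = 9 * (1 + Real.log x) ^ 2 * (1 / (m : ℝ) ^ 2) := by ring
  refine (card_filter_le_mul_sum_one_div hcover).trans ?_
  refine mul_le_mul_of_nonneg_left ?_ x.cast_nonneg
  calc ∑ i ∈ I, (1 / (i.2.1 * i.2.2 : ℕ) : ℝ)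
      ≤ 9 * (1 + Real.log x) ^ 2 * ∑ m ∈ Ioc M (x + 1), (1 / (m : ℝ) ^ 2) := by
        rw [hI, sum_sigma, mul_sum]
        exact sum_le_sum hpair
    _ ≤ 9 * (1 + Real.log x) ^ 2 * (1 / M) := by
        gcongr
        exact sum_inv_sq_Ioc_le hM _
    _ = 9 * (1 + Real.log x) ^ 2 / M := mul_one_div _ _

/-! ### Turán's variance bound -/

theorem sum_omegaOn_ge {G : Finset ℕ} (hG : G ⊆ Ioc 0 x) :
    x * ∑ p ∈ G, (1 / p : ℝ) - x ≤ ∑ N ∈ Ioc 0 x, (omegaOn G N : ℝ) := by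
  have hcard : (#G : ℝ) ≤ x := by simpa using card_le_card hG
  have hswap : ∑ N ∈ Ioc 0 x, omegaOn G N = ∑ p ∈ G, x / p := by
    simp only [omegaOn, ← Nat.Ioc_filter_dvd_card_eq_div]
    exact sum_card_bipartiteAbove_eq_sum_card_bipartiteBelow _
  calc x * ∑ p ∈ G, (1 / p : ℝ) - x ≤ ∑ p ∈ G, ((x : ℝ) / p - 1) := by
        rw [sum_sub_distrib, mul_sum]
        simp only [mul_one_div, sum_const, nsmul_eq_mul, mul_one]
        linarith
    _ ≤ ∑ p ∈ G, ((x / p : ℕ) : ℝ) := by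
        refine sum_le_sum fun p _ => ?_
        rw [← Nat.floor_div_eq_div (K := ℝ)]
        linarith [Nat.lt_floor_add_one ((x : ℝ) / p)]
    _ = ∑ N ∈ Ioc 0 x, (omegaOn G N : ℝ) := by exact_mod_cast hswap.symm

theorem sum_omegaOn_sq_le {G : Finset ℕ} (hG : ∀ p ∈ G, p.Prime) (x : ℕ) :
    ∑ N ∈ Ioc 0 x, (omegaOn G N : ℝ) ^ 2 ≤
      x * (∑ p ∈ G, (1 / p : ℝ)) ^ 2 + x * ∑ p ∈ G, (1 / p : ℝ) := by
  have hswap : ∑ N ∈ Ioc 0 x, omegaOn G N ^ 2 =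
      ∑ i ∈ G ×ˢ G, #{N ∈ Ioc 0 x | i.1 ∣ N ∧ i.2 ∣ N} := by
    have hsq (N : ℕ) : omegaOn G N ^ 2 = #{i ∈ G ×ˢ G | i.1 ∣ N ∧ i.2 ∣ N} := by
      rw [sq, omegaOn, ← card_product, ← filter_product (· ∣ N) (· ∣ N)]
    simp only [hsq]
    exact sum_card_bipartiteAbove_eq_sum_card_bipartiteBelow fun N (i : ℕ × ℕ) => i.1 ∣ N ∧ i.2 ∣ N
  have hpair : ∀ i ∈ G ×ˢ G, (#{N ∈ Ioc 0 x | i.1 ∣ N ∧ i.2 ∣ N} : ℝ) ≤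
      x * (1 / i.1 * (1 / i.2)) + if i.1 = i.2 then x * (1 / i.1 : ℝ) else 0 := by
    rintro ⟨p, q⟩ hi
    obtain ⟨hp, hq⟩ := mem_product.1 hi
    rcases eq_or_ne p q with rfl | hne
    · simp only [and_self, Nat.Ioc_filter_dvd_card_eq_div, if_true, mul_one_div (x : ℝ)]
      exact le_add_of_nonneg_of_le (by positivity) Nat.cast_div_le
    · have hiff (N : ℕ) : (p ∣ N ∧ q ∣ N) ↔ p * q ∣ N :=
        ⟨fun h => ((Nat.coprime_primes (hG p hp) (hG q hq)).2 hne).mul_dvd_of_dvd_of_dvd h.1 h.2,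
          fun h => ⟨dvd_of_mul_right_dvd h, dvd_of_mul_left_dvd h⟩⟩
      simp only [hiff, Nat.Ioc_filter_dvd_card_eq_div, if_neg hne, add_zero]
      rw [one_div_mul_one_div, mul_one_div]
      exact_mod_cast Nat.cast_div_le (α := ℝ) (m := x) (n := p * q)
  calc ∑ N ∈ Ioc 0 x, (omegaOn G N : ℝ) ^ 2
      = ∑ i ∈ G ×ˢ G, (#{N ∈ Ioc 0 x | i.1 ∣ N ∧ i.2 ∣ N} : ℝ) := by exact_mod_cast hswap
    _ ≤ ∑ i ∈ G ×ˢ G,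
        (x * (1 / i.1 * (1 / i.2)) + if i.1 = i.2 then x * (1 / i.1 : ℝ) else 0) :=
        sum_le_sum hpair
    _ = x * (∑ p ∈ G, (1 / p : ℝ)) ^ 2 + x * ∑ p ∈ G, (1 / p : ℝ) := by
        rw [sum_add_distrib, ← mul_sum, sq, sum_mul_sum, sum_product, sum_product, mul_sum]
        simp only [sum_ite_eq, sum_ite_mem, inter_self, mul_sum]

theorem sum_omegaOn_sub_sq_le {G : Finset ℕ} (hG : ∀ p ∈ G, p.Prime ∧ p ≤ x) :
    ∑ N ∈ Ioc 0 x, ((omegaOn G N : ℝ) - ∑ p ∈ G, (1 / p : ℝ)) ^ 2 ≤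
      x * (3 * ∑ p ∈ G, (1 / p : ℝ)) := by
  set E := ∑ p ∈ G, (1 / p : ℝ) with hE
  have hE0 : 0 ≤ E := sum_nonneg fun _ _ => by positivity
  have hfirst := sum_omegaOn_ge (x := x) fun p hp => mem_Ioc.2 ⟨(hG p hp).1.pos, (hG p hp).2⟩
  have hsecond := sum_omegaOn_sq_le (fun p hp => (hG p hp).1) x
  rw [← hE] at hfirst hsecond
  calc ∑ N ∈ Ioc 0 x, ((omegaOn G N : ℝ) - E) ^ 2
      = ∑ N ∈ Ioc 0 x, (omegaOn G N : ℝ) ^ 2 - 2 * E * ∑ N ∈ Ioc 0 x, (omegaOn G N : ℝ)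
        + x * E ^ 2 := by
        simp only [sub_sq', sum_sub_distrib, sum_add_distrib, sum_const, Nat.card_Ioc, tsub_zero,
          nsmul_eq_mul, mul_assoc, mul_left_comm _ E, mul_sum]
        ring_nf
    _ ≤ x * (3 * E) := by nlinarith

theorem card_forall_not_dvd_le {G : Finset ℕ} (hG : ∀ p ∈ G, p.Prime ∧ p ≤ x)
    (hE : 0 < ∑ p ∈ G, (1 / p : ℝ)) :
    (#{N ∈ Ioc 0 x | ∀ p ∈ G, ¬ p ∣ N} : ℝ) ≤ x * (3 / ∑ p ∈ G, (1 / p : ℝ)) := by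
  set E := ∑ p ∈ G, (1 / p : ℝ)
  have hchebyshev : #{N ∈ Ioc 0 x | ∀ p ∈ G, ¬ p ∣ N} * E ^ 2 ≤ x * (3 * E) := by
    rw [← nsmul_eq_mul]
    refine (card_nsmul_le_sum _ (fun N => ((omegaOn G N : ℝ) - E) ^ 2) _ fun N hN => ?_).trans
      ((sum_le_sum_of_subset_of_nonneg (filter_subset _ _) fun _ _ _ => sq_nonneg _).trans
        (sum_omegaOn_sub_sq_le hG))
    have hzero : omegaOn G N = 0 := card_eq_zero.2 (filter_eq_empty_iff.2 (mem_filter.1 hN).2)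
    rw [hzero]
    simp
  rw [← mul_div_assoc, le_div_iff₀ hE]
  nlinarith

end ExceptionalIntegers

/-! ### Typical integers -/

section TypicalIntegers

open Filter

variable {o : ℕ → ℕ} {p₀ C l N : ℕ}

theorem gcd_prod_le_pow_card {ι : Type*} {f : ι → ℕ} {a M : ℕ} (ha : 0 < a) {s : Finset ι}
    (h : ∀ i ∈ s, a.gcd (f i) ≤ M) : a.gcd (∏ i ∈ s, f i) ≤ M ^ #s := by
  classical
  induction s using Finset.induction_on with
  | empty => simp
  | insert i s hi ih =>
    obtain ⟨hhead, htail⟩ := (forall_mem_insert ..).1 h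
    rw [prod_insert hi, card_insert_of_notMem hi, pow_succ']
    exact (Nat.le_of_dvd (Nat.mul_pos (Nat.gcd_pos_of_pos_left _ ha)
      (Nat.gcd_pos_of_pos_left _ ha)) (Nat.gcd_mul_right_dvd_mul_gcd a _ _)).trans
        (Nat.mul_le_mul hhead (ih htail))

theorem prod_le_lcm_mul_pow {ι : Type*} {f : ι → ℕ} {M : ℕ} (hM : 0 < M) {s : Finset ι}
    (hpos : ∀ i ∈ s, 0 < f i) (h : (s : Set ι).Pairwise fun i j => (f i).gcd (f j) ≤ M) :
    ∏ i ∈ s, f i ≤ s.lcm f * M ^ #s ^ 2 := by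
  classical
  induction s using Finset.induction_on with
  | empty => simp
  | insert i s hi ih =>
    obtain ⟨hfi, hfs⟩ := (forall_mem_insert ..).1 hpos
    have ih := ih hfs (h.mono (by simp))
    have hgcd : (f i).gcd (s.lcm f) ≤ M ^ #s := by
      refine le_trans (Nat.le_of_dvd (Nat.gcd_pos_of_pos_left _ hfi)
        (Nat.gcd_dvd_gcd_of_dvd_right _ (Finset.lcm_dvd fun j hj => dvd_prod_of_mem f hj)))
        (gcd_prod_le_pow_card hfi fun j hj => h (by simp) (by simp [hj]) ?_)
      rintro rfl
      exact hi hj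
    rw [prod_insert hi, card_insert_of_notMem hi, lcm_insert]
    calc f i * ∏ j ∈ s, f j ≤ f i * (s.lcm f * M ^ #s ^ 2) := Nat.mul_le_mul_left _ ih
      _ = (f i).gcd (s.lcm f) * (f i).lcm (s.lcm f) * M ^ #s ^ 2 := by
          rw [Nat.gcd_mul_lcm, mul_assoc]
      _ ≤ M ^ #s * (f i).lcm (s.lcm f) * M ^ #s ^ 2 := by gcongr
      _ = (f i).lcm (s.lcm f) * M ^ (#s + #s ^ 2) := by
          rw [pow_add]
          ring
      _ ≤ (f i).lcm (s.lcm f) * M ^ (#s + 1) ^ 2 :=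
          Nat.mul_le_mul_left _ (Nat.pow_le_pow_right hM (by nlinarith))

theorem exists_sq_dvd_le_sq_mul_prod_primeFactors (hN : N ≠ 0) :
    ∃ b, b ^ 2 ∣ N ∧ N ≤ b ^ 2 * ∏ p ∈ N.primeFactors, p := by
  obtain ⟨a, b, hab, ha⟩ := Nat.sq_mul_squarefree N
  refine ⟨b, ⟨a, hab.symm⟩, ?_⟩
  have hle : a ≤ ∏ p ∈ N.primeFactors, p := by
    rw [← Nat.prod_primeFactors_of_squarefree ha]
    exact prod_le_prod_of_subset_of_one_le'
      (Nat.primeFactors_mono ⟨b ^ 2, by rw [mul_comm, hab]⟩ hN)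
      fun p hp _ => (Nat.prime_of_mem_primeFactors hp).one_le
  exact hab.symm.le.trans (Nat.mul_le_mul_left _ hle)

theorem two_pow_card_primeFactors_le (hN : N ≠ 0) : 2 ^ #N.primeFactors ≤ #N.divisors := by
  rw [Nat.card_divisors hN, ← prod_const]
  refine prod_le_prod' fun p hp => ?_
  have := (Nat.prime_of_mem_primeFactors hp).factorization_pos_of_dvd hN
    (Nat.dvd_of_mem_primeFactors hp)
  lia

/-- The prime factors of `N` to which the divisibility `o p ∣ p ± 1` applies. -/
def primeFactorsAbove (p₀ N : ℕ) : Finset ℕ := {p ∈ N.primeFactors | p₀ < p}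

theorem mem_primeFactorsAbove (hN : N ≠ 0) {p : ℕ} :
    p ∈ primeFactorsAbove p₀ N ↔ p.Prime ∧ p ∣ N ∧ p₀ < p := by
  simp [primeFactorsAbove, hN, and_assoc]

theorem card_primeFactorsAbove_le (p₀ N : ℕ) : #(primeFactorsAbove p₀ N) ≤ #N.primeFactors :=
  card_filter_le _ _

theorem prod_primeFactors_le (p₀ N : ℕ) :
    ∏ p ∈ N.primeFactors, p ≤ (p₀ + 1) ^ #N.primeFactors * ∏ p ∈ primeFactorsAbove p₀ N, p := by
  rw [primeFactorsAbove, ← prod_filter_not_mul_prod_filter N.primeFactors (p₀ < ·)]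
  refine Nat.mul_le_mul_right _ ?_
  calc ∏ p ∈ N.primeFactors with ¬ p₀ < p, p ≤ ∏ p ∈ N.primeFactors with ¬ p₀ < p, (p₀ + 1) :=
        prod_le_prod' fun p hp => (not_lt.1 (mem_filter.1 hp).2).trans p₀.le_succ
    _ ≤ (p₀ + 1) ^ #N.primeFactors := by
        rw [prod_const]
        exact Nat.pow_le_pow_right p₀.succ_pos (card_filter_le _ _)

theorem mul_prod_le_pow_mul_prod_sq {K : ℕ} (hK : 0 < K) {R : ℝ} {P : Finset ℕ} {r : ℕ}
    (hP : ∀ p ∈ P, p ≤ K * o p ^ 2) (hr : r ∈ P) (hR : R * r ≤ (o r : ℝ) ^ 2) :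
    R * ∏ p ∈ P, (p : ℝ) ≤ K ^ #P * (∏ p ∈ P, (o p : ℝ)) ^ 2 := by
  rw [← mul_prod_erase P _ hr, ← mul_prod_erase P (fun p => (o p : ℝ)) hr]
  have hothers : ∏ p ∈ P.erase r, (p : ℝ) ≤ K ^ #P * (∏ p ∈ P.erase r, (o p : ℝ)) ^ 2 := by
    calc ∏ p ∈ P.erase r, (p : ℝ) ≤ ∏ p ∈ P.erase r, (K * (o p : ℝ) ^ 2) :=
          prod_le_prod (fun _ _ => by positivity) fun p hp => by
            exact_mod_cast hP p (mem_of_mem_erase hp)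
      _ = K ^ #(P.erase r) * (∏ p ∈ P.erase r, (o p : ℝ)) ^ 2 := by
          rw [prod_mul_distrib, prod_const, prod_pow]
      _ ≤ K ^ #P * (∏ p ∈ P.erase r, (o p : ℝ)) ^ 2 := by
          gcongr
          · exact_mod_cast hK
          · exact erase_subset _ _
  calc R * (r * ∏ p ∈ P.erase r, (p : ℝ)) = R * r * ∏ p ∈ P.erase r, (p : ℝ) := by ring
    _ ≤ (o r : ℝ) ^ 2 * (K ^ #P * (∏ p ∈ P.erase r, (o p : ℝ)) ^ 2) := by gcongr
    _ = K ^ #P * (o r * ∏ p ∈ P.erase r, (o p : ℝ)) ^ 2 := by ring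

/-- The properties, shared by almost all `N` with `4 ^ l ≤ N < 4 ^ (l + 1)`, that force `o N` to
be large: `N` is nearly squarefree with few prime factors `p`, at which `o p` is never much
smaller than `√p`, nearly coprime in pairs, and at least once larger than `√p` by a definite
factor. -/
structure IsTypical (o : ℕ → ℕ) (p₀ l N : ℕ) : Prop where
  pos : 0 < N
  le_of_sq_dvd : ∀ {b}, b ^ 2 ∣ N → b ≤ l
  card_divisors_lt : #N.divisors < l ^ 2
  lt_mul_sq : ∀ {p}, p.Prime → p ∣ N → p < l ^ 3 * o p ^ 2
  gcd_le : ∀ {p q}, p.Prime → q.Prime → p ≠ q → p₀ < p → p₀ < q → p ∣ N → q ∣ N →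
    (o p).gcd (o q) ≤ l ^ 3
  exists_hasLargeOrder : ∃ p, HasLargeOrder o p ∧ 4 ^ (l / 2).sqrt < p ∧ p₀ < p ∧ p ∣ N

theorem IsTypical.l_pos (h : IsTypical o p₀ l N) : 0 < l :=
  Nat.pos_of_ne_zero fun hl => by simpa [hl] using h.card_divisors_lt

theorem IsTypical.prod_order_le (h : IsTypical o p₀ l N) (ho : IsOrderLike o p₀ C) :
    ∏ p ∈ primeFactorsAbove p₀ N, o p ≤ o N * (l ^ 3) ^ #N.primeFactors ^ 2 := by
  have hmem {p : ℕ} := mem_primeFactorsAbove h.pos.ne' (p₀ := p₀) (p := p)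
  have hl := pow_pos h.l_pos 3
  calc ∏ p ∈ primeFactorsAbove p₀ N, o p
      ≤ (primeFactorsAbove p₀ N).lcm o * (l ^ 3) ^ #(primeFactorsAbove p₀ N) ^ 2 := by
        refine prod_le_lcm_mul_pow hl (fun p hp => ho.pos (hmem.1 hp).1.pos)
          fun p hp q hq hne => ?_
        obtain ⟨hp, hpN, hp₀⟩ := hmem.1 hp
        obtain ⟨hq, hqN, hq₀⟩ := hmem.1 hq
        exact h.gcd_le hp hq hne hp₀ hq₀ hpN hqN
    _ ≤ o N * (l ^ 3) ^ #N.primeFactors ^ 2 := by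
        refine Nat.mul_le_mul (Nat.le_of_dvd (ho.pos h.pos) (Finset.lcm_dvd fun p hp => ?_))
          (Nat.pow_le_pow_right hl (Nat.pow_le_pow_left (card_primeFactorsAbove_le p₀ N) 2))
        exact ho.dvd_of_dvd (hmem.1 hp).2.1

theorem IsTypical.exp_mul_prod_le (h : IsTypical o p₀ l N) :
    Real.exp (2 * ((l / 2).sqrt : ℝ) ^ (1 / 1000 : ℝ)) * ∏ p ∈ primeFactorsAbove p₀ N, (p : ℝ) ≤
      (l ^ 3 : ℕ) ^ #N.primeFactors * (∏ p ∈ primeFactorsAbove p₀ N, (o p : ℝ)) ^ 2 := by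
  have hmem {p : ℕ} := mem_primeFactorsAbove h.pos.ne' (p₀ := p₀) (p := p)
  have hl := pow_pos h.l_pos 3
  obtain ⟨r, ⟨hr, hlarge⟩, hlt, hr₀, hrN⟩ := h.exists_hasLargeOrder
  have hlog : (l / 2).sqrt ≤ Nat.log 4 r := Nat.le_log_of_pow_le (by norm_num) hlt.le
  refine (mul_prod_le_pow_mul_prod_sq hl
    (fun p hp => (h.lt_mul_sq (hmem.1 hp).1 (hmem.1 hp).2.1).le) (hmem.2 ⟨hr, hrN, hr₀⟩)
    (hlarge.trans' ?_)).trans ?_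
  · gcongr
  · gcongr
    · exact_mod_cast hl
    · exact filter_subset _ _

theorem IsTypical.exp_mul_le (h : IsTypical o p₀ l N) (ho : IsOrderLike o p₀ C) :
    Real.exp (2 * ((l / 2).sqrt : ℝ) ^ (1 / 1000 : ℝ)) * N ≤
      l ^ 2 * ((p₀ + 1) * l ^ 3 : ℝ) ^ #N.primeFactors * (l ^ 3 : ℝ) ^ (2 * #N.primeFactors ^ 2) *
        (o N : ℝ) ^ 2 := by
  set R := Real.exp (2 * ((l / 2).sqrt : ℝ) ^ (1 / 1000 : ℝ))
  set w := #N.primeFactors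
  set P := primeFactorsAbove p₀ N
  obtain ⟨b, hdvd, hb⟩ := exists_sq_dvd_le_sq_mul_prod_primeFactors h.pos.ne'
  have hprod : (∏ p ∈ P, (o p : ℝ)) ≤ o N * (l ^ 3) ^ w ^ 2 := by
    exact_mod_cast h.prod_order_le ho
  have hgain := h.exp_mul_prod_le
  have hNle : N ≤ l ^ 2 * ((p₀ + 1) ^ w * ∏ p ∈ P, p) :=
    hb.trans (Nat.mul_le_mul (Nat.pow_le_pow_left (h.le_of_sq_dvd hdvd) 2)
      (prod_primeFactors_le p₀ N))
  push_cast at hgain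
  calc R * N ≤ R * (l ^ 2 * ((p₀ + 1) ^ w * ∏ p ∈ P, p) : ℕ) := by gcongr
    _ = l ^ 2 * (p₀ + 1 : ℝ) ^ w * (R * ∏ p ∈ P, (p : ℝ)) := by
        push_cast
        ring
    _ ≤ l ^ 2 * (p₀ + 1 : ℝ) ^ w * ((l ^ 3) ^ w * (∏ p ∈ P, (o p : ℝ)) ^ 2) := by gcongr
    _ ≤ l ^ 2 * (p₀ + 1 : ℝ) ^ w * ((l ^ 3) ^ w * (o N * (l ^ 3) ^ w ^ 2) ^ 2) := by gcongr
    _ = l ^ 2 * ((p₀ + 1) * l ^ 3 : ℝ) ^ w * (l ^ 3 : ℝ) ^ (2 * w ^ 2) * (o N : ℝ) ^ 2 := by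
        rw [mul_pow (p₀ + 1 : ℝ)]
        ring

theorem log_four_le_two : Real.log 4 ≤ 2 := by
  rw [show (4 : ℝ) = 2 ^ 2 by norm_num, Real.log_pow]
  push_cast
  linarith [Real.log_two_lt_d9]

theorem log_rpow_le (hl : 3 ≤ l) (hN : N < 4 ^ (l + 1)) :
    Real.log N ^ (1 / 16000 : ℝ) ≤ (l : ℝ) ^ (1 / 8000 : ℝ) := by
  have hlR : (3 : ℝ) ≤ l := by exact_mod_cast hl
  have hlog : Real.log N ≤ (l : ℝ) ^ 2 := by
    rcases N.eq_zero_or_pos with rfl | hpos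
    · simp
    have hle := log_le_log_four_mul_of_le_pow hpos hN.le
    push_cast at hle
    nlinarith [log_four_le_two]
  calc Real.log N ^ (1 / 16000 : ℝ) ≤ ((l : ℝ) ^ 2) ^ (1 / 16000 : ℝ) :=
        Real.rpow_le_rpow (Real.log_natCast_nonneg N) hlog (by norm_num)
    _ = (l : ℝ) ^ (1 / 8000 : ℝ) := by
        rw [← Real.rpow_natCast_mul l.cast_nonneg]
        norm_num

theorem le_sqrt_half_pow_four (hl : 72 ≤ l) : l ≤ (l / 2).sqrt ^ 4 := by
  have hsix : 6 ≤ (l / 2).sqrt := Nat.le_sqrt.2 (by lia)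
  have hlt : l / 2 < ((l / 2).sqrt + 1) ^ 2 := Nat.lt_succ_sqrt' _
  have : l < 2 * ((l / 2).sqrt + 1) ^ 2 := by lia
  nlinarith [Nat.mul_le_mul hsix hsix,
    Nat.mul_le_mul (Nat.mul_le_mul hsix hsix) (Nat.le_refl ((l / 2).sqrt * (l / 2).sqrt))]

theorem rpow_sq_le_sqrt_half_rpow (hl : 72 ≤ l) :
    ((l : ℝ) ^ (1 / 8000 : ℝ)) ^ 2 ≤ ((l / 2).sqrt : ℝ) ^ (1 / 1000 : ℝ) := by
  have hfour : (l : ℝ) ≤ ((l / 2).sqrt : ℝ) ^ 4 := by exact_mod_cast le_sqrt_half_pow_four hl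
  calc ((l : ℝ) ^ (1 / 8000 : ℝ)) ^ 2 = (l : ℝ) ^ (1 / 4000 : ℝ) := by
        rw [← Real.rpow_mul_natCast l.cast_nonneg]
        norm_num
    _ ≤ (((l / 2).sqrt : ℝ) ^ 4) ^ (1 / 4000 : ℝ) :=
        Real.rpow_le_rpow l.cast_nonneg hfour (by norm_num)
    _ = ((l / 2).sqrt : ℝ) ^ (1 / 1000 : ℝ) := by
        rw [← Real.rpow_natCast_mul (Nat.cast_nonneg _)]
        norm_num

theorem polylog_le_exp_log_cube {w : ℕ} (hl : 3 ≤ l) (hp₀ : p₀ < l) (hw : 2 ^ w ≤ l ^ 2) :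
    l ^ 2 * ((p₀ + 1) * l ^ 3 : ℝ) ^ w * (l ^ 3 : ℝ) ^ (2 * w ^ 2) ≤
      Real.exp (68 * Real.log l ^ 3) := by
  have hlR : (3 : ℝ) ≤ l := by exact_mod_cast hl
  have hlog : 1 ≤ Real.log l := by
    rw [Real.le_log_iff_exp_le (by linarith)]
    linarith [Real.exp_one_lt_d9]
  have hp₀R : (p₀ + 1 : ℝ) ≤ l := by exact_mod_cast hp₀
  have hwlog : (w : ℝ) ≤ 3 * Real.log l := by
    have h := Real.log_le_log (by positivity) (by exact_mod_cast hw : (2 : ℝ) ^ w ≤ (l : ℝ) ^ 2)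
    rw [Real.log_pow, Real.log_pow] at h
    push_cast at h
    nlinarith [Real.log_two_gt_d9, w.cast_nonneg (α := ℝ)]
  calc l ^ 2 * ((p₀ + 1) * l ^ 3 : ℝ) ^ w * (l ^ 3 : ℝ) ^ (2 * w ^ 2)
      ≤ l ^ 2 * (l * l ^ 3 : ℝ) ^ w * (l ^ 3 : ℝ) ^ (2 * w ^ 2) := by gcongr
    _ = (l : ℝ) ^ (2 + 4 * w + 6 * w ^ 2) := by ring
    _ = Real.exp (Real.log l * (2 + 4 * w + 6 * w ^ 2)) := by
        rw [← Real.rpow_natCast, Real.rpow_def_of_pos (by linarith)]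
        push_cast
        rfl
    _ ≤ Real.exp (Real.log l * (2 * Real.log l ^ 2 + 4 * (3 * Real.log l * Real.log l) +
          6 * (3 * Real.log l) ^ 2)) := by
        gcongr
        · nlinarith
        · nlinarith
    _ = Real.exp (68 * Real.log l ^ 3) := by ring_nf

theorem eventually_log_cube_add_le :
    ∀ᶠ l : ℕ in atTop, 68 * Real.log l ^ 3 + 2 * (l : ℝ) ^ (1 / 8000 : ℝ) ≤
      2 * ((l : ℝ) ^ (1 / 8000 : ℝ)) ^ 2 := by
  have hlittle := (isLittleO_log_rpow_rpow_atTop 3 (show (0 : ℝ) < 1 / 8000 by norm_num)).bound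
    (show (0 : ℝ) < 1 / 17 by norm_num)
  filter_upwards [tendsto_natCast_atTop_atTop.eventually hlittle,
    (tendsto_natCast_rpow_atTop (a := 1 / 8000) (by norm_num)).eventually_ge_atTop 3] with l hl hu
  rw [Real.norm_of_nonneg (by positivity), Real.norm_of_nonneg (by positivity),
    show (3 : ℝ) = (3 : ℕ) by norm_num, Real.rpow_natCast] at hl
  nlinarith

theorem IsOrderLike.eventually_le_of_isTypical (ho : IsOrderLike o p₀ C) :
    ∀ᶠ l in atTop, ∀ N < 4 ^ (l + 1), IsTypical o p₀ l N →
      Real.sqrt N * Real.exp (Real.log N ^ (1 / 16000 : ℝ)) ≤ o N := by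
  filter_upwards [eventually_log_cube_add_le, eventually_ge_atTop 72, eventually_gt_atTop p₀]
    with l hcube hl hp₀ N hN h
  set R := Real.exp (2 * ((l / 2).sqrt : ℝ) ^ (1 / 1000 : ℝ)) with hR
  set F := l ^ 2 * ((p₀ + 1) * l ^ 3 : ℝ) ^ #N.primeFactors *
    (l ^ 3 : ℝ) ^ (2 * #N.primeFactors ^ 2)
  have hlog := log_rpow_le (by lia) hN
  have hloss : F * Real.exp (2 * Real.log N ^ (1 / 16000 : ℝ)) ≤ R := by
    have hpoly := polylog_le_exp_log_cube (by lia) hp₀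
      ((two_pow_card_primeFactors_le h.pos.ne').trans h.card_divisors_lt.le)
    calc F * Real.exp (2 * Real.log N ^ (1 / 16000 : ℝ))
        ≤ Real.exp (68 * Real.log l ^ 3) * Real.exp (2 * (l : ℝ) ^ (1 / 8000 : ℝ)) := by gcongr
      _ ≤ R := by
          rw [← Real.exp_add, hR]
          gcongr
          linarith [rpow_sq_le_sqrt_half_rpow hl]
  have hFpos : 0 < F := by
    have := h.l_pos
    positivity
  have hsq : (Real.sqrt N * Real.exp (Real.log N ^ (1 / 16000 : ℝ))) ^ 2 ≤ (o N : ℝ) ^ 2 := by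
    rw [mul_pow, Real.sq_sqrt N.cast_nonneg, ← Real.exp_nat_mul]
    refine le_of_mul_le_mul_left ?_ hFpos
    calc F * (N * Real.exp ((2 : ℕ) * Real.log N ^ (1 / 16000 : ℝ)))
        = F * Real.exp (2 * Real.log N ^ (1 / 16000 : ℝ)) * N := by
          push_cast
          ring
      _ ≤ R * N := by gcongr
      _ ≤ F * (o N : ℝ) ^ 2 := h.exp_mul_le ho
  exact le_of_sq_le_sq hsq (Nat.cast_nonneg _)

end TypicalIntegers

section AlmostAll

open Filter

variable {o : ℕ → ℕ} {p₀ C l N : ℕ}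

open scoped Classical in
/-- The primes whose presence among the divisors of `N` supplies the gain over `√N`, on a range
wide enough that almost all `N` near `4 ^ l` have one. -/
noncomputable def gainPrimes (o : ℕ → ℕ) (l : ℕ) : Finset ℕ :=
  {p ∈ Ioc (4 ^ (l / 2).sqrt) (4 ^ (l / 2)) | HasLargeOrder o p}

theorem mem_gainPrimes {p : ℕ} :
    p ∈ gainPrimes o l ↔ (4 ^ (l / 2).sqrt < p ∧ p ≤ 4 ^ (l / 2)) ∧ HasLargeOrder o p := by
  simp [gainPrimes]

open scoped Classical in
theorem IsOrderLike.eventually_sum_gainPrimes_ge (ho : IsOrderLike o p₀ C) :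
    ∀ᶠ l in atTop, Real.log (l / 2 : ℕ) / 32 ≤ ∑ p ∈ gainPrimes o l, (1 / p : ℝ) := by
  obtain ⟨j₀, hj₀⟩ := eventually_atTop.1 ho.eventually_card_hasLargeOrder_ge
  filter_upwards [eventually_ge_atTop (2 * (j₀ ^ 2 + 1))] with l hl
  have hsqrt : j₀ ≤ (l / 2).sqrt := Nat.le_sqrt'.2 (by lia)
  have hsum := log_mul_le_sum_one_div_sqrt (G := HasLargeOrder o) (c := 1 / 4) (J := l / 2)
    (by norm_num) (fun j hj => hj₀ j (hsqrt.trans hj)) (by lia)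
  simp only [gainPrimes]
  linarith

theorem exceptional_of_not_isTypical (hN : 0 < N) (hp₀ : p₀ ≤ (l / 2).sqrt)
    (h : ¬ IsTypical o p₀ l N) :
    (∃ b, l < b ∧ b ^ 2 ∣ N) ∨ l ^ 2 ≤ #N.divisors ∨
      (∃ p, p.Prime ∧ p ∣ N ∧ l ^ 3 * o p ^ 2 ≤ p) ∨
      (∃ p q, p.Prime ∧ q.Prime ∧ p ≠ q ∧ p₀ < p ∧ p₀ < q ∧ p ∣ N ∧ q ∣ N ∧
        l ^ 3 < (o p).gcd (o q)) ∨
      ∀ p ∈ gainPrimes o l, ¬ p ∣ N := by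
  contrapose! h
  obtain ⟨hsq, hdivisors, hsmall, hgcd, p, hp, hpN⟩ := h
  obtain ⟨⟨hlt, -⟩, hlarge⟩ := mem_gainPrimes.1 hp
  exact {
    pos := hN
    le_of_sq_dvd := fun hb => not_lt.1 fun hlt => hsq _ hlt hb
    card_divisors_lt := hdivisors
    lt_mul_sq := hsmall _
    gcd_le := hgcd _ _
    exists_hasLargeOrder :=
      ⟨p, hlarge, hlt, hp₀.trans_lt ((Nat.lt_pow_self (by norm_num)).trans hlt), hpN⟩ }

theorem one_add_log_le {x : ℕ} (hl : 1 ≤ l) (hx : x < 4 ^ (l + 1)) :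
    1 + Real.log x ≤ 5 * l := by
  have hlR : (1 : ℝ) ≤ l := by exact_mod_cast hl
  rcases x.eq_zero_or_pos with rfl | hpos
  · norm_num
    linarith
  have hle := log_le_log_four_mul_of_le_pow hpos hx.le
  push_cast at hle
  nlinarith [log_four_le_two]

open scoped Classical in
theorem card_not_isTypical_le_add (hp₀ : p₀ ≤ (l / 2).sqrt) (x : ℕ) :
    #{N ∈ Ioc 0 x | ¬ IsTypical o p₀ l N} ≤
      #{N ∈ Ioc 0 x | ∃ b, l < b ∧ b ^ 2 ∣ N} + (#{N ∈ Ioc 0 x | l ^ 2 ≤ #N.divisors} +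
        (#{N ∈ Ioc 0 x | ∃ p, p.Prime ∧ p ∣ N ∧ l ^ 3 * o p ^ 2 ≤ p} +
          (#{N ∈ Ioc 0 x | ∃ p q, p.Prime ∧ q.Prime ∧ p ≠ q ∧ p₀ < p ∧ p₀ < q ∧ p ∣ N ∧ q ∣ N ∧
              l ^ 3 < (o p).gcd (o q)} +
            #{N ∈ Ioc 0 x | ∀ p ∈ gainPrimes o l, ¬ p ∣ N}))) := by
  refine le_trans (card_le_card fun N hN => ?_) ((card_union_le _ _).trans (Nat.add_le_add_left
    ((card_union_le _ _).trans (Nat.add_le_add_left ((card_union_le _ _).trans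
      (Nat.add_le_add_left (card_union_le _ _) _)) _)) _))
  obtain ⟨hmem, hnot⟩ := mem_filter.1 hN
  simpa only [mem_union, mem_filter, hmem, true_and] using
    exceptional_of_not_isTypical (mem_Ioc.1 hmem).1 hp₀ hnot

open scoped Classical in
theorem IsOrderLike.eventually_card_not_isTypical_le (ho : IsOrderLike o p₀ C) :
    ∀ᶠ l in atTop, ∀ x, 4 ^ l ≤ x → x < 4 ^ (l + 1) →
      (#{N ∈ Ioc 0 x | ¬ IsTypical o p₀ l N} : ℝ) ≤
        x * ((231 + 8 * C) / l + 96 / Real.log (l / 2 : ℕ)) := by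
  filter_upwards [ho.eventually_sum_gainPrimes_ge, eventually_ge_atTop (2 * (p₀ ^ 2 + 2))]
    with l hgain hl x hx hx'
  have hl1 : 1 ≤ l := by lia
  have hl1R : (1 : ℝ) ≤ l := by exact_mod_cast hl1
  have hlog := one_add_log_le hl1 hx'
  have hlogl : 0 < Real.log (l / 2 : ℕ) := Real.log_pos (by exact_mod_cast (by lia : 1 < l / 2))
  have hsquares := card_exists_sq_dvd_le x hl1
  have hdivisors := card_le_card_divisors_le x (pow_pos hl1 2)
  have hsmall := ho.card_exists_small_order_le (pow_pos hl1 3) hx'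
  have hgcd := ho.card_exists_gcd_lt_le x (pow_pos hl1 3)
  have hnone := card_forall_not_dvd_le (fun p hp => ⟨(mem_gainPrimes.1 hp).2.1,
      (mem_gainPrimes.1 hp).1.2.trans ((Nat.pow_le_pow_right (by norm_num) (by lia)).trans hx)⟩)
    ((by positivity : (0 : ℝ) < Real.log (l / 2 : ℕ) / 32).trans_le hgain)
  have htotal := card_not_isTypical_le_add (o := o) (Nat.le_sqrt'.2 (by lia : p₀ ^ 2 ≤ l / 2)) x
  rw [← Nat.cast_le (α := ℝ)] at htotal
  push_cast at htotal hdivisors hsmall hgcd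
  calc (#{N ∈ Ioc 0 x | ¬ IsTypical o p₀ l N} : ℝ)
      ≤ x / l + (x * ((1 + Real.log x) / l ^ 2) + (x * ((l + 1) * (4 * C / l ^ 3)) +
          (x * (9 * (1 + Real.log x) ^ 2 / l ^ 3) +
            x * (3 / ∑ p ∈ gainPrimes o l, (1 / p : ℝ))))) := by linarith
    _ ≤ x / l + (x * (5 * l / l ^ 2) + (x * (2 * l ^ 2 * (4 * C / l ^ 3)) +
          (x * (9 * (5 * l) ^ 2 / l ^ 3) + x * (3 / (Real.log (l / 2 : ℕ) / 32))))) := by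
        gcongr
        nlinarith
    _ = x * ((231 + 8 * C) / l + 96 / Real.log (l / 2 : ℕ)) := by
        field_simp
        ring

end AlmostAll

section Density

open Filter

open scoped Classical in
theorem densityOne_of_card_notMem_le {S : Set ℕ} {ε : ℕ → ℝ} (hε : Tendsto ε atTop (nhds 0))
    (h : ∀ᶠ x in atTop, (#{N ∈ Ioc 0 x | N ∉ S} : ℝ) ≤ x * ε x) : DensityOne S := by
  have hncard (x : ℕ) : (S ∩ Set.Icc 1 x).ncard = #{N ∈ Ioc 0 x | N ∈ S} := by
    rw [← Set.ncard_coe_finset]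
    congr 1
    ext N
    simp only [Set.mem_inter_iff, Set.mem_Icc, coe_filter, Set.mem_ofPred_eq, mem_Ioc]
    tauto
  have hcard (x : ℕ) : (#{N ∈ Ioc 0 x | N ∈ S} : ℝ) + #{N ∈ Ioc 0 x | N ∉ S} = x := by
    exact_mod_cast (card_filter_add_card_filter_not (s := Ioc 0 x) (· ∈ S)).trans (Nat.card_Ioc 0 x)
  refine tendsto_of_tendsto_of_tendsto_of_le_of_le' (by simpa using hε.const_sub 1)
    tendsto_const_nhds ?_ (.of_forall fun x => ?_)
  · filter_upwards [h, eventually_gt_atTop 0] with x hx hpos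
    rw [hncard, le_div_iff₀ (by exact_mod_cast hpos)]
    linarith [hcard x]
  · rw [hncard]
    exact div_le_one_of_le₀ (by linarith [hcard x, Nat.cast_nonneg (α := ℝ) #{N ∈ Ioc 0 x | N ∉ S}])
      x.cast_nonneg

theorem tendsto_log_four : Tendsto (Nat.log 4) atTop atTop :=
  tendsto_atTop.2 fun b => (eventually_ge_atTop (4 ^ b)).mono fun _ hx =>
    Nat.le_log_of_pow_le (by norm_num) hx

theorem IsOrderLike.densityOne {o : ℕ → ℕ} {p₀ C : ℕ} (ho : IsOrderLike o p₀ C) :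
    DensityOne {N | Real.sqrt N * Real.exp (Real.log N ^ (1 / 16000 : ℝ)) ≤ o N} := by
  classical
  have hε : Tendsto (fun l : ℕ => (231 + 8 * C : ℝ) / l + 96 / Real.log (l / 2 : ℕ)) atTop
      (nhds 0) := by
    simpa using (tendsto_const_div_atTop_nhds_zero_nat (231 + 8 * C : ℝ)).add
      ((Real.tendsto_log_atTop.comp (tendsto_natCast_atTop_atTop.comp
        (Nat.tendsto_div_const_atTop two_ne_zero))).const_div_atTop 96)
  refine densityOne_of_card_notMem_le (hε.comp tendsto_log_four) ?_
  filter_upwards [tendsto_log_four.eventually ho.eventually_card_not_isTypical_le,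
    tendsto_log_four.eventually ho.eventually_le_of_isTypical, eventually_gt_atTop 0]
    with x hcard htypical hx
  have hlt : x < 4 ^ (Nat.log 4 x + 1) := Nat.lt_pow_succ_log_self (by norm_num) x
  refine le_trans ?_ (hcard x (Nat.pow_log_le_self 4 hx.ne') hlt)
  refine Nat.cast_le.2 (card_le_card fun N hN => ?_)
  obtain ⟨hmem, hnot⟩ := mem_filter.1 hN
  exact mem_filter.2 ⟨hmem, fun h => hnot (htypical N ((mem_Ioc.1 hmem).2.trans_lt hlt) h)⟩

end Density

end LargeOrder

/-- There exist `δ > 0`, `c > 0` and a density-one set `S` such that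
`ord(A,N) ≥ c N^{1/2} exp((log N)^δ)` for all `N ∈ S`. -/
theorem large_order_for_almost_all
    (A : Matrix (Fin 2) (Fin 2) ℤ) (hA : A.det = 1) (htr : 2 < |A.trace|) :
    ∃ δ : ℝ, 0 < δ ∧ ∃ c : ℝ, 0 < c ∧ ∃ S : Set ℕ, DensityOne S ∧
      ∀ N ∈ S, c * Real.sqrt N * Real.exp (Real.log N ^ δ) ≤ (matOrd A N : ℝ) := by
  obtain ⟨p₀, C, ho⟩ := LargeOrder.exists_isOrderLike_matOrd hA htr
  refine ⟨1 / 16000, by norm_num, 1, one_pos, _, ho.densityOne, fun N hN => ?_⟩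
  rw [one_mul]
  exact hN
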